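/- Let Γ̄ = Γ × Γ* where Γ ≤ Isom X and Γ* ≤ Isom X* are countable subgroups with finite exponential growth relative to (X,d) and to (X*,d*) respectively. For every probability measure π on Γ̄ with finite first moment and non-elementary marginals μ and μ*, for ν_π-almost every ξ̄ ∈ ∂X × ∂X*: liminf_{r→0} log ν_π(B̄(ξ̄,r))/log r ≥ (h(π) − h(μ*))/l(X,μ) + h(μ*)/l(X*,μ*). -/

import Mathlib

open MeasureTheory Filter Topology Metric Set
open scoped ENNReal Classical

noncomputable section

namespace HMDim

/-! ### Gromov products and hyperbolicity -/

/-- The Gromov product `(x|y)_o = (d(x,o)+d(o,y)-d(x,y))/2`. -/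
def gp {X : Type*} [MetricSpace X] (o x y : X) : ℝ :=
  (dist x o + dist o y - dist x y) / 2

/-- `X` is `δ`-hyperbolic. -/
def IsHyperbolicWith (X : Type*) [MetricSpace X] (δ : ℝ) : Prop :=
  ∀ x y z w : X, min (gp w x z) (gp w z y) - δ ≤ gp w x y

/-- `X` is hyperbolic: `δ`-hyperbolic for some `δ ≥ 0`. -/
def IsHyperbolic (X : Type*) [MetricSpace X] : Prop :=
  ∃ δ : ℝ, 0 ≤ δ ∧ IsHyperbolicWith X δ

/-- `X` is `C`-roughly geodesic for some `C ≥ 0`: any two points are joined by a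
`C`-rough geodesic. -/
def IsRoughGeodesicSpace (X : Type*) [MetricSpace X] : Prop :=
  ∃ C : ℝ, 0 ≤ C ∧ ∀ x y : X, ∃ (b : ℝ) (γ : ℝ → X), 0 ≤ b ∧ γ 0 = x ∧ γ b = y ∧
    ∀ s ∈ Set.Icc (0:ℝ) b, ∀ t ∈ Set.Icc (0:ℝ) b, abs (dist (γ s) (γ t) - |s - t|) ≤ C

/-- Bounded growth at some scale: there are `0 < r < R` and `N` such that every ball of
radius `R` is covered by at most `N` balls of radius `r`. -/
def HasBoundedGrowthAtSomeScale (X : Type*) [MetricSpace X] : Prop :=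
  ∃ (r R : ℝ) (N : ℕ), 0 < r ∧ r < R ∧
    ∀ x : X, ∃ s : Finset X, s.card ≤ N ∧ Metric.ball x R ⊆ ⋃ y ∈ s, Metric.ball y r

/-! ### The Gromov boundary -/

/-- A sequence is divergent if it is Cauchy for the Gromov-product quasi-metric, i.e.
`(u n | u m)_o → ∞`. -/
def IsDivergent {X : Type*} [MetricSpace X] (o : X) (u : ℕ → X) : Prop :=
  Tendsto (fun pr : ℕ × ℕ => gp o (u pr.1) (u pr.2)) atTop atTop

/-- The type of divergent sequences. -/
def DivSeq (X : Type*) [MetricSpace X] (o : X) : Type _ := {u : ℕ → X // IsDivergent o u}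

/-- Two divergent sequences are equivalent when `(u n | v m)_o → ∞`. -/
def bndRel {X : Type*} [MetricSpace X] (o : X) (u v : DivSeq X o) : Prop :=
  Tendsto (fun pr : ℕ × ℕ => gp o (u.1 pr.1) (v.1 pr.2)) atTop atTop

/-- The Gromov boundary: equivalence classes of divergent sequences. -/
def Boundary (X : Type*) [MetricSpace X] (o : X) : Type _ := Quot (bndRel o)

/-- The boundary point of a divergent sequence. -/
def mkB {X : Type*} [MetricSpace X] (o : X) (u : DivSeq X o) : Boundary X o :=
  Quot.mk _ u

/-- The extended Gromov product of two boundary points: the infimum over pairs of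
representatives of the liminf of Gromov products. -/
def gpB {X : Type*} [MetricSpace X] (o : X) (ξ η : Boundary X o) : ℝ :=
  sInf {t : ℝ | ∃ u v : DivSeq X o, mkB o u = ξ ∧ mkB o v = η ∧
    t = Filter.liminf (fun pr : ℕ × ℕ => gp o (u.1 pr.1) (v.1 pr.2)) atTop}

/-- The quasi-metric `q(ξ,η) = exp(-(ξ|η)_o)` on the boundary (`0` on the diagonal). -/
def qB {X : Type*} [MetricSpace X] (o : X) (ξ η : Boundary X o) : ℝ :=
  if ξ = η then 0 else Real.exp (-(gpB o ξ η))

/-- The extended Gromov product of an interior point with a boundary point. -/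
def gpXB {X : Type*} [MetricSpace X] (o : X) (x : X) (ξ : Boundary X o) : ℝ :=
  sInf {t : ℝ | ∃ u : DivSeq X o, mkB o u = ξ ∧
    t = Filter.liminf (fun m : ℕ => gp o x (u.1 m)) atTop}

/-- Quasi-metric between an interior point and a boundary point. -/
def qXB {X : Type*} [MetricSpace X] (o : X) (x : X) (ξ : Boundary X o) : ℝ :=
  Real.exp (-(gpXB o x ξ))

/-- The open ball of a quasi-metric. -/
def qball {A : Type*} (q : A → A → ℝ) (ξ : A) (r : ℝ) : Set A := {η | q ξ η < r}

/-- The max quasi-metric `q̄` on the product of two boundaries. -/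
def qbb {X Xs : Type*} [MetricSpace X] [MetricSpace Xs] (o : X) (os : Xs)
    (ξ η : Boundary X o × Boundary Xs os) : ℝ :=
  max (qB o ξ.1 η.1) (qB os ξ.2 η.2)

/-- Boundaries are measurable spaces, with the σ-algebra generated by quasi-metric balls. -/
instance (X : Type*) [MetricSpace X] (o : X) : MeasurableSpace (Boundary X o) :=
  MeasurableSpace.generateFrom {s | ∃ ξ r, s = qball (qB o) ξ r}

/-! ### The boundary action of isometries -/

lemma gp_isometry_le {X : Type*} [MetricSpace X] (o : X) (g : X ≃ᵢ X) (x y : X) :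
    gp o x y - dist o (g o) ≤ gp o (g x) (g y) := by
  have e1 : dist (g x) (g o) = dist x o := g.dist_eq x o
  have e2 : dist (g o) (g y) = dist o y := g.dist_eq o y
  have e3 : dist (g x) (g y) = dist x y := g.dist_eq x y
  have e4 : dist (g o) o = dist o (g o) := dist_comm _ _
  have t1 : dist (g x) (g o) ≤ dist (g x) o + dist o (g o) := dist_triangle _ _ _
  have t2 : dist (g o) (g y) ≤ dist (g o) o + dist o (g y) := dist_triangle _ _ _
  simp only [gp]
  linarith [t1, t2, e1, e2, e3, e4]

lemma isDivergent_comp {X : Type*} [MetricSpace X] (o : X) (g : X ≃ᵢ X) {u : ℕ → X}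
    (h : IsDivergent o u) : IsDivergent o fun n => g (u n) := by
  have h' := tendsto_atTop_add_const_right atTop (-(dist o (g o)))
    (h : Tendsto (fun pr : ℕ × ℕ => gp o (u pr.1) (u pr.2)) atTop atTop)
  refine tendsto_atTop_mono (fun pr => ?_) h'
  have := gp_isometry_le o g (u pr.1) (u pr.2)
  simpa [sub_eq_add_neg] using this

lemma bndRel_comp {X : Type*} [MetricSpace X] (o : X) (g : X ≃ᵢ X) {u v : DivSeq X o}
    (h : bndRel o u v) :
    bndRel o ⟨fun n => g (u.1 n), isDivergent_comp o g u.2⟩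
      ⟨fun n => g (v.1 n), isDivergent_comp o g v.2⟩ := by
  have h' := tendsto_atTop_add_const_right atTop (-(dist o (g o)))
    (h : Tendsto (fun pr : ℕ × ℕ => gp o (u.1 pr.1) (v.1 pr.2)) atTop atTop)
  refine tendsto_atTop_mono (fun pr => ?_) h'
  have := gp_isometry_le o g (u.1 pr.1) (v.1 pr.2)
  simpa [sub_eq_add_neg] using this

/-- The induced action of an isometry on the Gromov boundary. -/
def bAct {X : Type*} [MetricSpace X] (o : X) (g : X ≃ᵢ X) :
    Boundary X o → Boundary X o :=
  Quot.map (fun u : DivSeq X o =>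
      (⟨fun n => g (u.1 n), isDivergent_comp o g u.2⟩ : DivSeq X o))
    (fun _ _ h => bndRel_comp o g h)

/-! ### Random walks on countable groups -/

/-- Convolution of two measures (as `ℝ≥0∞`-valued functions) on a group. -/
def conv {G : Type*} [Group G] (p q : G → ℝ≥0∞) : G → ℝ≥0∞ :=
  fun x => ∑' y : G, p y * q (y⁻¹ * x)

/-- The `n`-fold convolution power `π_n` of `p`. -/
def piN {G : Type*} [Group G] (p : G → ℝ≥0∞) : ℕ → G → ℝ≥0∞
  | 0 => fun x => if x = 1 then 1 else 0
  | n + 1 => conv (piN p n) p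

/-- The Shannon entropy `H(π_n)` of the `n`-th convolution power. -/
def entropySeq {G : Type*} [Group G] (p : G → ℝ≥0∞) (n : ℕ) : ℝ :=
  ∑' x : G, Real.negMulLog ((piN p n x).toReal)

/-- The first moment of `π_n` with respect to a displacement function `f`. -/
def momentSeq {G : Type*} [Group G] (p : G → ℝ≥0∞) (f : G → ℝ) (n : ℕ) : ℝ :=
  ∑' x : G, (piN p n x).toReal * f x

/-- `h` is the asymptotic entropy of the `p`-random walk:
`h = lim (1/n) H(π_n)`. -/
def HasEntropy {G : Type*} [Group G] (p : G → ℝ≥0∞) (h : ℝ) : Prop :=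
  Tendsto (fun n : ℕ => entropySeq p n / n) atTop (nhds h)

/-- `l` is the drift (rate of escape) of the `p`-random walk with respect to the
displacement `f`: `l = lim (1/n) Σ_x f(x) π_n(x)`. -/
def HasDrift {G : Type*} [Group G] (p : G → ℝ≥0∞) (f : G → ℝ) (l : ℝ) : Prop :=
  Tendsto (fun n : ℕ => momentSeq p f n / n) atTop (nhds l)

/-- `p` is a probability distribution. -/
def IsProb {G : Type*} (p : G → ℝ≥0∞) : Prop := ∑' x : G, p x = 1

/-- Finite first moment with respect to a displacement function `f`. -/
def FiniteFirstMoment {G : Type*} (p : G → ℝ≥0∞) (f : G → ℝ) : Prop :=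
  ∑' x : G, p x * ENNReal.ofReal (f x) ≠ ∞

/-- The pushforward of a distribution `p` by a map `f` (e.g. a marginal). -/
def marginalStar {G A : Type*} (p : G → ℝ≥0∞) (f : G → A) : A → ℝ≥0∞ :=
  fun a => ∑' x : G, if f x = a then p x else 0

/-- A subgroup is non-elementary (in the relevant sense) if it contains a free
subgroup of rank 2. -/
def IsNonElementarySubgroup {G : Type*} [Group G] (H : Subgroup G) : Prop :=
  ∃ φ : FreeGroup (Fin 2) →* G, Function.Injective φ ∧ φ.range ≤ H

/-- A measure `p` on a group is non-elementary if the subgroup generated by its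
support contains a free subgroup of rank 2. -/
def IsNonElemMeasure {G : Type*} [Group G] (p : G → ℝ≥0∞) : Prop :=
  IsNonElementarySubgroup (Subgroup.closure {x : G | p x ≠ 0})

/-- A group containing a free subgroup of rank 2 (a non-elementary group). -/
def HasFreeSubgroup (G : Type*) [Group G] : Prop :=
  ∃ φ : FreeGroup (Fin 2) →* G, Function.Injective φ

/-! ### Path space -/

/-- The position `w_n = x_1 ⋯ x_n` of the random walk with increments `ω`. -/
def walk {G : Type*} [Group G] (ω : ℕ → G) (n : ℕ) : G := ((List.range n).map ω).prod

/-- The cylinder set `[w̄_0, …, w̄_n]` of trajectories whose positions agree with those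
of `ω` up to time `n`. -/
def cyl {G : Type*} [Group G] (ω : ℕ → G) (n : ℕ) : Set (ℕ → G) :=
  {ω' | ∀ i ≤ n, walk ω' i = walk ω i}

/-- `P` is the distribution of the increments of the `p`-random walk: the product
measure `p^{⊗ℕ}` on the path space. -/
def IsRWMeasure {G : Type*} [Group G] [MeasurableSpace G] (p : G → ℝ≥0∞)
    (P : Measure (ℕ → G)) : Prop :=
  IsProbabilityMeasure P ∧
    ∀ (n : ℕ) (g : ℕ → G), P {ω | ∀ i < n, ω i = g i} = ∏ i ∈ Finset.range n, p (g i)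

/-- `ν` is the harmonic measure on the boundary of `X` for the random walk with path
measure `P` and orbit map `z`: the image of `P` under the a.s.-defined boundary map. -/
def IsHarmonic {Ω X : Type*} [MeasurableSpace Ω] [MetricSpace X] (o : X)
    (P : Measure Ω) (z : Ω → ℕ → X) (ν : Measure (Boundary X o)) : Prop :=
  ∃ bnd : Ω → Boundary X o, Measurable bnd ∧ ν = P.map bnd ∧
    ∀ᵐ ω ∂P, ∃ h : IsDivergent o (z ω), bnd ω = mkB o ⟨z ω, h⟩

/-- `ν` is the harmonic measure on the product of the boundaries of `X` and `Xs` for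
the random walk with path measure `P` and orbit maps `z`, `zs`. -/
def IsJointHarmonic {Ω X Xs : Type*} [MeasurableSpace Ω] [MetricSpace X] [MetricSpace Xs]
    (o : X) (os : Xs) (P : Measure Ω) (z : Ω → ℕ → X) (zs : Ω → ℕ → Xs)
    (ν : Measure (Boundary X o × Boundary Xs os)) : Prop :=
  ∃ bnd : Ω → Boundary X o × Boundary Xs os, Measurable bnd ∧ ν = P.map bnd ∧
    ∀ᵐ ω ∂P, ∃ (h1 : IsDivergent o (z ω)) (h2 : IsDivergent os (zs ω)),
      bnd ω = (mkB o ⟨z ω, h1⟩, mkB os ⟨zs ω, h2⟩)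

/-- `cond` is a disintegration (system of conditional measures) of `P` with respect to
the map `f`, over the pushforward `νB = f_* P`. -/
def IsDisintegration {A B : Type*} [MeasurableSpace A] [MeasurableSpace B]
    (P : Measure A) (f : A → B) (νB : Measure B) (cond : B → Measure A) : Prop :=
  νB = P.map f ∧ (∀ᵐ b ∂νB, IsProbabilityMeasure (cond b)) ∧
    (∀ᵐ b ∂νB, cond b (f ⁻¹' {b}) = 1) ∧
    ∀ s : Set A, MeasurableSet s → P s = ∫⁻ b, cond b s ∂νB

/-! ### Hausdorff dimension for quasi-metrics -/

/-- Diameter of a set for a quasi-metric. -/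
def qdiam {A : Type*} (q : A → A → ℝ) (E : Set A) : ℝ≥0∞ :=
  ⨆ x ∈ E, ⨆ y ∈ E, ENNReal.ofReal (q x y)

/-- Hausdorff pre-measure (content) at scale `Δ`. -/
def qHContent {A : Type*} (q : A → A → ℝ) (α Δ : ℝ) (E : Set A) : ℝ≥0∞ :=
  ⨅ (c : ℕ → Set A) (_ : E ⊆ ⋃ i, c i) (_ : ∀ i, qdiam q (c i) ≤ ENNReal.ofReal Δ),
    ∑' i, qdiam q (c i) ^ α

/-- The `α`-dimensional Hausdorff measure of a set for a quasi-metric. -/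
def qHMeasure {A : Type*} (q : A → A → ℝ) (α : ℝ) (E : Set A) : ℝ≥0∞ :=
  ⨆ (Δ : ℝ) (_ : 0 < Δ), qHContent q α Δ E

/-- The Hausdorff dimension of a set for a quasi-metric. -/
def qdimSet {A : Type*} (q : A → A → ℝ) (E : Set A) : ℝ :=
  sSup {α : ℝ | 0 ≤ α ∧ 0 < qHMeasure q α E}

/-- The upper Hausdorff dimension of a measure. -/
def qdimUpper {A : Type*} [MeasurableSpace A] (q : A → A → ℝ) (ν : Measure A) : ℝ :=
  sInf {d : ℝ | ∃ E : Set A, MeasurableSet E ∧ ν Eᶜ = 0 ∧ d = qdimSet q E}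

/-- The lower Hausdorff dimension of a measure. -/
def qdimLower {A : Type*} [MeasurableSpace A] (q : A → A → ℝ) (ν : Measure A) : ℝ :=
  sInf {d : ℝ | ∃ E : Set A, MeasurableSet E ∧ 0 < ν E ∧ d = qdimSet q E}

/-- The Hausdorff dimension of `ν` exists and equals `D`. -/
def HasDim {A : Type*} [MeasurableSpace A] (q : A → A → ℝ) (ν : Measure A) (D : ℝ) : Prop :=
  qdimUpper q ν = D ∧ qdimLower q ν = D

/-- `ν` is exact dimensional with dimension `D` for the quasi-metric `q`:
`lim_{r→0} log ν(B(ξ,r))/log r = D` for `ν`-a.e. `ξ`. -/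
def ExactDim {A : Type*} [MeasurableSpace A] (q : A → A → ℝ) (ν : Measure A) (D : ℝ) : Prop :=
  ∀ᵐ ξ ∂ν, Tendsto (fun r : ℝ => Real.log (ν (qball q ξ r)).toReal / Real.log r)
    (nhdsWithin 0 (Set.Ioi 0)) (nhds D)

/-! ### Differential entropy -/

/-- The differential entropy
`h(∂X*, μ*) = Σ_g μ*(g) ∫ log (d gν/dν) d(gν)` of a measure on the isometry group with
respect to a boundary measure. -/
def diffEntropy {Xs : Type*} [MetricSpace Xs] (os : Xs) (pstar : (Xs ≃ᵢ Xs) → ℝ≥0∞)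
    (νs : Measure (Boundary Xs os)) : ℝ :=
  ∑' g : (Xs ≃ᵢ Xs), (pstar g).toReal *
    ∫ η, Real.log ((Measure.rnDeriv (νs.map (bAct os g)) νs η).toReal)
      ∂(νs.map (bAct os g))

/-! ### Word metrics and hyperbolic groups -/

/-- The word length of `g` with respect to a (symmetrized) generating set `S`. -/
def wordLength {G : Type*} [Group G] (S : Set G) (g : G) : ℕ :=
  sInf {n : ℕ | ∃ f : Fin n → G, (∀ i, f i ∈ S ∨ (f i)⁻¹ ∈ S) ∧ g = (List.ofFn f).prod}

/-- The metric of `G` is quasi-isometric to a word metric of a finite generating set. -/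
def IsQIToWordMetric (G : Type*) [Group G] [MetricSpace G] : Prop :=
  ∃ S : Finset G, Subgroup.closure (S : Set G) = ⊤ ∧
    ∃ Λ c : ℝ, 1 ≤ Λ ∧ 0 ≤ c ∧ ∀ g : G,
      (wordLength (S : Set G) g : ℝ) / Λ - c ≤ dist (1 : G) g ∧
      dist (1 : G) g ≤ Λ * (wordLength (S : Set G) g) + c

/-- The metric of `G` is left invariant. -/
def LeftInvariantMetric (G : Type*) [Group G] [MetricSpace G] : Prop :=
  ∀ g x y : G, dist (g * x) (g * y) = dist x y

/-- `G`, with its metric, is a hyperbolic group: the metric is left invariant,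
hyperbolic and quasi-isometric to a word metric. -/
def IsHypGroupMetric (G : Type*) [Group G] [MetricSpace G] : Prop :=
  LeftInvariantMetric G ∧ IsHyperbolic G ∧ IsQIToWordMetric G

/-! ### Groups of isometries of a product -/

/-- First component of an element of a subgroup of `Isom X × Isom X*`. -/
def proj1 {X Xs : Type*} [MetricSpace X] [MetricSpace Xs]
    {Γb : Subgroup ((X ≃ᵢ X) × (Xs ≃ᵢ Xs))} (γ : Γb) : X ≃ᵢ X :=
  (γ : (X ≃ᵢ X) × (Xs ≃ᵢ Xs)).1

/-- Second component of an element of a subgroup of `Isom X × Isom X*`. -/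
def proj2 {X Xs : Type*} [MetricSpace X] [MetricSpace Xs]
    {Γb : Subgroup ((X ≃ᵢ X) × (Xs ≃ᵢ Xs))} (γ : Γb) : Xs ≃ᵢ Xs :=
  (γ : (X ≃ᵢ X) × (Xs ≃ᵢ Xs)).2

/-- Displacement `d̄(ō, γ·ō)` of the base point `ō = (o,o*)` (the metric of the product
is the max metric). -/
def disp {X Xs : Type*} [MetricSpace X] [MetricSpace Xs]
    {Γb : Subgroup ((X ≃ᵢ X) × (Xs ≃ᵢ Xs))} (o : X) (os : Xs) (γ : Γb) : ℝ :=
  dist (o, os) (proj1 γ o, proj2 γ os)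

/-- Finite exponential growth relative to a displacement function `f`:
`#{x : f(x) < r} ≤ c e^{c r}`. -/
def FinExpGrowth {G : Type*} (f : G → ℝ) : Prop :=
  ∃ c : ℝ, 0 < c ∧ ∀ r : ℝ, 0 < r →
    {x : G | f x < r}.Finite ∧ ({x : G | f x < r}.ncard : ℝ) ≤ c * Real.exp (c * r)

/-! ### The events of Lemmas `A` and `E_n(η)` -/

/-- The event `A_{ε,n} = ∩_{t ≥ n} {z̄_∞ exists and q̄(z̄_t, z̄_∞) ≤ e^{-(l*-ε)n}}`. -/
def Aev {X Xs : Type*} [MetricSpace X] [MetricSpace Xs]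
    (Γb : Subgroup ((X ≃ᵢ X) × (Xs ≃ᵢ Xs))) (o : X) (os : Xs) (ε lst : ℝ) (n : ℕ) :
    Set (ℕ → Γb) :=
  {ω | ∃ (h1 : IsDivergent o (fun t => proj1 (walk ω t) o))
        (h2 : IsDivergent os (fun t => proj2 (walk ω t) os)),
      ∀ t, n ≤ t →
        max (qXB o (proj1 (walk ω t) o) (mkB o ⟨_, h1⟩))
            (qXB os (proj2 (walk ω t) os) (mkB os ⟨_, h2⟩))
          ≤ Real.exp (-((lst - ε) * n))}

/-- The event
`E_{ε,n}(η) = {P^η([w̄_0,…,w̄_n] ∩ A_{ε,n}) ≤ e^{n(h*+ε)} P([w̄_0,…,w̄_n] ∩ A_{ε,n})}`. -/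
def Eev {X Xs : Type*} [MetricSpace X] [MetricSpace Xs]
    (Γb : Subgroup ((X ≃ᵢ X) × (Xs ≃ᵢ Xs))) [MeasurableSpace Γb] (o : X) (os : Xs)
    (P : Measure (ℕ → Γb)) (condP : Boundary Xs os → Measure (ℕ → Γb))
    (hst ε lst : ℝ) (η : Boundary Xs os) (n : ℕ) : Set (ℕ → Γb) :=
  {ω | condP η (cyl ω n ∩ Aev Γb o os ε lst n) ≤
        ENNReal.ofReal (Real.exp (n * (hst + ε))) * P (cyl ω n ∩ Aev Γb o os ε lst n)}

/-! ### Special measures -/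

/-- The measure `π^ρ = ρ μ×μ + (1-ρ) μ_diag` on `Γ × Γ`. -/
def pRho {Γ : Type*} (p : Γ → ℝ≥0∞) (ρ : ℝ) : Γ × Γ → ℝ≥0∞ :=
  fun g => ENNReal.ofReal ρ * (p g.1 * p g.2) +
    ENNReal.ofReal (1 - ρ) * (if g.1 = g.2 then p g.1 else 0)

/-- The uniform distribution on the symmetrized free basis of `F_{m+1}`. -/
def symFreeBasisUniform (m : ℕ) : FreeGroup (Fin (m + 1)) → ℝ≥0∞ :=
  fun g => if ∃ i : Fin (m + 1), g = FreeGroup.of i ∨ g = (FreeGroup.of i)⁻¹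
    then ENNReal.ofReal (1 / (2 * (m + 1))) else 0

/-- The homomorphism `F_{m+1} → F_m` sending `x_i ↦ y_i` for `i ≤ m` and `x_{m+1} ↦ 1`. -/
def projHom (m : ℕ) : FreeGroup (Fin (m + 1)) →* FreeGroup (Fin m) :=
  FreeGroup.lift (fun i => if h : (i : ℕ) < m then FreeGroup.of (⟨i, h⟩ : Fin m) else 1)

/-! ### Part A: path space -/

/-- The shift by `n` on the path space. -/
def sh {G : Type*} (n : ℕ) (ω : ℕ → G) : ℕ → G := fun i => ω (n + i)

/-- Increment cylinders. -/
def cy {G : Type*} (n : ℕ) (g : ℕ → G) : Set (ℕ → G) := {ω | ∀ i < n, ω i = g i}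

lemma sh_sh {G : Type*} (n m : ℕ) (ω : ℕ → G) : sh n (sh m ω) = sh (m + n) ω := by
  funext i; simp [sh, add_assoc]

lemma sh_zero {G : Type*} (ω : ℕ → G) : sh 0 ω = ω := by
  funext i; simp [sh]

lemma walk_zero {G : Type*} [Group G] (ω : ℕ → G) : walk ω 0 = 1 := by simp [walk]

lemma walk_succ {G : Type*} [Group G] (ω : ℕ → G) (n : ℕ) :
    walk ω (n + 1) = walk ω n * ω n := by
  simp [walk, List.range_succ]

lemma walk_add {G : Type*} [Group G] (ω : ℕ → G) (n m : ℕ) :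
    walk ω (n + m) = walk ω n * walk (sh n ω) m := by
  induction m with
  | zero => simp [walk_zero]
  | succ k ih => rw [← add_assoc, walk_succ, ih, walk_succ, mul_assoc]; rfl

lemma walk_congr {G : Type*} [Group G] {ω ω' : ℕ → G} {n : ℕ} (h : ∀ i < n, ω i = ω' i) :
    walk ω n = walk ω' n := by
  induction n with
  | zero => simp [walk_zero]
  | succ k ih =>
    rw [walk_succ, walk_succ, ih (fun i hi => h i (by omega)), h k (by omega)]

lemma walk_map {G H : Type*} [Group G] [Group H] (φ : G →* H) (ω : ℕ → G) (n : ℕ) :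
    walk (fun i => φ (ω i)) n = φ (walk ω n) := by
  induction n with
  | zero => simp [walk_zero]
  | succ k ih => rw [walk_succ, walk_succ, ih, map_mul]

lemma measurable_sh {G : Type*} [MeasurableSpace G] (n : ℕ) :
    Measurable (sh n : (ℕ → G) → ℕ → G) :=
  measurable_pi_lambda _ fun i => measurable_pi_apply (n + i)

lemma measurable_walk {G : Type*} [Group G] [Countable G] [MeasurableSpace G]
    [DiscreteMeasurableSpace G] (n : ℕ) : Measurable fun ω : ℕ → G => walk ω n := by
  induction n with
  | zero => simp only [walk_zero]; exact measurable_const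
  | succ k ih =>
    have : (fun ω : ℕ → G => walk ω (k + 1)) =
        (fun q : G × G => q.1 * q.2) ∘ fun ω => (walk ω k, ω k) := by
      funext ω; simp [walk_succ]
    rw [this]
    exact (Measurable.of_discrete).comp (ih.prodMk (measurable_pi_apply k))

lemma measurableSet_cy {G : Type*} [MeasurableSpace G]
    [DiscreteMeasurableSpace G] (n : ℕ) (g : ℕ → G) : MeasurableSet (cy n g) := by
  have : cy n g = ⋂ i, ⋂ (_ : i < n), (fun ω : ℕ → G => ω i) ⁻¹' {g i} := by
    ext ω; simp [cy]
  rw [this]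
  exact MeasurableSet.iInter fun i => MeasurableSet.iInter fun _ =>
    measurable_pi_apply i (MeasurableSet.of_discrete)

/-- Extension of a finite word. -/
def extW {G : Type*} [Group G] (n : ℕ) (u : Fin n → G) : ℕ → G :=
  fun i => if h : i < n then u ⟨i, h⟩ else 1

lemma mem_cy_extW {G : Type*} [Group G] {n : ℕ} {u : Fin n → G} {ω : ℕ → G} :
    ω ∈ cy n (extW n u) ↔ (fun i : Fin n => ω i) = u := by
  constructor
  · intro h; funext i; have := h i i.2; simpa [extW] using this
  · rintro rfl i hi; simp [extW, hi]

lemma pi_eq_generateFrom_cy {G : Type*} [Group G] [Countable G] [MeasurableSpace G]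
    [DiscreteMeasurableSpace G] :
    (MeasurableSpace.pi : MeasurableSpace (ℕ → G)) =
      MeasurableSpace.generateFrom {s | ∃ n g, s = cy n g} := by
  apply le_antisymm
  · refine iSup_le fun i => ?_
    rintro _ ⟨s, -, rfl⟩
    have : (fun ω : ℕ → G => ω i) ⁻¹' s =
        ⋃ u : {u : Fin (i + 1) → G // u (Fin.last i) ∈ s}, cy (i + 1) (extW (i + 1) u.1) := by
      ext ω
      simp only [mem_preimage, mem_iUnion, mem_cy_extW]
      constructor
      · intro h; exact ⟨⟨fun j => ω j, by simpa using h⟩, rfl⟩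
      · rintro ⟨⟨u, hu⟩, rfl⟩; simpa using hu
    rw [this]
    exact MeasurableSet.iUnion fun u => MeasurableSpace.measurableSet_generateFrom ⟨_, _, rfl⟩
  · apply MeasurableSpace.generateFrom_le
    rintro _ ⟨n, g, rfl⟩
    exact measurableSet_cy n g

lemma ext_cy {G : Type*} [Group G] [Countable G] [MeasurableSpace G]
    [DiscreteMeasurableSpace G] {P Q : Measure (ℕ → G)} [IsFiniteMeasure P]
    (h : ∀ n g, P (cy n g) = Q (cy n g)) : P = Q := by
  refine ext_of_generate_finite _ pi_eq_generateFrom_cy ?_ ?_ ?_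
  · rintro _ ⟨n, g, rfl⟩ _ ⟨m, k, rfl⟩ ⟨ω₀, h1, h2⟩
    refine ⟨max n m, ω₀, ?_⟩
    ext ω
    constructor
    · rintro ⟨a, b⟩ i hi
      rcases lt_max_iff.1 hi with hi | hi
      · rw [a i hi, h1 i hi]
      · rw [b i hi, h2 i hi]
    · intro a
      exact ⟨fun i hi => by rw [a i (lt_max_of_lt_left hi), h1 i hi],
        fun i hi => by rw [a i (lt_max_of_lt_right hi), h2 i hi]⟩
  · rintro _ ⟨n, g, rfl⟩; exact h n g
  · have : (univ : Set (ℕ → G)) = cy 0 (fun _ => 1) := by ext; simp [cy]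
    rw [this]; exact h _ _

/-- An event determined by the first `n` increments. -/
def DetBy {G : Type*} (n : ℕ) (A : Set (ℕ → G)) : Prop :=
  ∀ ω ω' : ℕ → G, (∀ i < n, ω i = ω' i) → ω ∈ A → ω' ∈ A

lemma DetBy.mono {G : Type*} {n m : ℕ} (h : n ≤ m) {A : Set (ℕ → G)} (hA : DetBy n A) :
    DetBy m A := fun ω ω' hh => hA ω ω' fun i hi => hh i (by omega)

lemma detBy_walk {G : Type*} [Group G] (n : ℕ) (S : Set G) :
    DetBy n {ω : ℕ → G | walk ω n ∈ S} := by
  intro ω ω' h hw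
  simp only [mem_ofPred_eq] at *
  rwa [← walk_congr h]

lemma measure_split {G : Type*} [Group G] [Countable G] [MeasurableSpace G]
    [DiscreteMeasurableSpace G] (P : Measure (ℕ → G)) (n : ℕ) (E : Set (ℕ → G)) :
    P E = ∑' u : Fin n → G, P (cy n (extW n u) ∩ E) := by
  have h := measure_iUnion₀ (μ := P.restrict E) (f := fun u : Fin n → G => cy n (extW n u)) ?_ ?_
  · have hu : (⋃ u : Fin n → G, cy n (extW n u)) = univ := by
      ext ω; simp [mem_cy_extW]
    rw [hu, Measure.restrict_apply_univ] at h
    rw [h]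
    refine tsum_congr fun u => ?_
    rw [Measure.restrict_apply (measurableSet_cy _ _)]
  · intro u v huv
    refine Disjoint.aedisjoint ?_
    rw [Set.disjoint_left]
    intro ω h1 h2
    rw [mem_cy_extW] at h1 h2
    exact huv (h1.symm.trans h2)
  · intro u; exact (measurableSet_cy _ _).nullMeasurableSet

section RW
variable {G : Type*} [Group G] [Countable G] [MeasurableSpace G] [DiscreteMeasurableSpace G]
  {p : G → ℝ≥0∞} {P : Measure (ℕ → G)}

lemma IsRWMeasure.cy_eq (hP : IsRWMeasure p P) (n : ℕ) (g : ℕ → G) :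
    P (cy n g) = ∏ i ∈ Finset.range n, p (g i) := hP.2 n g

lemma IsRWMeasure.cy_indep (hP : IsRWMeasure p P) (n : ℕ) (g : ℕ → G) {B : Set (ℕ → G)}
    (hB : MeasurableSet B) : P (cy n g ∩ sh n ⁻¹' B) = P (cy n g) * P B := by
  have := hP.1
  have key : (P.restrict (cy n g)).map (sh n) = P (cy n g) • P := by
    apply ext_cy
    intro m k
    rw [Measure.map_apply (measurable_sh n) (measurableSet_cy _ _),
      Measure.restrict_apply (measurable_sh n (measurableSet_cy _ _)), Measure.smul_apply,
      smul_eq_mul]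
    have : sh n ⁻¹' cy m k ∩ cy n g = cy (n + m) (fun i => if i < n then g i else k (i - n)) := by
      ext ω
      constructor
      · rintro ⟨a, b⟩ i hi
        by_cases h : i < n
        · simp [h, b i h]
        · have := a (i - n) (by omega)
          simp only [sh] at this
          rw [show n + (i - n) = i by omega] at this
          simp [h, this]
      · intro a
        constructor
        · intro i hi
          have := a (n + i) (by omega)
          simpa [sh] using this
        · intro i hi
          have := a i (by omega)
          simpa [hi] using this
    rw [this, hP.cy_eq, hP.cy_eq, hP.cy_eq, Finset.prod_range_add]
    congr 1
    · refine Finset.prod_congr rfl fun i hi => ?_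
      simp [Finset.mem_range.1 hi]
    · refine Finset.prod_congr rfl fun i hi => ?_
      simp
  have h2 := congrArg (fun Q : Measure (ℕ → G) => Q B) key
  simp only [Measure.map_apply (measurable_sh n) hB, Measure.smul_apply, smul_eq_mul,
    Measure.restrict_apply (measurable_sh n hB)] at h2
  rw [inter_comm]; exact h2

lemma IsRWMeasure.indep (hP : IsRWMeasure p P) {n : ℕ} {A B : Set (ℕ → G)} (hA : DetBy n A)
    (hB : MeasurableSet B) : P (A ∩ sh n ⁻¹' B) = P A * P B := by
  rw [measure_split P n (A ∩ sh n ⁻¹' B), measure_split P n A, ← ENNReal.tsum_mul_right]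
  refine tsum_congr fun u => ?_
  by_cases hu : extW n u ∈ A
  · have h1 : cy n (extW n u) ⊆ A := fun ω hω => hA _ _ (fun i hi => (hω i hi).symm) hu
    rw [← inter_assoc, inter_eq_left.2 h1, hP.cy_indep n _ hB]
  · have h1 : cy n (extW n u) ∩ A = ∅ := by
      ext ω
      simp only [mem_inter_iff, mem_empty_iff_false, iff_false, not_and]
      exact fun hω hA' => hu (hA _ _ hω hA')
    rw [← inter_assoc, h1]; simp

lemma IsRWMeasure.mp_sh (hP : IsRWMeasure p P) (n : ℕ) : MeasurePreserving (sh n) P P := by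
  refine ⟨measurable_sh n, ?_⟩
  have := hP.1
  ext B hB
  rw [Measure.map_apply (measurable_sh n) hB]
  have := hP.indep (n := n) (A := univ) (fun _ _ _ _ => trivial) hB
  simpa using this

lemma IsRWMeasure.coord (hP : IsRWMeasure p P) (g : G) : P {ω | ω 0 = g} = p g := by
  have := hP.2 1 (fun _ => g)
  simpa using this

lemma tsum_walk_fiber (P : Measure (ℕ → G)) (n : ℕ) (E : Set (ℕ → G)) :
    P E = ∑' y : G, P ({ω | walk ω n = y} ∩ E) := by
  have hm : ∀ y : G, MeasurableSet {ω : ℕ → G | walk ω n = y} := fun y =>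
    measurable_walk n (MeasurableSet.of_discrete (s := {y}))
  have h := measure_iUnion (μ := P.restrict E) (f := fun y : G => {ω : ℕ → G | walk ω n = y})
    (fun u v huv => by
      simp only [Function.onFun]
      rw [Set.disjoint_left]
      intro ω h1 h2
      exact huv (h1.symm.trans h2)) hm
  have hu : (⋃ u : G, {ω : ℕ → G | walk ω n = u}) = univ := by ext ω; simp
  rw [hu, Measure.restrict_apply_univ] at h
  rw [h]
  exact tsum_congr fun u => Measure.restrict_apply (hm u)

lemma IsRWMeasure.law (hP : IsRWMeasure p P) (n : ℕ) (x : G) :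
    P {ω | walk ω n = x} = piN p n x := by
  have := hP.1
  induction n generalizing x with
  | zero =>
    by_cases h : x = 1
    · simp [walk_zero, piN, h]
    · simp [walk_zero, piN, h, Ne.symm h]
  | succ k ih =>
    rw [tsum_walk_fiber P k]
    simp only [piN, conv]
    refine tsum_congr fun y => ?_
    have : {ω : ℕ → G | walk ω k = y} ∩ {ω | walk ω (k + 1) = x} =
        {ω | walk ω k = y} ∩ sh k ⁻¹' {ω | ω 0 = y⁻¹ * x} := by
      ext ω
      simp only [mem_inter_iff, mem_ofPred_eq, mem_preimage, sh, walk_succ, add_zero]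
      constructor
      · rintro ⟨rfl, rfl⟩; simp
      · rintro ⟨rfl, h⟩; simp [h]
    have hB : MeasurableSet {ω : ℕ → G | ω 0 = y⁻¹ * x} := by
      have h : Measurable fun ω : ℕ → G => ω 0 := measurable_pi_apply 0
      exact h (MeasurableSet.of_discrete (s := {y⁻¹ * x}))
    have hd : DetBy k {ω : ℕ → G | walk ω k = y} := detBy_walk k {y}
    rw [this, hP.indep hd hB, ih y, hP.coord]

lemma IsRWMeasure.joint (hP : IsRWMeasure p P) (n m : ℕ) (x y : G) :
    P {ω | walk ω n = x ∧ walk (sh n ω) m = y} = piN p n x * piN p m y := by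
  have := hP.indep (detBy_walk n {x}) (measurable_walk m (MeasurableSet.of_discrete (s := {y})))
  rw [← hP.law, ← hP.law]
  exact this

lemma IsRWMeasure.piN_mul_le (hP : IsRWMeasure p P) (n m : ℕ) (x y : G) :
    piN p n x * piN p m y ≤ piN p (n + m) (x * y) := by
  rw [← hP.joint, ← hP.law]
  refine measure_mono ?_
  rintro ω ⟨h1, h2⟩
  simp [walk_add, h1, h2]

lemma IsRWMeasure.piN_le_one (hP : IsRWMeasure p P) (n : ℕ) (x : G) : piN p n x ≤ 1 := by
  have := hP.1
  rw [← hP.law]; exact prob_le_one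

lemma IsRWMeasure.tsum_piN (hP : IsRWMeasure p P) (n : ℕ) : ∑' x, piN p n x = 1 := by
  have := hP.1
  have := tsum_walk_fiber P n univ
  simp only [inter_univ, measure_univ] at this
  rw [this]
  exact tsum_congr fun x => (hP.law n x).symm

lemma IsRWMeasure.ae_pos (hP : IsRWMeasure p P) (n : ℕ) :
    ∀ᵐ ω ∂P, piN p n (walk ω n) ≠ 0 := by
  rw [ae_iff]
  have : {ω : ℕ → G | ¬ piN p n (walk ω n) ≠ 0} =
      ⋃ x : {x : G // piN p n x = 0}, {ω | walk ω n = x.1} := by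
    ext ω; simp
  rw [this, measure_iUnion_null_iff]
  rintro ⟨x, hx⟩
  rw [hP.law]; exact hx

lemma IsRWMeasure.ae_sh (hP : IsRWMeasure p P) {Q : (ℕ → G) → Prop} (h : ∀ᵐ ω ∂P, Q ω) :
    ∀ᵐ ω ∂P, ∀ k, Q (sh k ω) :=
  ae_all_iff.2 fun k => (hP.mp_sh k).quasiMeasurePreserving.ae h

lemma IsRWMeasure.zero_one (hP : IsRWMeasure p P) {B : Set (ℕ → G)} (hB : MeasurableSet B)
    (hinv : ∀ ω, sh 1 ω ∈ B → ω ∈ B) : P B = 0 ∨ P B = 1 := by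
  have := hP.1
  have h1 : ∀ n, sh n ⁻¹' B ⊆ B := by
    intro n
    induction n with
    | zero => intro ω h; simpa [sh_zero] using h
    | succ k ih =>
      intro ω h
      refine ih (hinv _ ?_)
      rw [sh_sh]; exact h
  have h2 : ∀ n, sh n ⁻¹' B =ᵐ[P] B := fun n =>
    ae_eq_of_subset_of_measure_ge (h1 n)
      (by rw [(hP.mp_sh n).measure_preimage hB.nullMeasurableSet])
      (measurable_sh n hB).nullMeasurableSet (measure_ne_top _ _)
  have key : P.restrict B = P B • P := by
    apply ext_cy
    intro n g
    rw [Measure.restrict_apply (measurableSet_cy _ _), Measure.smul_apply, smul_eq_mul, mul_comm,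
      ← hP.cy_indep n g hB]
    exact measure_congr ((ae_eq_refl _).inter (h2 n).symm)
  have h3 := congrArg (fun Q : Measure (ℕ → G) => Q B) key
  simp only [Measure.restrict_apply_self, Measure.smul_apply, smul_eq_mul] at h3
  have hfin : P B ≠ ∞ := measure_ne_top _ _
  by_cases h0 : P B = 0
  · exact Or.inl h0
  · right
    have := (ENNReal.mul_eq_left h0 hfin).1 h3.symm
    exact this

lemma IsRWMeasure.lintegral_walk (hP : IsRWMeasure p P) (n : ℕ) (F : G → ℝ≥0∞) :
    ∫⁻ ω, F (walk ω n) ∂P = ∑' x, piN p n x * F x := by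
  have h1 : ∫⁻ ω, F (walk ω n) ∂P = ∫⁻ x, F x ∂(P.map fun ω => walk ω n) :=
    (lintegral_map (Measurable.of_discrete) (measurable_walk n)).symm
  rw [h1, lintegral_countable']
  refine tsum_congr fun x => ?_
  rw [Measure.map_apply (measurable_walk n) (MeasurableSet.of_discrete), mul_comm, ← hP.law]
  rfl

lemma IsRWMeasure.integral_walk (hP : IsRWMeasure p P) (n : ℕ) (F : G → ℝ)
    (hF : Integrable (fun ω => F (walk ω n)) P) :
    ∫ ω, F (walk ω n) ∂P = ∑' x, (piN p n x).toReal * F x := by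
  have h1 : ∫ ω, F (walk ω n) ∂P = ∫ x, F x ∂(P.map fun ω => walk ω n) :=
    (integral_map (measurable_walk n).aemeasurable
      (Measurable.of_discrete).aestronglyMeasurable).symm
  have hF' : Integrable F (P.map fun ω => walk ω n) :=
    (integrable_map_measure (Measurable.of_discrete).aestronglyMeasurable
      (measurable_walk n).aemeasurable).2 hF
  rw [h1, integral_countable hF']
  refine tsum_congr fun x => ?_
  rw [measureReal_def, Measure.map_apply (measurable_walk n) (MeasurableSet.of_discrete),
    ← hP.law, smul_eq_mul]
  rfl

end RW

lemma IsRWMeasure.map {G H : Type*} [Group G] [Countable G] [MeasurableSpace G]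
    [DiscreteMeasurableSpace G] [Group H] [Countable H] [MeasurableSpace H]
    [DiscreteMeasurableSpace H] {p : G → ℝ≥0∞} {P : Measure (ℕ → G)} (hP : IsRWMeasure p P)
    (φ : G → H) (q : H → ℝ≥0∞) (hq : ∀ h, q h = ∑' g, if φ g = h then p g else 0) :
    IsRWMeasure q (P.map fun ω i => φ (ω i)) := by
  have := hP.1
  have hm : Measurable (fun (ω : ℕ → G) i => φ (ω i)) :=
    measurable_pi_lambda _ fun i => (Measurable.of_discrete).comp (measurable_pi_apply i)
  refine ⟨Measure.isProbabilityMeasure_map hm.aemeasurable, ?_⟩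
  intro n g
  change (P.map fun ω i => φ (ω i)) (cy n g) = _
  rw [Measure.map_apply hm (measurableSet_cy _ _)]
  induction n generalizing g with
  | zero => simp [cy]
  | succ k ih =>
    have h1 : (fun (ω : ℕ → G) i => φ (ω i)) ⁻¹' cy (k + 1) g =
        ((fun (ω : ℕ → G) i => φ (ω i)) ⁻¹' cy k g) ∩ sh k ⁻¹' {ω | φ (ω 0) = g k} := by
      ext ω
      simp only [cy, mem_preimage, mem_ofPred_eq, mem_inter_iff, sh, add_zero]
      constructor
      · intro h; exact ⟨fun i hi => h i (by omega), h k (by omega)⟩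
      · rintro ⟨a, b⟩ i hi
        rcases Nat.lt_succ_iff_lt_or_eq.1 hi with hi | rfl
        · exact a i hi
        · exact b
    have hd : DetBy k ((fun (ω : ℕ → G) i => φ (ω i)) ⁻¹' cy k g) := by
      intro ω ω' h hω i hi
      have := hω i hi
      simp only [] at this ⊢
      rw [← h i hi]; exact this
    have hB : MeasurableSet {ω : ℕ → G | φ (ω 0) = g k} := by
      have h : Measurable fun ω : ℕ → G => ω 0 := measurable_pi_apply 0
      exact h (MeasurableSet.of_discrete (s := {x : G | φ x = g k}))
    rw [h1, hP.indep hd hB, ih, Finset.prod_range_succ]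
    congr 1
    rw [hq]
    have h2 : P {ω : ℕ → G | φ (ω 0) = g k} =
        (P.map fun ω : ℕ → G => ω 0) {x | φ x = g k} := by
      have h0 : Measurable fun ω : ℕ → G => ω 0 := measurable_pi_apply 0
      rw [Measure.map_apply h0 (MeasurableSet.of_discrete)]; rfl
    rw [h2, ← Measure.tsum_indicator_apply_singleton _ _ (MeasurableSet.of_discrete)]
    refine tsum_congr fun x => ?_
    rw [Set.indicator_apply]
    simp only [mem_ofPred_eq]
    split_ifs
    · have h0 : Measurable fun ω : ℕ → G => ω 0 := measurable_pi_apply 0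
      rw [Measure.map_apply h0 (MeasurableSet.of_discrete), ← hP.coord]; rfl
    · rfl

/-! ### Part B: Kingman's theorem for random walks -/

lemma sub_le_sum {x : ℕ → ℕ → ℝ} (hx0 : ∀ k, x 0 k = 0)
    (hsub : ∀ n m k, x (n + m) k ≤ x n k + x m (k + n)) (M k : ℕ) :
    x M k ≤ ∑ s ∈ Finset.range M, x 1 (k + s) := by
  induction M with
  | zero => simp [hx0]
  | succ M ih =>
    rw [Finset.sum_range_succ]
    exact (hsub M 1 k).trans (by linarith)

lemma greedy {x : ℕ → ℕ → ℝ} {y : ℕ → ℝ} {c : ℝ} {L : ℕ} (hc : 0 ≤ c) (hx0 : ∀ k, x 0 k = 0)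
    (h0 : ∀ n k, 0 ≤ x n k) (hsub : ∀ n m k, x (n + m) k ≤ x n k + x m (k + n))
    (hy : ∀ k, 0 ≤ y k)
    (hstep : ∀ k, (∃ n, 1 ≤ n ∧ n ≤ L ∧ x n k ≤ c * n) ∨ x 1 k ≤ y k) (M : ℕ) :
    ∀ k, x M k ≤ c * M + ∑ s ∈ Finset.range M, y (k + s) +
      ∑ s ∈ Finset.Ico (M - L) M, x 1 (k + s) := by
  induction M using Nat.strong_induction_on with
  | _ M ih =>
  intro k
  by_cases hML : M ≤ L
  · rw [Nat.sub_eq_zero_of_le hML, ← Finset.range_eq_Ico]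
    have h1 := sub_le_sum hx0 hsub M k
    have h2 : 0 ≤ ∑ s ∈ Finset.range M, y (k + s) := Finset.sum_nonneg fun _ _ => hy _
    have h3 : 0 ≤ c * (M : ℝ) := by positivity
    linarith
  push Not at hML
  have key : ∀ n, 1 ≤ n → n ≤ M →
      (∑ s ∈ Finset.range (M - n), y (k + n + s) ≤ ∑ s ∈ Finset.Ico n M, y (k + s)) ∧
      (∑ s ∈ Finset.Ico (M - n - L) (M - n), x 1 (k + n + s) ≤
        ∑ s ∈ Finset.Ico (M - L) M, x 1 (k + s)) := by
    intro n hn hnM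
    constructor
    · rw [Finset.sum_Ico_eq_sum_range]
      apply le_of_eq
      refine Finset.sum_congr rfl fun s _ => by rw [add_assoc]
    · have e : ∑ s ∈ Finset.Ico (M - n - L) (M - n), x 1 (k + n + s) =
          ∑ s ∈ Finset.Ico (M - n - L + n) (M - n + n), x 1 (k + s) := by
        rw [← Finset.sum_Ico_add' (fun s => x 1 (k + s))]
        refine Finset.sum_congr rfl fun s _ => by rw [add_assoc, add_comm n s]
      rw [e]
      refine Finset.sum_le_sum_of_subset_of_nonneg ?_ fun _ _ _ => h0 _ _
      intro s hs
      simp only [Finset.mem_Ico] at hs ⊢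
      omega
  rcases hstep k with ⟨n, hn1, hnL, hxn⟩ | hxy
  · have h1 := hsub n (M - n) k
    rw [show n + (M - n) = M by omega] at h1
    have h2 := ih (M - n) (by omega) (k + n)
    obtain ⟨h3, h4⟩ := key n hn1 (by omega)
    have h5 : ∑ s ∈ Finset.Ico n M, y (k + s) ≤ ∑ s ∈ Finset.range M, y (k + s) :=
      Finset.sum_le_sum_of_subset_of_nonneg (by
        intro s hs; simp only [Finset.mem_Ico, Finset.mem_range] at hs ⊢; omega)
        fun _ _ _ => hy _
    have h6 : ((M - n : ℕ) : ℝ) = M - n := by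
      rw [Nat.cast_sub (by omega)]
    rw [h6] at h2
    nlinarith
  · have h1 := hsub 1 (M - 1) k
    rw [show 1 + (M - 1) = M by omega] at h1
    have h2 := ih (M - 1) (by omega) (k + 1)
    obtain ⟨h3, h4⟩ := key 1 le_rfl (by omega)
    have h5 : y k + ∑ s ∈ Finset.Ico 1 M, y (k + s) = ∑ s ∈ Finset.range M, y (k + s) := by
      rw [Finset.range_eq_Ico]
      have e := Finset.sum_eq_sum_Ico_succ_bot (show 0 < M by omega) (fun s => y (k + s))
      rw [e]; simp
    have h6 : ((M - 1 : ℕ) : ℝ) = M - 1 := by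
      rw [Nat.cast_sub (by omega)]; simp
    rw [h6] at h2
    nlinarith

section Kingman
variable {G : Type*} [Group G] [Countable G] [MeasurableSpace G] [DiscreteMeasurableSpace G]
  {p : G → ℝ≥0∞} {P : Measure (ℕ → G)}

lemma measurable_Fwalk (F : G → ℝ) (n : ℕ) : Measurable fun ω : ℕ → G => F (walk ω n) :=
  (Measurable.of_discrete).comp (measurable_walk n)

lemma IsRWMeasure.slln (hP : IsRWMeasure p P) (N : ℕ) (hN : 1 ≤ N) (F : G → ℝ)
    (hF : Integrable (fun ω => F (walk ω N)) P) :
    ∀ᵐ ω ∂P, Tendsto (fun k : ℕ => (∑ j ∈ Finset.range k, F (walk (sh (j * N) ω) N)) / k) atTop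
      (𝓝 (∫ ω, F (walk ω N) ∂P)) := by
  have := hP.1
  let Y : ℕ → (ℕ → G) → ℝ := fun j ω => F (walk (sh (j * N) ω) N)
  have hmeas : ∀ j, Measurable (Y j) := fun j =>
    (measurable_Fwalk F N).comp (measurable_sh (j * N))
  have hY0 : Y 0 = fun ω => F (walk ω N) := by
    funext ω; simp [Y, sh_zero]
  have hind : ∀ i j, i < j → ProbabilityTheory.IndepFun (Y i) (Y j) P := by
    intro i j hij
    rw [ProbabilityTheory.indepFun_iff_measure_inter_preimage_eq_mul]
    intro s t hs ht
    have hA : MeasurableSet {ω : ℕ → G | F (walk ω N) ∈ s} := measurable_Fwalk F N hs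
    have hB : MeasurableSet {ω : ℕ → G | F (walk ω N) ∈ t} := measurable_Fwalk F N ht
    have e1 : Y i ⁻¹' s = sh (i * N) ⁻¹' {ω : ℕ → G | F (walk ω N) ∈ s} := rfl
    have e2 : Y j ⁻¹' t = sh (j * N) ⁻¹' {ω : ℕ → G | F (walk ω N) ∈ t} := rfl
    have e3 : Y i ⁻¹' s ∩ Y j ⁻¹' t = sh (i * N) ⁻¹' ({ω : ℕ → G | F (walk ω N) ∈ s} ∩
        sh ((j - i) * N) ⁻¹' {ω : ℕ → G | F (walk ω N) ∈ t}) := by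
      ext ω
      simp only [Y, mem_inter_iff, mem_preimage, mem_ofPred_eq, sh_sh]
      rw [← Nat.add_mul, show i + (j - i) = j by omega]
    have hd : DetBy ((j - i) * N) {ω : ℕ → G | F (walk ω N) ∈ s} :=
      (detBy_walk N (F ⁻¹' s)).mono (Nat.le_mul_of_pos_left N (by omega))
    rw [e3, (hP.mp_sh _).measure_preimage
      (hA.inter (measurable_sh _ hB)).nullMeasurableSet, hP.indep hd hB, e1, e2,
      (hP.mp_sh _).measure_preimage hA.nullMeasurableSet,
      (hP.mp_sh _).measure_preimage hB.nullMeasurableSet]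
  have hs := ProbabilityTheory.strong_law_ae_real (μ := P) Y (by rw [hY0]; exact hF) (by
    intro i j hij
    rcases lt_or_gt_of_ne hij with h | h
    · exact hind i j h
    · exact (hind j i h).symm) (by
    intro i
    refine ⟨(hmeas i).aemeasurable, (hmeas 0).aemeasurable, ?_⟩
    have e : Y i = (fun ω => F (walk ω N)) ∘ sh (i * N) := rfl
    rw [hY0, e, ← Measure.map_map (measurable_Fwalk F N) (measurable_sh _), (hP.mp_sh _).map_eq])
  rw [hY0] at hs
  exact hs

/-- The hypotheses of the subadditive ergodic theorem. -/
structure SubProc (P : Measure (ℕ → G)) (F : ℕ → G → ℝ) : Prop where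
  nonneg : ∀ n x, 0 ≤ F n x
  zero : F 0 1 = 0
  sub : ∀ᵐ ω ∂P, ∀ n m, F (n + m) (walk ω (n + m)) ≤ F n (walk ω n) + F m (walk (sh n ω) m)
  int : Integrable (fun ω => F 1 (walk ω 1)) P

variable {F : ℕ → G → ℝ}

lemma SubProc.sub' (hP : IsRWMeasure p P) (h : SubProc P F) :
    ∀ᵐ ω ∂P, ∀ n m k, F (n + m) (walk (sh k ω) (n + m)) ≤
      F n (walk (sh k ω) n) + F m (walk (sh (k + n) ω) m) := by
  filter_upwards [hP.ae_sh h.sub] with ω hω n m k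
  have := hω k n m
  rwa [sh_sh] at this

lemma SubProc.zero' (h : SubProc P F) (ω : ℕ → G) : F 0 (walk ω 0) = 0 := by
  rw [walk_zero, h.zero]

lemma SubProc.int1 (hP : IsRWMeasure p P) (h : SubProc P F) (k : ℕ) :
    Integrable (fun ω => F 1 (walk (sh k ω) 1)) P :=
  (hP.mp_sh k).integrable_comp_of_integrable h.int

lemma integral_sh (hP : IsRWMeasure p P) (k : ℕ) (f : (ℕ → G) → ℝ)
    (hf : Measurable f) : ∫ ω, f (sh k ω) ∂P = ∫ ω, f ω ∂P := by
  have := integral_map (μ := P) (measurable_sh k).aemeasurable (f := f)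
    hf.aestronglyMeasurable
  rw [(hP.mp_sh k).map_eq] at this
  exact this.symm

lemma SubProc.intN (hP : IsRWMeasure p P) (h : SubProc P F) (n : ℕ) :
    Integrable (fun ω => F n (walk ω n)) P := by
  refine Integrable.mono' (integrable_finsetSum (Finset.range n) fun s _ => h.int1 hP s)
    (measurable_Fwalk (F n) n).aestronglyMeasurable ?_
  filter_upwards [h.sub' hP] with ω hω
  rw [Real.norm_of_nonneg (h.nonneg _ _)]
  have := sub_le_sum (x := fun n k => F n (walk (sh k ω) n)) (fun k => h.zero' _)
    (fun n m k => hω n m k) n 0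
  simpa [sh_zero] using this

lemma SubProc.subadditive (hP : IsRWMeasure p P) (h : SubProc P F) :
    Subadditive fun n => ∫ ω, F n (walk ω n) ∂P := by
  intro n m
  simp only
  have e : ∫ ω, F m (walk (sh n ω) m) ∂P = ∫ ω, F m (walk ω m) ∂P :=
    integral_sh hP n _ (measurable_Fwalk (F m) m)
  have hi : Integrable (fun ω => F m (walk (sh n ω) m)) P :=
    (hP.mp_sh n).integrable_comp_of_integrable (h.intN hP m)
  rw [← e, ← integral_add (h.intN hP n) hi]
  refine integral_mono_ae (h.intN hP _) ((h.intN hP n).add hi) ?_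
  filter_upwards [h.sub] with ω hω
  exact hω n m

lemma SubProc.exists_lim (hP : IsRWMeasure p P) (h : SubProc P F) :
    ∃ γ, Tendsto (fun n : ℕ => (∫ ω, F n (walk ω n) ∂P) / n) atTop (𝓝 γ) :=
  ⟨_, (h.subadditive hP).tendsto_lim ⟨0, by
    rintro _ ⟨n, rfl⟩
    exact div_nonneg (integral_nonneg fun ω => h.nonneg _ _) (Nat.cast_nonneg _)⟩⟩

lemma tendsto_incr_div {T : ℕ → ℝ} {e : ℝ} (h : Tendsto (fun k : ℕ => T k / k) atTop (𝓝 e)) :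
    Tendsto (fun k : ℕ => (T (k + 1) - T k) / k) atTop (𝓝 0) := by
  have h1 := h.comp (tendsto_add_atTop_nat 1)
  have h2 : Tendsto (fun k : ℕ => ((k : ℝ) + 1) / k) atTop (𝓝 1) := by
    have : Tendsto (fun k : ℕ => 1 + 1 / (k : ℝ)) atTop (𝓝 (1 + 0)) :=
      tendsto_const_nhds.add tendsto_one_div_atTop_nhds_zero_nat
    rw [add_zero] at this
    refine this.congr' ?_
    filter_upwards [eventually_gt_atTop 0] with k hk
    have : (k : ℝ) ≠ 0 := by positivity
    field_simp
  have h3 := (h1.mul h2).sub h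
  rw [mul_one, sub_self] at h3
  refine h3.congr' ?_
  filter_upwards [eventually_gt_atTop 0] with k hk
  have : (k : ℝ) ≠ 0 := by positivity
  simp only [Function.comp_apply]
  push_cast
  have : (k : ℝ) + 1 ≠ 0 := by positivity
  field_simp

lemma SubProc.incr (hP : IsRWMeasure p P) (h : SubProc P F) :
    ∀ᵐ ω ∂P, Tendsto (fun k : ℕ => F 1 (walk (sh k ω) 1) / k) atTop (𝓝 0) := by
  filter_upwards [hP.slln 1 le_rfl (F 1) h.int] with ω hω
  have := tendsto_incr_div hω
  simpa [Finset.sum_range_succ] using this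

lemma SubProc.upper (hP : IsRWMeasure p P) (h : SubProc P F) {γ : ℝ}
    (hγ : Tendsto (fun n : ℕ => (∫ ω, F n (walk ω n) ∂P) / n) atTop (𝓝 γ)) {ε : ℝ} (hε : 0 < ε) :
    ∀ᵐ ω ∂P, ∀ᶠ n : ℕ in atTop, F n (walk ω n) ≤ (γ + ε) * n := by
  obtain ⟨N, hN1, hN⟩ : ∃ N : ℕ, 1 ≤ N ∧ (∫ ω, F N (walk ω N) ∂P) / N < γ + ε / 3 :=
    (((eventually_ge_atTop 1).and (hγ.eventually_lt_const (by linarith))).exists)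
  have hN0 : (0 : ℝ) < N := by exact_mod_cast hN1
  filter_upwards [h.sub' hP, h.incr hP, hP.slln N hN1 (F N) (h.intN hP N)] with ω hs hi hl
  let x : ℕ → ℕ → ℝ := fun n k => F n (walk (sh k ω) n)
  have hx0 : ∀ k, x 0 k = 0 := fun k => h.zero' _
  have hsub : ∀ n m k, x (n + m) k ≤ x n k + x m (k + n) := fun n m k => hs n m k
  have hxn : ∀ n k, 0 ≤ x n k := fun n k => h.nonneg _ _
  have hblock : ∀ q, x (q * N) 0 ≤ ∑ j ∈ Finset.range q, x N (j * N) := by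
    intro q
    induction q with
    | zero => simp [hx0]
    | succ q ih =>
      rw [Finset.sum_range_succ, Nat.succ_mul]
      have := hsub (q * N) N 0
      rw [zero_add] at this
      linarith
  -- the increments
  have hη : (0 : ℝ) < ε / (3 * N) := by positivity
  have hi' : ∀ᶠ k : ℕ in atTop, x 1 k ≤ ε / (3 * N) * k := by
    filter_upwards [hi.eventually_lt_const hη, eventually_gt_atTop 0] with k hk hk0
    have : (0 : ℝ) < k := by exact_mod_cast hk0
    rw [div_lt_iff₀ this] at hk
    exact hk.le
  obtain ⟨K, hK⟩ := eventually_atTop.1 hi'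
  have hl' : ∀ᶠ q : ℕ in atTop, ∑ j ∈ Finset.range q, x N (j * N) ≤ (γ + 2 * ε / 3) * N * q := by
    have hlt : (∫ ω, F N (walk ω N) ∂P) < (γ + 2 * ε / 3) * N := by
      rw [div_lt_iff₀ hN0] at hN
      nlinarith
    filter_upwards [hl.eventually_lt_const hlt, eventually_gt_atTop 0] with k hk hk0
    have : (0 : ℝ) < k := by exact_mod_cast hk0
    rw [div_lt_iff₀ this] at hk
    exact hk.le
  obtain ⟨Q, hQ⟩ := eventually_atTop.1 hl'
  filter_upwards [eventually_ge_atTop ((K + Q + 1) * N)] with n hn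
  have hq : K + Q + 1 ≤ n / N := (Nat.le_div_iff_mul_le (by omega)).2 hn
  have hdm : n / N * N + n % N = n := Nat.div_add_mod' n N
  have hmod : n % N < N := Nat.mod_lt _ (by omega)
  have hqle : n / N ≤ n / N * N := Nat.le_mul_of_pos_right _ (by omega)
  set q := n / N with hqdef
  have h1 : x n 0 ≤ x (q * N) 0 + x (n % N) (q * N) := by
    have := hsub (q * N) (n % N) 0
    rwa [hdm, zero_add] at this
  have h2 : x (n % N) (q * N) ≤ N * (ε / (3 * N) * n) := by
    refine (sub_le_sum hx0 hsub _ _).trans ?_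
    have hb : ∀ s ∈ Finset.range (n % N), x 1 (q * N + s) ≤ ε / (3 * N) * n := by
      intro s hs
      have hs' := Finset.mem_range.1 hs
      refine (hK _ (by omega)).trans ?_
      have : ((q * N + s : ℕ) : ℝ) ≤ n := by exact_mod_cast (by omega)
      exact mul_le_mul_of_nonneg_left this hη.le
    refine (Finset.sum_le_sum hb).trans ?_
    rw [Finset.sum_const, Finset.card_range, nsmul_eq_mul]
    have : ((n % N : ℕ) : ℝ) ≤ N := by exact_mod_cast hmod.le
    exact mul_le_mul_of_nonneg_right this (by positivity)
  have h3 : x (q * N) 0 ≤ (γ + 2 * ε / 3) * N * q := (hblock q).trans (hQ q (by omega))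
  have hγ0 : 0 ≤ γ := ge_of_tendsto' hγ fun n =>
    div_nonneg (integral_nonneg fun ω => h.nonneg _ _) (Nat.cast_nonneg _)
  have h4 : (γ + 2 * ε / 3) * N * q ≤ (γ + 2 * ε / 3) * n := by
    rw [mul_assoc]
    refine mul_le_mul_of_nonneg_left ?_ (by positivity)
    exact_mod_cast (by rw [mul_comm]; omega)
  have h5 : N * (ε / (3 * N) * n) = ε / 3 * n := by field_simp
  have h6 : x n 0 = F n (walk ω n) := by simp [x, sh_zero]
  rw [← h6]
  linarith

lemma SubProc.no_low (hP : IsRWMeasure p P) (h : SubProc P F) {γ : ℝ}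
    (hγ : Tendsto (fun n : ℕ => (∫ ω, F n (walk ω n) ∂P) / n) atTop (𝓝 γ)) {c : ℝ} (hc : c < γ) :
    ¬ ∀ᵐ ω ∂P, ∃ n : ℕ, 1 ≤ n ∧ F n (walk ω n) < c * n := by
  have := hP.1
  intro hlow
  have hc0 : 0 ≤ c := by
    obtain ⟨ω, n, hn, hω⟩ := hlow.exists
    have h1 := h.nonneg n (walk ω n)
    have h2 : (0 : ℝ) < n := by exact_mod_cast hn
    by_contra hneg
    push Not at hneg
    nlinarith
  let T : ℕ → Set (ℕ → G) := fun L => {ω | ∀ n, 1 ≤ n → n ≤ L → c * n ≤ F n (walk ω n)}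
  have hTm : ∀ L, MeasurableSet (T L) := by
    intro L
    have : T L = ⋂ n : ℕ, ⋂ (_ : 1 ≤ n), ⋂ (_ : n ≤ L), {ω | c * n ≤ F n (walk ω n)} := by
      ext ω; simp [T]
    rw [this]
    exact MeasurableSet.iInter fun n => MeasurableSet.iInter fun _ => MeasurableSet.iInter fun _ =>
      measurableSet_le measurable_const (measurable_Fwalk (F n) n)
  have hTanti : Antitone T := fun L L' hL ω hω n h1 h2 => hω n h1 (h2.trans hL)
  have hlim := tendsto_setIntegral_of_antitone (μ := P) (f := fun ω => F 1 (walk ω 1)) hTm hTanti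
    ⟨0, h.int.integrableOn⟩
  have hnull : P (⋂ L, T L) = 0 := by
    rw [measure_eq_zero_iff_ae_notMem]
    filter_upwards [hlow] with ω hω hmem
    obtain ⟨n, hn, hlt⟩ := hω
    have := mem_iInter.1 hmem n n hn le_rfl
    linarith
  rw [setIntegral_measure_zero _ hnull] at hlim
  obtain ⟨L, hL⟩ := (hlim.eventually_lt_const (show 0 < (γ - c) / 2 by linarith)).exists
  let y : (ℕ → G) → ℝ := (T L).indicator fun ω => F 1 (walk ω 1)
  have hyint : Integrable y P := h.int.indicator (hTm L)
  have hym : Measurable y := (measurable_Fwalk (F 1) 1).indicator (hTm L)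
  have hyE : ∫ ω, y ω ∂P < (γ - c) / 2 := by
    rw [integral_indicator (hTm L)]; exact hL
  have hbound : ∀ M : ℕ, ∫ ω, F M (walk ω M) ∂P ≤ c * M + M * ((γ - c) / 2) +
      L * ∫ ω, F 1 (walk ω 1) ∂P := by
    intro M
    have hyk : ∀ k, Integrable (fun ω => y (sh k ω)) P := fun k =>
      (hP.mp_sh k).integrable_comp_of_integrable hyint
    have hI : Integrable (fun ω => c * M + ∑ s ∈ Finset.range M, y (sh s ω) +
        ∑ s ∈ Finset.Ico (M - L) M, F 1 (walk (sh s ω) 1)) P :=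
      ((integrable_const _).add (integrable_finsetSum _ fun s _ => hyk s)).add
        (integrable_finsetSum _ fun s _ => h.int1 hP s)
    have h1 : ∫ ω, F M (walk ω M) ∂P ≤ ∫ ω, (c * M + ∑ s ∈ Finset.range M, y (sh s ω) +
        ∑ s ∈ Finset.Ico (M - L) M, F 1 (walk (sh s ω) 1)) ∂P := by
      refine integral_mono_ae (h.intN hP M) hI ?_
      filter_upwards [h.sub' hP] with ω hs
      have := greedy (x := fun n k => F n (walk (sh k ω) n)) (y := fun k => y (sh k ω)) (c := c)
        (L := L) hc0 (fun k => h.zero' _) (fun n k => h.nonneg _ _) (fun n m k => hs n m k)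
        (fun k => indicator_nonneg (fun _ _ => h.nonneg _ _) _) (by
          intro k
          by_cases hk : sh k ω ∈ T L
          · right; simp only [y, indicator_of_mem hk]; exact le_rfl
          · left
            simp only [T, mem_ofPred_eq] at hk
            push Not at hk
            obtain ⟨n, a, b, d⟩ := hk
            exact ⟨n, a, b, d.le⟩) M 0
      simpa [sh_zero] using this
    refine h1.trans ?_
    have hI1 : Integrable (fun ω => c * M + ∑ s ∈ Finset.range M, y (sh s ω)) P :=
      (integrable_const _).add (integrable_finsetSum _ fun s _ => hyk s)
    rw [integral_add hI1
      (integrable_finsetSum _ fun s _ => h.int1 hP s), integral_add (integrable_const _)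
      (integrable_finsetSum _ fun s _ => hyk s), integral_finsetSum _ (fun s _ => hyk s),
      integral_finsetSum _ (fun s _ => h.int1 hP s)]
    simp only [integral_sh hP _ y hym,
      integral_sh hP _ (fun ω => F 1 (walk ω 1)) (measurable_Fwalk (F 1) 1)]
    simp only [integral_const, probReal_univ, one_smul, Finset.sum_const, Finset.card_range,
      Nat.card_Ico, nsmul_eq_mul]
    have e1 : 0 ≤ ∫ ω, F 1 (walk ω 1) ∂P := integral_nonneg fun ω => h.nonneg _ _
    have e2 : ((M - (M - L) : ℕ) : ℝ) ≤ L := by exact_mod_cast (by omega)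
    have e3 : (M : ℝ) * ∫ ω, y ω ∂P ≤ M * ((γ - c) / 2) :=
      mul_le_mul_of_nonneg_left hyE.le (Nat.cast_nonneg _)
    have e4 := mul_le_mul_of_nonneg_right e2 e1
    linarith
  have hlim2 : Tendsto (fun M : ℕ => c + (γ - c) / 2 + (L * ∫ ω, F 1 (walk ω 1) ∂P) / M) atTop
      (𝓝 (c + (γ - c) / 2 + 0)) :=
    tendsto_const_nhds.add (tendsto_const_div_atTop_nhds_zero_nat _)
  have : γ ≤ c + (γ - c) / 2 + 0 := by
    refine le_of_tendsto_of_tendsto hγ hlim2 ?_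
    filter_upwards [eventually_gt_atTop 0] with M hM
    have hM' : (0 : ℝ) < M := by exact_mod_cast hM
    rw [div_le_iff₀ hM']
    have := hbound M
    field_simp
    linarith
  linarith

lemma SubProc.lower (hP : IsRWMeasure p P) (h : SubProc P F) {γ : ℝ}
    (hγ : Tendsto (fun n : ℕ => (∫ ω, F n (walk ω n) ∂P) / n) atTop (𝓝 γ)) {ε : ℝ} (hε : 0 < ε) :
    ∀ᵐ ω ∂P, ∀ᶠ n : ℕ in atTop, (γ - ε) * n ≤ F n (walk ω n) := by
  have := hP.1
  set c := γ - ε with hc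
  let A : Set (ℕ → G) := {ω | ∀ j : ℕ, ∀ a : ℕ, ∃ n, a ≤ n ∧ F n (walk ω n) < (c + 1 / (j + 1)) * n}
  have hAm : MeasurableSet A := by
    have : A = ⋂ j : ℕ, ⋂ a : ℕ, ⋃ n, ⋃ (_ : a ≤ n), {ω | F n (walk ω n) < (c + 1 / (j + 1)) * n} := by
      ext ω; simp [A]
    rw [this]
    exact MeasurableSet.iInter fun j => MeasurableSet.iInter fun a => MeasurableSet.iUnion fun n =>
      MeasurableSet.iUnion fun _ => measurableSet_lt (measurable_Fwalk (F n) n) measurable_const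
  let O : Set (ℕ → G) := {ω | ∀ n m k, F (n + m) (walk (sh k ω) (n + m)) ≤
      F n (walk (sh k ω) n) + F m (walk (sh (k + n) ω) m)}
  have hOm : MeasurableSet O := by
    have : O = ⋂ n : ℕ, ⋂ m : ℕ, ⋂ k : ℕ, {ω | F (n + m) (walk (sh k ω) (n + m)) ≤
      F n (walk (sh k ω) n) + F m (walk (sh (k + n) ω) m)} := by
      ext ω; simp [O]
    rw [this]
    exact MeasurableSet.iInter fun n => MeasurableSet.iInter fun m => MeasurableSet.iInter fun k =>
      measurableSet_le ((measurable_Fwalk _ _).comp (measurable_sh _))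
        (((measurable_Fwalk _ _).comp (measurable_sh _)).add
          ((measurable_Fwalk _ _).comp (measurable_sh _)))
  have hOae : ∀ᵐ ω ∂P, ω ∈ O := h.sub' hP
  have hinv : ∀ ω, sh 1 ω ∈ A ∪ Oᶜ → ω ∈ A ∪ Oᶜ := by
    intro ω hω
    by_cases hO : ω ∈ O
    · left
      have hO1 : sh 1 ω ∈ O := by
        intro n m k
        have := hO n m (1 + k)
        rw [sh_sh, sh_sh]
        rwa [add_assoc] at this
      have hA1 : sh 1 ω ∈ A := by
        rcases hω with h1 | h1
        · exact h1
        · exact absurd hO1 h1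
      intro j a
      -- choose a better slope
      obtain ⟨a', ha'⟩ : ∃ a' : ℕ, F 1 (walk ω 1) + |c| + 1 <
          (1 / ((j : ℝ) + 1) - 1 / ((j + 1 : ℕ) + 1)) * a' := by
        have hpos : (0 : ℝ) < 1 / ((j : ℝ) + 1) - 1 / ((j + 1 : ℕ) + 1) := by
          rw [sub_pos]
          apply one_div_lt_one_div_of_lt (by positivity)
          push_cast; linarith
        obtain ⟨a', h'⟩ := exists_nat_gt ((F 1 (walk ω 1) + |c| + 1) /
          (1 / ((j : ℝ) + 1) - 1 / ((j + 1 : ℕ) + 1)))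
        refine ⟨a', ?_⟩
        rw [div_lt_iff₀ hpos] at h'
        linarith
      obtain ⟨n, hn, hlt⟩ := hA1 (j + 1) (max a a')
      refine ⟨n + 1, by have := le_max_left a a'; omega, ?_⟩
      have h1 := hO 1 n 0
      rw [sh_zero, zero_add, add_comm 1 n] at h1
      have h2 : (a' : ℝ) ≤ n := by exact_mod_cast (le_max_right a a').trans hn
      have hpos : (0 : ℝ) ≤ 1 / ((j : ℝ) + 1) - 1 / ((j + 1 : ℕ) + 1) := by
        rw [sub_nonneg]
        apply one_div_le_one_div_of_le (by positivity)
        push_cast; linarith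
      have h3 := mul_le_mul_of_nonneg_left h2 hpos
      have h4 := neg_abs_le c
      have h5 : (0 : ℝ) ≤ 1 / ((j : ℝ) + 1) := by positivity
      push_cast at *
      nlinarith
    · exact Or.inr hO
  rcases hP.zero_one (hAm.union hOm.compl) hinv with h0 | h1
  · have hA0 : P A = 0 := measure_mono_null subset_union_left h0
    filter_upwards [measure_eq_zero_iff_ae_notMem.1 hA0] with ω hω
    simp only [A, mem_ofPred_eq] at hω
    push Not at hω
    obtain ⟨j, a, hja⟩ := hω
    filter_upwards [eventually_ge_atTop a] with n hn
    have h2 := hja n hn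
    have h5 : (0 : ℝ) ≤ 1 / ((j : ℝ) + 1) := by positivity
    have h6 : (0 : ℝ) ≤ n := Nat.cast_nonneg _
    nlinarith
  · exfalso
    have hAe : ∀ᵐ ω ∂P, ω ∈ A := by
      have h2 : ∀ᵐ ω ∂P, ω ∈ A ∪ Oᶜ := by
        rw [← prob_compl_eq_zero_iff (hAm.union hOm.compl)] at h1
        exact mem_ae_iff.2 h1
      filter_upwards [h2, hOae] with ω h3 h4
      rcases h3 with h3 | h3
      · exact h3
      · exact absurd h4 h3
    obtain ⟨j, hj⟩ := exists_nat_one_div_lt hε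
    refine h.no_low hP hγ (c := c + 1 / (j + 1)) (by linarith) ?_
    filter_upwards [hAe] with ω hω
    exact hω j 1

/-- Kingman's subadditive ergodic theorem for random walks. -/
theorem SubProc.kingman (hP : IsRWMeasure p P) (h : SubProc P F) {γ : ℝ}
    (hγ : Tendsto (fun n : ℕ => (∫ ω, F n (walk ω n) ∂P) / n) atTop (𝓝 γ)) :
    ∀ᵐ ω ∂P, ∀ ε : ℝ, 0 < ε → ∀ᶠ n : ℕ in atTop, |F n (walk ω n) - γ * n| ≤ ε * n := by
  have h1 : ∀ᵐ ω ∂P, ∀ j : ℕ, ∀ᶠ n : ℕ in atTop,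
      |F n (walk ω n) - γ * n| ≤ 1 / ((j : ℝ) + 1) * n := by
    rw [ae_all_iff]
    intro j
    have hj : (0 : ℝ) < 1 / ((j : ℝ) + 1) := by positivity
    filter_upwards [h.upper hP hγ hj, h.lower hP hγ hj] with ω hu hl
    filter_upwards [hu, hl] with n a b
    rw [abs_le]
    constructor <;> nlinarith
  filter_upwards [h1] with ω hω ε hε
  obtain ⟨j, hj⟩ := exists_nat_one_div_lt hε
  filter_upwards [hω j] with n hn
  exact hn.trans (mul_le_mul_of_nonneg_right hj.le (Nat.cast_nonneg _))

end Kingman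

/-! ### Part C: drift and entropy processes -/

/-- Length functions on groups. -/
structure IsLen {G : Type*} [Group G] (f : G → ℝ) : Prop where
  nonneg : ∀ x, 0 ≤ f x
  one : f 1 = 0
  mul : ∀ x y, f (x * y) ≤ f x + f y
  inv : ∀ x, f x⁻¹ = f x

/-- Pointwise entropy. -/
def ent {G : Type*} [Group G] (p : G → ℝ≥0∞) (n : ℕ) (x : G) : ℝ := -Real.log (piN p n x).toReal

section Proc
variable {G : Type*} [Group G] [Countable G] [MeasurableSpace G] [DiscreteMeasurableSpace G]
  {p : G → ℝ≥0∞} {P : Measure (ℕ → G)} {f : G → ℝ}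

lemma piN_one (hP : IsRWMeasure p P) (x : G) : piN p 1 x = p x := by
  rw [← hP.law, ← hP.coord]
  congr 1
  ext ω
  simp [walk_succ, walk_zero]

lemma integrable_walk_of (hP : IsRWMeasure p P) (n : ℕ) (F : G → ℝ) (h0 : ∀ x, 0 ≤ F x)
    (h : ∑' x, piN p n x * ENNReal.ofReal (F x) ≠ ∞) : Integrable (fun ω => F (walk ω n)) P := by
  refine ⟨(measurable_Fwalk F n).aestronglyMeasurable, ?_⟩
  rw [hasFiniteIntegral_iff_ofReal (Eventually.of_forall fun ω => h0 _),
    hP.lintegral_walk n (fun x => ENNReal.ofReal (F x))]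
  exact lt_top_iff_ne_top.2 h

lemma drift_proc (hP : IsRWMeasure p P) (hf : IsLen f) (hm : FiniteFirstMoment p f) :
    SubProc P (fun _ x => f x) where
  nonneg _ x := hf.nonneg x
  zero := hf.one
  sub := Eventually.of_forall fun ω n m => by rw [walk_add]; exact hf.mul _ _
  int := by
    refine integrable_walk_of hP 1 f hf.nonneg ?_
    simp only [piN_one hP]
    exact hm

lemma drift_tendsto (hP : IsRWMeasure p P) (hf : IsLen f) (hm : FiniteFirstMoment p f) {l : ℝ}
    (hl : HasDrift p f l) :
    Tendsto (fun n : ℕ => (∫ ω, f (walk ω n) ∂P) / n) atTop (𝓝 l) := by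
  refine hl.congr fun n => ?_
  rw [hP.integral_walk n f ((drift_proc hP hf hm).intN hP n)]
  rfl

lemma plogp_le {x a : ℝ} (hx : 0 ≤ x) : x * -Real.log x ≤ x * a + Real.exp (-a) := by
  rcases hx.eq_or_lt with rfl | hx
  · simp [Real.exp_nonneg]
  have h1 : Real.log (Real.exp (-a) / x) ≤ Real.exp (-a) / x := by
    have := Real.log_le_sub_one_of_pos (show 0 < Real.exp (-a) / x by positivity)
    linarith
  rw [Real.log_div (Real.exp_ne_zero _) hx.ne', Real.log_exp, le_div_iff₀ hx] at h1
  nlinarith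

lemma growth_tsum {G : Type*} {f : G → ℝ} (h0 : ∀ x, 0 ≤ f x) (hg : FinExpGrowth f) :
    ∃ C : ℝ, 0 ≤ C ∧ ∑' x, ENNReal.ofReal (Real.exp (-(C * f x))) ≠ ∞ := by
  obtain ⟨c, hc, hgr⟩ := hg
  refine ⟨c + 1, by positivity, ?_⟩
  have h1 : ∀ x, ENNReal.ofReal (Real.exp (-((c + 1) * f x))) ≤
      ∑' k : ℕ, ({x | f x < k + 1} : Set G).indicator
        (fun _ => ENNReal.ofReal (Real.exp (-((c + 1) * k)))) x := by
    intro x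
    refine le_trans ?_ (ENNReal.le_tsum ⌊f x⌋₊)
    rw [indicator_of_mem (show x ∈ {y | f y < (⌊f x⌋₊ : ℝ) + 1} from Nat.lt_floor_add_one (f x))]
    refine ENNReal.ofReal_le_ofReal (Real.exp_le_exp.2 ?_)
    have := Nat.floor_le (h0 x)
    nlinarith
  have h2 : ∀ k : ℕ, ∑' x, ({x | f x < k + 1} : Set G).indicator
        (fun _ => ENNReal.ofReal (Real.exp (-((c + 1) * k)))) x ≤
      ENNReal.ofReal (c * Real.exp c * Real.exp (-1) ^ k) := by
    intro k
    obtain ⟨hfin, hcard⟩ := hgr (k + 1) (by positivity)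
    rw [← tsum_subtype, ENNReal.tsum_set_const, ← hfin.cast_ncard_eq]
    have e : (((({x | f x < (k : ℝ) + 1} : Set G).ncard : ℕ∞) : ℝ≥0∞)) =
        ENNReal.ofReal (({x | f x < (k : ℝ) + 1} : Set G).ncard : ℝ) := by simp
    rw [e, ← ENNReal.ofReal_mul (by positivity)]
    refine ENNReal.ofReal_le_ofReal ?_
    refine (mul_le_mul_of_nonneg_right hcard (Real.exp_nonneg _)).trans (le_of_eq ?_)
    rw [← Real.exp_nat_mul, mul_assoc, mul_assoc, ← Real.exp_add, ← Real.exp_add]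
    congr 2
    ring
  refine ne_top_of_le_ne_top ?_ (ENNReal.tsum_le_tsum h1)
  rw [ENNReal.tsum_comm]
  refine ne_top_of_le_ne_top ?_ (ENNReal.tsum_le_tsum h2)
  have hs : Summable fun k : ℕ => c * Real.exp c * Real.exp (-1) ^ k :=
    (summable_geometric_of_lt_one (Real.exp_nonneg _) (by
      rw [Real.exp_lt_one_iff]; norm_num)).mul_left _
  exact hs.tsum_ofReal_ne_top

lemma ent_nonneg (hP : IsRWMeasure p P) (n : ℕ) (x : G) : 0 ≤ ent p n x := by
  have h1 : (piN p n x).toReal ≤ 1 := by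
    have := ENNReal.toReal_mono ENNReal.one_ne_top (hP.piN_le_one n x)
    simpa using this
  have := Real.log_nonpos ENNReal.toReal_nonneg h1
  simp only [ent]; linarith

lemma piN_ne_top (hP : IsRWMeasure p P) (n : ℕ) (x : G) : piN p n x ≠ ∞ :=
  ne_top_of_le_ne_top ENNReal.one_ne_top (hP.piN_le_one n x)

lemma piN_toReal_eq (hP : IsRWMeasure p P) {n : ℕ} {x : G} (h : piN p n x ≠ 0) :
    (piN p n x).toReal = Real.exp (-ent p n x) := by
  rw [ent, neg_neg, Real.exp_log (ENNReal.toReal_pos h (piN_ne_top hP n x))]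

lemma piN_eq_ofReal (hP : IsRWMeasure p P) {n : ℕ} {x : G} (h : piN p n x ≠ 0) :
    piN p n x = ENNReal.ofReal (Real.exp (-ent p n x)) := by
  rw [← piN_toReal_eq hP h, ENNReal.ofReal_toReal (piN_ne_top hP n x)]

lemma ae_pos_all (hP : IsRWMeasure p P) :
    ∀ᵐ ω ∂P, ∀ k n, piN p n (walk (sh k ω) n) ≠ 0 :=
  hP.ae_sh (ae_all_iff.2 fun n => hP.ae_pos n)

lemma ent_proc (hP : IsRWMeasure p P) (h0 : ∀ x, 0 ≤ f x) (hg : FinExpGrowth f)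
    (hm : FiniteFirstMoment p f) : SubProc P (ent p) where
  nonneg := ent_nonneg hP
  zero := by simp [ent, piN]
  sub := by
    filter_upwards [ae_pos_all hP] with ω hω n m
    have h1 := hω 0 n
    rw [sh_zero] at h1
    have h2 := hω n m
    have h3 := ENNReal.toReal_mono (piN_ne_top hP _ _)
      (hP.piN_mul_le n m (walk ω n) (walk (sh n ω) m))
    have h4 := ENNReal.toReal_pos h1 (piN_ne_top hP _ _)
    have h5 := ENNReal.toReal_pos h2 (piN_ne_top hP _ _)
    rw [ENNReal.toReal_mul] at h3
    have h6 := Real.log_le_log (by positivity) h3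
    rw [Real.log_mul h4.ne' h5.ne'] at h6
    simp only [ent, walk_add]
    linarith
  int := by
    obtain ⟨C, hC, hsum⟩ := growth_tsum h0 hg
    refine integrable_walk_of hP 1 (ent p 1) (ent_nonneg hP 1) ?_
    have hb : ∀ x, piN p 1 x * ENNReal.ofReal (ent p 1 x) ≤
        ENNReal.ofReal C * (p x * ENNReal.ofReal (f x)) +
          ENNReal.ofReal (Real.exp (-(C * f x))) := by
      intro x
      have e1 : piN p 1 x = ENNReal.ofReal (piN p 1 x).toReal :=
        (ENNReal.ofReal_toReal (piN_ne_top hP _ _)).symm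
      rw [← piN_one hP x]
      have e2 : piN p 1 x * ENNReal.ofReal (ent p 1 x) =
          ENNReal.ofReal ((piN p 1 x).toReal * ent p 1 x) := by
        conv_lhs => rw [e1]
        rw [ENNReal.ofReal_mul ENNReal.toReal_nonneg]
      have e3 : ENNReal.ofReal C * (piN p 1 x * ENNReal.ofReal (f x)) =
          ENNReal.ofReal ((piN p 1 x).toReal * (C * f x)) := by
        conv_lhs => rw [e1]
        rw [ENNReal.ofReal_mul ENNReal.toReal_nonneg, ENNReal.ofReal_mul hC]
        ring
      rw [e2, e3, ← ENNReal.ofReal_add (mul_nonneg ENNReal.toReal_nonneg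
        (mul_nonneg hC (h0 x))) (Real.exp_nonneg _)]
      exact ENNReal.ofReal_le_ofReal (plogp_le ENNReal.toReal_nonneg)
    refine ne_top_of_le_ne_top ?_ (ENNReal.tsum_le_tsum hb)
    rw [ENNReal.tsum_add, ENNReal.tsum_mul_left]
    exact ENNReal.add_ne_top.2 ⟨ENNReal.mul_ne_top ENNReal.ofReal_ne_top hm, hsum⟩

lemma ent_integral (hP : IsRWMeasure p P) (h0 : ∀ x, 0 ≤ f x) (hg : FinExpGrowth f)
    (hm : FiniteFirstMoment p f) (n : ℕ) : ∫ ω, ent p n (walk ω n) ∂P = entropySeq p n := by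
  rw [hP.integral_walk n (ent p n) ((ent_proc hP h0 hg hm).intN hP n), entropySeq]
  refine tsum_congr fun x => ?_
  simp [ent, Real.negMulLog]

lemma ent_tendsto (hP : IsRWMeasure p P) (h0 : ∀ x, 0 ≤ f x) (hg : FinExpGrowth f)
    (hm : FiniteFirstMoment p f) {h : ℝ} (hh : HasEntropy p h) :
    Tendsto (fun n : ℕ => (∫ ω, ent p n (walk ω n) ∂P) / n) atTop (𝓝 h) := by
  refine hh.congr fun n => ?_
  rw [ent_integral hP h0 hg hm]

lemma exists_entropy (hP : IsRWMeasure p P) (h0 : ∀ x, 0 ≤ f x) (hg : FinExpGrowth f)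
    (hm : FiniteFirstMoment p f) : ∃ h, HasEntropy p h := by
  obtain ⟨γ, hγ⟩ := (ent_proc hP h0 hg hm).exists_lim hP
  refine ⟨γ, hγ.congr fun n => ?_⟩
  rw [ent_integral hP h0 hg hm]

end Proc

section Prod
variable {A B : Type*} [Group A] [Countable A] [MeasurableSpace A] [DiscreteMeasurableSpace A]
  [Group B] [Countable B] [MeasurableSpace B] [DiscreteMeasurableSpace B]
  {p : A × B → ℝ≥0∞} {P : Measure (ℕ → A × B)} {f : A → ℝ} {fs : B → ℝ}

/-- First marginal. -/
def mar1 (p : A × B → ℝ≥0∞) : A → ℝ≥0∞ := fun x => ∑' y, p (x, y)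
/-- Second marginal. -/
def mar2 (p : A × B → ℝ≥0∞) : B → ℝ≥0∞ := fun y => ∑' x, p (x, y)


lemma rw1 (hP : IsRWMeasure p P) : IsRWMeasure (mar1 p) (P.map fun ω i => (ω i).1) := by
  refine hP.map (fun g : A × B => g.1) (mar1 p) fun x => ?_
  rw [ENNReal.tsum_prod', mar1, tsum_eq_single x]
  · simp
  · intro x' hx'; simp [hx']

lemma rw2 (hP : IsRWMeasure p P) : IsRWMeasure (mar2 p) (P.map fun ω i => (ω i).2) := by
  refine hP.map (fun g : A × B => g.2) (mar2 p) fun y => ?_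
  rw [ENNReal.tsum_prod', ENNReal.tsum_comm, mar2, tsum_eq_single y]
  · simp
  · intro y' hy'; simp [hy']

lemma walk_fst (ω : ℕ → A × B) (n : ℕ) : walk (fun i => (ω i).1) n = (walk ω n).1 :=
  walk_map (MonoidHom.fst A B) ω n

lemma walk_snd (ω : ℕ → A × B) (n : ℕ) : walk (fun i => (ω i).2) n = (walk ω n).2 :=
  walk_map (MonoidHom.snd A B) ω n

lemma meas_fst : Measurable fun (ω : ℕ → A × B) i => (ω i).1 :=
  measurable_pi_lambda _ fun i => measurable_fst.comp (measurable_pi_apply i)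

lemma meas_snd : Measurable fun (ω : ℕ → A × B) i => (ω i).2 :=
  measurable_pi_lambda _ fun i => measurable_snd.comp (measurable_pi_apply i)

lemma mom1 (hm : FiniteFirstMoment p fun g => max (f g.1) (fs g.2)) :
    FiniteFirstMoment (mar1 p) f := by
  refine ne_top_of_le_ne_top hm ?_
  rw [ENNReal.tsum_prod']
  refine ENNReal.tsum_le_tsum fun x => ?_
  rw [mar1, ← ENNReal.tsum_mul_right]
  exact ENNReal.tsum_le_tsum fun y => mul_le_mul_right (ENNReal.ofReal_le_ofReal (le_max_left _ _)) _

lemma mom2 (hm : FiniteFirstMoment p fun g => max (f g.1) (fs g.2)) :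
    FiniteFirstMoment (mar2 p) fs := by
  refine ne_top_of_le_ne_top hm ?_
  rw [ENNReal.tsum_prod', ENNReal.tsum_comm]
  refine ENNReal.tsum_le_tsum fun x => ?_
  rw [mar2, ← ENNReal.tsum_mul_right]
  exact ENNReal.tsum_le_tsum fun y => mul_le_mul_right (ENNReal.ofReal_le_ofReal (le_max_right _ _)) _

lemma growth_prod (hg : FinExpGrowth f) (hgs : FinExpGrowth fs) :
    FinExpGrowth fun g : A × B => max (f g.1) (fs g.2) := by
  obtain ⟨c, hc, h⟩ := hg
  obtain ⟨d, hd, h'⟩ := hgs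
  refine ⟨c * d + c + d, by positivity, fun r hr => ?_⟩
  have e : {x : A × B | max (f x.1) (fs x.2) < r} = {x | f x < r} ×ˢ {y | fs y < r} := by
    ext x; simp
  rw [e]
  refine ⟨(h r hr).1.prod (h' r hr).1, ?_⟩
  rw [Set.ncard_prod]
  push_cast
  have h1 := mul_le_mul (h r hr).2 (h' r hr).2 (by positivity) (by positivity)
  refine h1.trans ?_
  have e2 : c * Real.exp (c * r) * (d * Real.exp (d * r)) = c * d * Real.exp ((c + d) * r) := by
    rw [add_mul, Real.exp_add]; ring
  rw [e2]
  gcongr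
  · nlinarith
  · nlinarith [mul_pos hc hd]

lemma entropy_le (hP : IsRWMeasure p P) (h0 : ∀ x, 0 ≤ f x) (h0s : ∀ x, 0 ≤ fs x)
    (hg : FinExpGrowth f) (hgs : FinExpGrowth fs)
    (hm : FiniteFirstMoment p fun g => max (f g.1) (fs g.2)) {hπ hμ hs : ℝ}
    (e1 : HasEntropy p hπ) (e2 : HasEntropy (mar1 p) hμ) (e3 : HasEntropy (mar2 p) hs) :
    hπ ≤ hμ + hs := by
  have := hP.1
  have hP1 := rw1 hP
  have hP2 := rw2 hP
  have key : ∀ n, entropySeq p n ≤ entropySeq (mar1 p) n + entropySeq (mar2 p) n := by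
    intro n
    have i1 := (ent_proc hP1 h0 hg (mom1 hm)).intN hP1 n
    have i2 := (ent_proc hP2 h0s hgs (mom2 hm)).intN hP2 n
    have i3 := (ent_proc hP (fun g => (h0 g.1).trans (le_max_left _ _)) (growth_prod hg hgs)
      hm).intN hP n
    have j1 : Integrable (fun ω => ent (mar1 p) n (walk ω n).1) P := by
      have := i1.comp_measurable meas_fst
      simpa [Function.comp_def, walk_fst] using this
    have j2 : Integrable (fun ω => ent (mar2 p) n (walk ω n).2) P := by
      have := i2.comp_measurable meas_snd
      simpa [Function.comp_def, walk_snd] using this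
    have k1 : ∫ ω, ent (mar1 p) n (walk ω n).1 ∂P = entropySeq (mar1 p) n := by
      rw [← ent_integral hP1 h0 hg (mom1 hm), integral_map meas_fst.aemeasurable
        (measurable_Fwalk _ n).aestronglyMeasurable]
      simp only [walk_fst]
    have k2 : ∫ ω, ent (mar2 p) n (walk ω n).2 ∂P = entropySeq (mar2 p) n := by
      rw [← ent_integral hP2 h0s hgs (mom2 hm), integral_map meas_snd.aemeasurable
        (measurable_Fwalk _ n).aestronglyMeasurable]
      simp only [walk_snd]
    have k3 := ent_integral hP (fun g => (h0 g.1).trans (le_max_left _ _)) (growth_prod hg hgs)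
      hm n
    let R : A × B → ℝ := fun g => (piN (mar1 p) n g.1).toReal * (piN (mar2 p) n g.2).toReal /
      (piN p n g).toReal
    have hR0 : ∀ g, 0 ≤ R g := fun g => by positivity
    have hRle : ∑' g, piN p n g * ENNReal.ofReal (R g) ≤ 1 := by
      have hb : ∀ g, piN p n g * ENNReal.ofReal (R g) ≤
          piN (mar1 p) n g.1 * piN (mar2 p) n g.2 := by
        intro g
        by_cases hz : piN p n g = 0
        · simp [hz]
        · have hpos := ENNReal.toReal_pos hz (piN_ne_top hP n g)
          have e : piN p n g = ENNReal.ofReal (piN p n g).toReal :=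
            (ENNReal.ofReal_toReal (piN_ne_top hP n g)).symm
          rw [e, ← ENNReal.ofReal_mul ENNReal.toReal_nonneg]
          simp only [R]
          rw [mul_div_cancel₀ _ hpos.ne', ENNReal.ofReal_mul ENNReal.toReal_nonneg,
            ENNReal.ofReal_toReal (piN_ne_top hP1 n _), ENNReal.ofReal_toReal (piN_ne_top hP2 n _)]
      refine (ENNReal.tsum_le_tsum hb).trans ?_
      rw [ENNReal.tsum_prod']
      simp only [ENNReal.tsum_mul_left, hP2.tsum_piN, mul_one, hP1.tsum_piN, le_refl]
    have iR : Integrable (fun ω => R (walk ω n)) P :=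
      integrable_walk_of hP n R hR0 (ne_top_of_le_ne_top ENNReal.one_ne_top hRle)
    have hRint : ∫ ω, R (walk ω n) ∂P ≤ 1 := by
      rw [integral_eq_lintegral_of_nonneg_ae (Eventually.of_forall fun ω => hR0 _) iR.1,
        hP.lintegral_walk n (fun x => ENNReal.ofReal (R x))]
      have := ENNReal.toReal_mono ENNReal.one_ne_top hRle
      simpa using this
    have hpt : ∀ᵐ ω ∂P, ent p n (walk ω n) ≤ ent (mar1 p) n (walk ω n).1 +
        ent (mar2 p) n (walk ω n).2 + (R (walk ω n) - 1) := by
      have q1 : ∀ᵐ ω ∂P, piN (mar1 p) n (walk ω n).1 ≠ 0 := by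
        have := ae_of_ae_map meas_fst.aemeasurable (hP1.ae_pos n)
        simpa [walk_fst] using this
      have q2 : ∀ᵐ ω ∂P, piN (mar2 p) n (walk ω n).2 ≠ 0 := by
        have := ae_of_ae_map meas_snd.aemeasurable (hP2.ae_pos n)
        simpa [walk_snd] using this
      filter_upwards [hP.ae_pos n, q1, q2] with ω z1 z2 z3
      have p1 := ENNReal.toReal_pos z1 (piN_ne_top hP n _)
      have p2 := ENNReal.toReal_pos z2 (piN_ne_top hP1 n _)
      have p3 := ENNReal.toReal_pos z3 (piN_ne_top hP2 n _)
      have := Real.log_le_sub_one_of_pos (show 0 < R (walk ω n) by positivity)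
      simp only [R] at this ⊢
      rw [Real.log_div (by positivity) p1.ne', Real.log_mul p2.ne' p3.ne'] at this
      simp only [ent]
      linarith
    have hI : Integrable (fun ω => ent (mar1 p) n (walk ω n).1 + ent (mar2 p) n (walk ω n).2) P :=
      j1.add j2
    have hI2 : Integrable (fun ω => R (walk ω n) - 1) P := iR.sub (integrable_const _)
    have := integral_mono_ae i3 (hI.add hI2) hpt
    simp only [Pi.add_apply] at this
    rw [integral_add hI hI2, integral_add j1 j2, integral_sub iR (integrable_const _), k1, k2, k3]
      at this
    simp at this
    linarith
  refine le_of_tendsto_of_tendsto' e1 (e2.add e3) fun n => ?_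
  rw [← add_div]
  exact div_le_div_of_nonneg_right (key n) (Nat.cast_nonneg _)

end Prod

/-! ### Part D: positivity of the drift -/

section Drift
variable {G : Type*} [Group G] [Countable G] [MeasurableSpace G] [DiscreteMeasurableSpace G]
  {p : G → ℝ≥0∞} {P : Measure (ℕ → G)} {f : G → ℝ}

lemma ae_eventually_of_le_geom {Ω : Type*} [MeasurableSpace Ω] {P : Measure Ω} {E : ℕ → Set Ω}
    {C b : ℝ} (hb : 0 < b) (h : ∀ᶠ n : ℕ in atTop, P (E n) ≤ ENNReal.ofReal (C * Real.exp (-(b * n))))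
    : ∀ᵐ ω ∂P, ∀ᶠ n in atTop, ω ∉ E n := by
  obtain ⟨N, hN⟩ := eventually_atTop.1 h
  have hs : Summable fun n : ℕ => C * Real.exp (-(b * n)) := by
    refine Summable.mul_left _ ?_
    have := summable_geometric_of_lt_one (Real.exp_nonneg (-b)) (by
      rw [Real.exp_lt_one_iff]; linarith)
    refine this.congr fun n => ?_
    rw [← Real.exp_nat_mul]; congr 1; ring
  have h1 : ∑' n, P (E (n + N)) ≠ ∞ := by
    refine ne_top_of_le_ne_top ?_ (ENNReal.tsum_le_tsum fun n => hN (n + N) (by omega))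
    exact ((summable_nat_add_iff N).2 hs).tsum_ofReal_ne_top
  have h2 := measure_setOfPred_frequently_eq_zero (p := fun n ω => ω ∈ E (n + N)) h1
  have h3 : ∀ᵐ ω ∂P, ¬ ∃ᶠ n in atTop, ω ∈ E (n + N) := measure_eq_zero_iff_ae_notMem.1 h2
  filter_upwards [h3] with ω hω
  rw [not_frequently] at hω
  obtain ⟨M, hM⟩ := eventually_atTop.1 hω
  filter_upwards [eventually_ge_atTop (M + N)] with n hn
  have := hM (n - N) (by omega)
  rwa [show n - N + N = n by omega] at this

lemma growth_bound {G : Type*} {f : G → ℝ} (hg : FinExpGrowth f) : ∃ c : ℝ, 0 < c ∧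
    ∀ r : ℝ, 0 ≤ r → {x : G | f x ≤ r}.Finite ∧
      ({x : G | f x ≤ r}.ncard : ℝ) ≤ c * Real.exp (c * r) := by
  obtain ⟨c, hc, h⟩ := hg
  refine ⟨c * Real.exp c, by positivity, fun r hr => ?_⟩
  obtain ⟨h1, h2⟩ := h (r + 1) (by linarith)
  have hsub : {x : G | f x ≤ r} ⊆ {x : G | f x < r + 1} := fun x hx => by
    simp only [mem_ofPred_eq] at hx ⊢; linarith
  refine ⟨h1.subset hsub, ?_⟩
  have h3 : ({x : G | f x ≤ r}.ncard : ℝ) ≤ ({x : G | f x < r + 1}.ncard : ℝ) := by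
    exact_mod_cast Set.ncard_le_ncard hsub h1
  refine (h3.trans h2).trans ?_
  rw [mul_add, mul_one, Real.exp_add, mul_assoc, mul_comm (Real.exp c)]
  have h4 : c * r ≤ c * Real.exp c * r := by
    have := Real.one_le_exp hc.le
    have h5 : c * 1 ≤ c * Real.exp c := by gcongr
    nlinarith
  have := Real.exp_le_exp.2 h4
  gcongr

lemma entropy_zero_of_drift (hP : IsRWMeasure p P) (hf : IsLen f) (hg : FinExpGrowth f)
    (hm : FiniteFirstMoment p f) {h : ℝ} (hh : HasEntropy p h) (hl : HasDrift p f 0) :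
    h ≤ 0 := by
  by_contra hpos
  push Not at hpos
  have := hP.1
  obtain ⟨c, hc, hgr⟩ := growth_bound hg
  obtain ⟨ε, hε, hε2⟩ : ∃ ε : ℝ, 0 < ε ∧ (c + 1) * ε = h / 2 :=
    ⟨h / (2 * (c + 1)), by positivity, by field_simp⟩
  have a1 := (drift_proc hP hf hm).kingman hP (drift_tendsto hP hf hm hl)
  have a2 := (ent_proc hP hf.nonneg hg hm).kingman hP (ent_tendsto hP hf.nonneg hg hm hh)
  let E : ℕ → Set (ℕ → G) := fun n => {ω | f (walk ω n) ≤ ε * n ∧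
    piN p n (walk ω n) ≤ ENNReal.ofReal (Real.exp (-((h - ε) * n)))}
  have hE : ∀ n, P (E n) ≤ ENNReal.ofReal (c * Real.exp (-(h / 2 * n))) := by
    intro n
    obtain ⟨g1, g2⟩ := hgr (ε * n) (by positivity)
    have hsub : E n ⊆ ⋃ x ∈ g1.toFinset, {ω | walk ω n = x ∧ piN p n x ≤
        ENNReal.ofReal (Real.exp (-((h - ε) * n)))} := by
      intro ω hω
      simp only [mem_iUnion, Set.Finite.mem_toFinset, mem_ofPred_eq, exists_prop]
      exact ⟨_, hω.1, rfl, hω.2⟩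
    refine (measure_mono hsub).trans ((measure_biUnion_finset_le _ _).trans ?_)
    have hb : ∀ x ∈ g1.toFinset, P {ω | walk ω n = x ∧ piN p n x ≤
        ENNReal.ofReal (Real.exp (-((h - ε) * n)))} ≤
        ENNReal.ofReal (Real.exp (-((h - ε) * n))) := by
      intro x _
      by_cases hx : piN p n x ≤ ENNReal.ofReal (Real.exp (-((h - ε) * n)))
      · refine le_trans (measure_mono fun ω hω => hω.1) ((hP.law n x).le.trans hx)
      · simp [hx]
    refine (Finset.sum_le_sum hb).trans ?_
    rw [Finset.sum_const, nsmul_eq_mul, ← Set.ncard_eq_toFinset_card _ g1]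
    rw [show ((({x : G | f x ≤ ε * n}.ncard : ℕ)) : ℝ≥0∞) =
      ENNReal.ofReal ({x : G | f x ≤ ε * n}.ncard : ℝ) by simp, ← ENNReal.ofReal_mul (by positivity)]
    refine ENNReal.ofReal_le_ofReal ((mul_le_mul_of_nonneg_right g2 (Real.exp_nonneg _)).trans ?_)
    rw [mul_assoc, ← Real.exp_add]
    refine le_of_eq ?_
    congr 2
    linear_combination (n : ℝ) * hε2
  have a3 := ae_eventually_of_le_geom (show 0 < h / 2 by linarith) (Eventually.of_forall hE)
  obtain ⟨ω, b1, b2, b3, b4⟩ := (a1.and (a2.and (a3.and (ae_pos_all hP)))).exists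
  obtain ⟨n, c1, c2, c3⟩ := ((b1 ε hε).and ((b2 ε hε).and b3)).exists
  apply c3
  have c4 := b4 0 n
  rw [sh_zero] at c4
  rw [abs_le] at c1 c2
  refine ⟨by linarith, ?_⟩
  rw [piN_eq_ofReal hP c4]
  exact ENNReal.ofReal_le_ofReal (Real.exp_le_exp.2 (by linarith))

lemma lint_joint (hP : IsRWMeasure p P) (m : ℕ) (K : G → G → ℝ≥0∞) :
    ∫⁻ ω, K (walk ω 1) (walk (sh 1 ω) m) ∂P = ∑' g, ∑' y, p g * piN p m y * K g y := by
  have hmeas : Measurable fun ω : ℕ → G => (walk ω 1, walk (sh 1 ω) m) :=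
    (measurable_walk 1).prodMk ((measurable_walk m).comp (measurable_sh 1))
  have h1 : ∫⁻ ω, K (walk ω 1) (walk (sh 1 ω) m) ∂P =
      ∫⁻ x : G × G, K x.1 x.2 ∂(P.map fun ω => (walk ω 1, walk (sh 1 ω) m)) :=
    (lintegral_map (f := fun x : G × G => K x.1 x.2) (Measurable.of_discrete) hmeas).symm
  rw [h1, lintegral_countable', ENNReal.tsum_prod']
  refine tsum_congr fun g => tsum_congr fun y => ?_
  rw [Measure.map_apply hmeas (MeasurableSet.of_discrete), ← piN_one hP g, ← hP.joint, mul_comm]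
  congr 2
  ext ω; simp

lemma psi_ineq (Z η : ℝ) (hη : 0 < η) :
    max (1 - Real.exp (-Z)) 0 ≤ η + (Z + Real.exp (-Z) - 1) / (2 * η) := by
  have h1 := Real.add_one_le_exp (-Z)
  have hd : 0 ≤ (Z + Real.exp (-Z) - 1) / (2 * η) := div_nonneg (by linarith) (by positivity)
  refine max_le ?_ (by linarith)
  by_cases hZ : Z ≤ 0
  · have := Real.one_le_exp (show 0 ≤ -Z by linarith)
    linarith
  push Not at hZ
  set u := 1 - Real.exp (-Z) with hu
  have hu0 : 0 ≤ u := by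
    have := Real.exp_le_one_iff.2 (show -Z ≤ 0 by linarith)
    linarith
  have hu1 : u < 1 := by have := Real.exp_pos (-Z); linarith
  -- Z ≥ u + u^2/2
  have hZu : u + u ^ 2 / 2 ≤ Z := by
    have hs := Real.hasSum_pow_div_log_of_abs_lt_one (abs_lt.2 ⟨by linarith, hu1⟩)
    have := sum_le_hasSum (Finset.range 2) (fun i _ => by positivity) hs
    rw [show 1 - u = Real.exp (-Z) by rw [hu]; ring, Real.log_exp, neg_neg] at this
    simp [Finset.sum_range_succ] at this
    norm_num at this
    linarith
  have hk : u ^ 2 / 2 ≤ Z + Real.exp (-Z) - 1 := by rw [hu] at hZu ⊢; linarith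
  have : u ≤ η + (u ^ 2 / 2) / (2 * η) := by
    have : η + (u ^ 2 / 2) / (2 * η) - u = (u - 2 * η) ^ 2 / (4 * η) := by field_simp; ring
    have h4 : 0 ≤ (u - 2 * η) ^ 2 / (4 * η) := by positivity
    linarith
  refine this.trans ?_
  gcongr

/-- Cesàro averages of the laws of the walk. -/
def avg (P : Measure (ℕ → G)) (N : ℕ) (A : Set G) : ℝ :=
  (∑ m ∈ Finset.range N, P.real {ω | walk ω m ∈ A}) / N

lemma measurableSet_walk_mem (m : ℕ) (A : Set G) : MeasurableSet {ω : ℕ → G | walk ω m ∈ A} :=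
  measurable_walk m (MeasurableSet.of_discrete (s := A))

lemma measurable_joint (m : ℕ) (K : G → G → ℝ) :
    Measurable fun ω : ℕ → G => K (walk ω 1) (walk (sh 1 ω) m) := by
  have hmeas : Measurable fun ω : ℕ → G => (walk ω 1, walk (sh 1 ω) m) :=
    (measurable_walk 1).prodMk ((measurable_walk m).comp (measurable_sh 1))
  have h2 : Measurable fun x : G × G => K x.1 x.2 := Measurable.of_discrete
  exact h2.comp hmeas

lemma one_step (hP : IsRWMeasure p P) (h0 : ∀ x, 0 ≤ f x) (hg : FinExpGrowth f)
    (hm : FiniteFirstMoment p f) (g : G) (A : Set G) (m : ℕ) {η : ℝ} (hη : 0 < η) :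
    (p g).toReal * P.real {ω | g * walk ω m ∈ A} ≤ (p g).toReal * P.real {ω | walk ω (m + 1) ∈ A} +
      η + (entropySeq p (m + 1) - entropySeq p m) / (2 * η) := by
  have := hP.1
  let R : G → G → ℝ := fun g y => (piN p (m + 1) (g * y)).toReal / (piN p m y).toReal
  let S : Set (ℕ → G) := {ω | walk ω 1 = g ∧ walk ω (m + 1) ∈ A}
  have hSm : MeasurableSet S :=
    (measurable_walk 1 (MeasurableSet.of_discrete (s := {g}))).inter (measurableSet_walk_mem _ A)
  have hR0 : ∀ g y, 0 ≤ R g y := fun g y => by positivity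
  have hwalk : ∀ ω : ℕ → G, walk ω (m + 1) = walk ω 1 * walk (sh 1 ω) m := fun ω => by
    rw [add_comm, walk_add]
  have hRm : Measurable fun ω : ℕ → G => R (walk ω 1) (walk (sh 1 ω) m) :=
    measurable_joint m R
  have hRw : ∀ g y, piN p m y * ENNReal.ofReal (R g y) ≤ piN p (m + 1) (g * y) := by
    intro g y
    by_cases hz : piN p m y = 0
    · simp [hz]
    · have hpos := ENNReal.toReal_pos hz (piN_ne_top hP m y)
      have e : piN p m y = ENNReal.ofReal (piN p m y).toReal :=
        (ENNReal.ofReal_toReal (piN_ne_top hP m y)).symm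
      rw [e, ← ENNReal.ofReal_mul ENNReal.toReal_nonneg]
      simp only [R]
      rw [mul_div_cancel₀ _ hpos.ne', ENNReal.ofReal_toReal (piN_ne_top hP _ _)]
  have hsumL : ∀ g : G, ∑' y, piN p (m + 1) (g * y) = 1 := fun g => by
    rw [← hP.tsum_piN (m + 1)]
    exact (Equiv.mulLeft g).tsum_eq (piN p (m + 1))
  have hp1 : ∑' g, p g = 1 := by
    rw [← hP.tsum_piN 1]; exact tsum_congr fun x => (piN_one hP x).symm
  have hRlint : ∫⁻ ω, ENNReal.ofReal (R (walk ω 1) (walk (sh 1 ω) m)) ∂P ≤ 1 := by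
    rw [lint_joint hP m (fun g y => ENNReal.ofReal (R g y))]
    calc _ ≤ ∑' g, ∑' y, p g * piN p (m + 1) (g * y) := by
          refine ENNReal.tsum_le_tsum fun g => ENNReal.tsum_le_tsum fun y => ?_
          rw [mul_assoc]
          exact mul_le_mul_right (hRw g y) _
      _ = 1 := by simp only [ENNReal.tsum_mul_left, hsumL, mul_one, hp1]
  have hRint : Integrable (fun ω => R (walk ω 1) (walk (sh 1 ω) m)) P := by
    refine ⟨hRm.aestronglyMeasurable, ?_⟩
    rw [hasFiniteIntegral_iff_ofReal (Eventually.of_forall fun ω => hR0 _ _)]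
    exact lt_of_le_of_lt hRlint ENNReal.one_lt_top
  have hRint1 : ∫ ω, R (walk ω 1) (walk (sh 1 ω) m) ∂P ≤ 1 := by
    rw [integral_eq_lintegral_of_nonneg_ae (Eventually.of_forall fun ω => hR0 _ _) hRint.1]
    have := ENNReal.toReal_mono ENNReal.one_ne_top hRlint
    simpa using this
  have hRS : ∫ ω in S, R (walk ω 1) (walk (sh 1 ω) m) ∂P ≤
      (p g).toReal * P.real {ω | walk ω (m + 1) ∈ A} := by
    rw [integral_eq_lintegral_of_nonneg_ae (Eventually.of_forall fun ω => hR0 _ _)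
      hRint.1.restrict, ← lintegral_indicator hSm, Measure.real, ← ENNReal.toReal_mul]
    refine ENNReal.toReal_mono (ENNReal.mul_ne_top ?_ (measure_ne_top _ _)) ?_
    · rw [← piN_one hP]; exact piN_ne_top hP _ _
    have e : ∀ ω, S.indicator (fun ω => ENNReal.ofReal (R (walk ω 1) (walk (sh 1 ω) m))) ω =
        (fun g' y => if g' = g ∧ g' * y ∈ A then ENNReal.ofReal (R g' y) else 0) (walk ω 1)
          (walk (sh 1 ω) m) := by
      intro ω
      simp only [indicator, S, mem_ofPred_eq, hwalk]
    simp only [e]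
    rw [lint_joint hP m (fun g' y => if g' = g ∧ g' * y ∈ A then ENNReal.ofReal (R g' y) else 0),
      tsum_eq_single g (by intro g' hg'; simp [hg'])]
    have hA : P {ω | walk ω (m + 1) ∈ A} = ∑' y, if g * y ∈ A then piN p (m + 1) (g * y) else 0 := by
      refine Eq.trans ?_ ((Equiv.mulLeft g).tsum_eq
        (fun y => if y ∈ A then piN p (m + 1) y else 0)).symm
      rw [tsum_walk_fiber P (m + 1)]
      refine tsum_congr fun y => ?_
      by_cases hy : y ∈ A
      · rw [if_pos hy, ← hP.law]
        congr 1; ext ω; simp only [mem_inter_iff, mem_ofPred_eq]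
        constructor
        · exact fun h => h.1
        · intro h; exact ⟨h, h ▸ hy⟩
      · rw [if_neg hy]
        convert measure_empty (μ := P)
        ext ω; simp only [mem_inter_iff, mem_ofPred_eq, mem_empty_iff_false, iff_false]
        rintro ⟨rfl, h⟩; exact hy h
    rw [hA, ← ENNReal.tsum_mul_left]
    refine ENNReal.tsum_le_tsum fun y => ?_
    by_cases hy : g * y ∈ A
    · simp only [hy, and_self, if_true]
      rw [mul_assoc]
      exact mul_le_mul_right (hRw g y) _
    · simp [hy]
  have hSP : P.real S = (p g).toReal * P.real {ω | g * walk ω m ∈ A} := by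
    have hB : MeasurableSet {ω : ℕ → G | g * walk ω m ∈ A} := by
      have := measurableSet_walk_mem m {x | g * x ∈ A}
      exact this
    have h1 := hP.indep (detBy_walk 1 {g}) hB
    have e : S = {ω : ℕ → G | walk ω 1 ∈ ({g} : Set G)} ∩ sh 1 ⁻¹' {ω | g * walk ω m ∈ A} := by
      ext ω
      simp only [S, hwalk, mem_inter_iff, mem_ofPred_eq, mem_singleton_iff, mem_preimage]
      constructor
      · rintro ⟨a, b⟩; exact ⟨a, by rwa [a] at b⟩
      · rintro ⟨a, b⟩; exact ⟨a, by rwa [a]⟩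
    have h2 : P {ω : ℕ → G | walk ω 1 ∈ ({g} : Set G)} = p g := by
      rw [← piN_one hP, ← hP.law]; rfl
    rw [Measure.real, e, h1, h2, ENNReal.toReal_mul]; rfl
  -- the process Z
  have hproc := ent_proc hP h0 hg hm
  let Z : (ℕ → G) → ℝ := fun ω => ent p (m + 1) (walk ω (m + 1)) - ent p m (walk (sh 1 ω) m)
  have hi1 := hproc.intN hP (m + 1)
  have hi2 : Integrable (fun ω => ent p m (walk (sh 1 ω) m)) P :=
    (hP.mp_sh 1).integrable_comp_of_integrable (hproc.intN hP m)
  have hZint : Integrable Z P := hi1.sub hi2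
  have hZ : ∫ ω, Z ω ∂P = entropySeq p (m + 1) - entropySeq p m := by
    simp only [Z]
    rw [integral_sub hi1 hi2, ent_integral hP h0 hg hm,
      integral_sh hP 1 (fun ω => ent p m (walk ω m)) (measurable_Fwalk _ m),
      ent_integral hP h0 hg hm]
  have hpt : ∀ᵐ ω ∂P, max (1 - R (walk ω 1) (walk (sh 1 ω) m)) 0 ≤
      η + (Z ω + R (walk ω 1) (walk (sh 1 ω) m) - 1) / (2 * η) := by
    filter_upwards [ae_pos_all hP] with ω hω
    have h1 := hω 0 (m + 1)
    rw [sh_zero] at h1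
    have h2 := hω 1 m
    have e : R (walk ω 1) (walk (sh 1 ω) m) = Real.exp (-Z ω) := by
      simp only [R, Z]
      rw [← hwalk, piN_toReal_eq hP h1, piN_toReal_eq hP h2, ← Real.exp_sub]
      congr 1; ring
    rw [e]
    exact psi_ineq _ _ hη
  have hI1 : Integrable (fun ω => 1 - R (walk ω 1) (walk (sh 1 ω) m)) P :=
    (integrable_const _).sub hRint
  have hI2 : Integrable (fun ω => max (1 - R (walk ω 1) (walk (sh 1 ω) m)) 0) P := hI1.pos_part
  have hI3 : Integrable (fun ω => Z ω + R (walk ω 1) (walk (sh 1 ω) m) - 1) P :=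
    (hZint.add hRint).sub (integrable_const _)
  have q1 : ∫ ω in S, (1 - R (walk ω 1) (walk (sh 1 ω) m)) ∂P ≤
      ∫ ω, max (1 - R (walk ω 1) (walk (sh 1 ω) m)) 0 ∂P := by
    refine (integral_mono hI1.integrableOn hI2.integrableOn fun ω => le_max_left _ _).trans ?_
    exact setIntegral_le_integral hI2 (Eventually.of_forall fun ω => le_max_right _ _)
  have q2 := integral_mono_ae hI2 ((integrable_const η).add (hI3.div_const (2 * η))) hpt
  simp only [Pi.add_apply] at q2
  have hI4 : Integrable (fun ω => Z ω + R (walk ω 1) (walk (sh 1 ω) m)) P := hZint.add hRint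
  rw [integral_add (integrable_const η) (hI3.div_const _), integral_div, integral_sub hI4
    (integrable_const _), integral_add hZint hRint, hZ] at q2
  rw [integral_sub (integrable_const _).integrableOn hRint.integrableOn] at q1
  simp at q1 q2
  have q3 : (entropySeq p (m + 1) - entropySeq p m +
      ∫ ω, R (walk ω 1) (walk (sh 1 ω) m) ∂P - 1) / (2 * η) ≤
      (entropySeq p (m + 1) - entropySeq p m) / (2 * η) := by
    exact div_le_div_of_nonneg_right (by linarith) (by positivity)
  rw [hSP] at q1
  linarith

lemma avg_compl (hP : IsRWMeasure p P) {N : ℕ} (hN : 1 ≤ N) (A : Set G) :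
    avg P N Aᶜ = 1 - avg P N A := by
  have := hP.1
  have hN' : (0 : ℝ) < N := by exact_mod_cast hN
  have e : ∀ m, P.real {ω | walk ω m ∈ Aᶜ} = 1 - P.real {ω | walk ω m ∈ A} := fun m => by
    rw [← probReal_compl_eq_one_sub (measurableSet_walk_mem m A)]; rfl
  simp only [avg, e, Finset.sum_sub_distrib, Finset.sum_const, Finset.card_range]
  simp
  field_simp

lemma avg_nonneg (N : ℕ) (A : Set G) : 0 ≤ avg P N A := by
  unfold avg; positivity

lemma avg_mono (hP : IsRWMeasure p P) (N : ℕ) {A B : Set G} (h : A ⊆ B) : avg P N A ≤ avg P N B := by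
  have := hP.1
  unfold avg
  gcongr
  exact measure_ne_top _ _

lemma avg_union_le (hP : IsRWMeasure p P) (N : ℕ) (A B : Set G) :
    avg P N (A ∪ B) ≤ avg P N A + avg P N B := by
  have := hP.1
  unfold avg
  rw [← add_div, ← Finset.sum_add_distrib]
  gcongr with m hm
  exact measureReal_union_le {ω | walk ω m ∈ A} {ω | walk ω m ∈ B}

lemma avg_union (hP : IsRWMeasure p P) (N : ℕ) {A B : Set G} (h : Disjoint A B) :
    avg P N (A ∪ B) = avg P N A + avg P N B := by
  have := hP.1
  unfold avg
  rw [← add_div, ← Finset.sum_add_distrib]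
  congr 1
  refine Finset.sum_congr rfl fun m _ => ?_
  exact measureReal_union (s₁ := {ω : ℕ → G | walk ω m ∈ A}) (s₂ := {ω | walk ω m ∈ B})
    (Set.disjoint_left.2 fun ω h1 h2 => Set.disjoint_left.1 h h1 h2) (measurableSet_walk_mem m B)

lemma avg_univ (hP : IsRWMeasure p P) {N : ℕ} (hN : 1 ≤ N) : avg P N (univ : Set G) = 1 := by
  have := avg_compl hP hN (∅ : Set G)
  rw [compl_empty] at this
  rw [this]
  simp [avg]

lemma avg_upper (hP : IsRWMeasure p P) (h0 : ∀ x, 0 ≤ f x) (hg : FinExpGrowth f)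
    (hm : FiniteFirstMoment p f) (hh : HasEntropy p 0) {g : G} (hpg : p g ≠ 0) (A : Set G)
    {ε : ℝ} (hε : 0 < ε) : ∀ᶠ N in atTop, avg P N {x | g * x ∈ A} ≤ avg P N A + ε := by
  have := hP.1
  have hq : 0 < (p g).toReal := ENNReal.toReal_pos hpg (by
    rw [← piN_one hP]; exact piN_ne_top hP _ _)
  set q := (p g).toReal with hqdef
  obtain ⟨η, hη⟩ : ∃ η, η = q * ε / 4 := ⟨_, rfl⟩
  have hη0 : 0 < η := by rw [hη]; positivity
  have hH0 : entropySeq p 0 = 0 := by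
    rw [entropySeq]
    have : ∀ x : G, Real.negMulLog (piN p 0 x).toReal = 0 := fun x => by
      simp only [piN]; split_ifs <;> simp
    simp [this]
  have l1 : Tendsto (fun N : ℕ => (entropySeq p N / N) / (2 * η)) atTop (𝓝 0) := by
    have := hh.div_const (2 * η)
    simpa using this
  filter_upwards [l1.eventually_lt_const hη0,
    (tendsto_const_div_atTop_nhds_zero_nat q).eventually_lt_const hη0, eventually_ge_atTop 1]
    with N h1 h2 hN
  have hN' : (0 : ℝ) < N := by exact_mod_cast hN
  have hsum := Finset.sum_le_sum fun m (_ : m ∈ Finset.range N) => one_step hP h0 hg hm g A m hη0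
  have htel : ∑ m ∈ Finset.range N, (entropySeq p (m + 1) - entropySeq p m) = entropySeq p N := by
    rw [Finset.sum_range_sub, hH0, sub_zero]
  rw [Finset.sum_add_distrib, Finset.sum_add_distrib, ← Finset.mul_sum, ← Finset.mul_sum,
    ← Finset.sum_div, htel, Finset.sum_const, Finset.card_range, nsmul_eq_mul] at hsum
  have hshift : ∑ m ∈ Finset.range N, P.real {ω | walk ω (m + 1) ∈ A} ≤
      ∑ m ∈ Finset.range N, P.real {ω | walk ω m ∈ A} + 1 := by
    have e1 := Finset.sum_range_succ (fun m => P.real {ω | walk ω m ∈ A}) N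
    have e2 := Finset.sum_range_succ' (fun m => P.real {ω | walk ω m ∈ A}) N
    have e3 : P.real {ω | walk ω N ∈ A} ≤ 1 := measureReal_le_one
    have e4 : 0 ≤ P.real {ω | walk ω 0 ∈ A} := measureReal_nonneg
    linarith
  have hgoal : q * avg P N {x | g * x ∈ A} ≤ q * (avg P N A + ε) := by
    have e1 : q * avg P N {x | g * x ∈ A} * N =
        q * ∑ m ∈ Finset.range N, P.real {ω | g * walk ω m ∈ A} := by
      simp only [avg, mem_ofPred_eq]; field_simp
    have e2 : avg P N A * N = ∑ m ∈ Finset.range N, P.real {ω | walk ω m ∈ A} := by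
      simp only [avg]; field_simp
    rw [← e2] at hshift
    have e3 : entropySeq p N / (2 * η) ≤ η * N := by
      rw [div_div, mul_comm (N : ℝ), ← div_div, div_lt_iff₀ hN'] at h1
      exact h1.le
    have e4 : q ≤ η * N := by
      rw [div_lt_iff₀ hN'] at h2; exact h2.le
    have e5 : q * ε = 4 * η := by rw [hη]; ring
    have e6 : q * avg P N {x | g * x ∈ A} * N ≤ q * (avg P N A + ε) * N := by
      rw [e1]
      have := mul_le_mul_of_nonneg_left hshift hq.le
      nlinarith
    exact le_of_mul_le_mul_right e6 hN'
  exact le_of_mul_le_mul_left hgoal hq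

/-- Asymptotic invariance of the averages. -/
def AInv (P : Measure (ℕ → G)) (g : G) : Prop :=
  ∀ A : Set G, Tendsto (fun N => avg P N {x | g * x ∈ A} - avg P N A) atTop (𝓝 0)

lemma ainv_supp (hP : IsRWMeasure p P) (h0 : ∀ x, 0 ≤ f x) (hg : FinExpGrowth f)
    (hm : FiniteFirstMoment p f) (hh : HasEntropy p 0) {g : G} (hpg : p g ≠ 0) : AInv P g := by
  intro A
  rw [Metric.tendsto_nhds]
  intro ε hε
  filter_upwards [avg_upper hP h0 hg hm hh hpg A (half_pos hε),
    avg_upper hP h0 hg hm hh hpg Aᶜ (half_pos hε), eventually_ge_atTop 1] with N h1 h2 hN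
  have e : {x | g * x ∈ Aᶜ} = {x | g * x ∈ A}ᶜ := rfl
  rw [e, avg_compl hP hN, avg_compl hP hN] at h2
  rw [Real.dist_eq, sub_zero, abs_lt]
  constructor <;> linarith

lemma ainv_closure (hP : IsRWMeasure p P) (h0 : ∀ x, 0 ≤ f x) (hg : FinExpGrowth f)
    (hm : FiniteFirstMoment p f) (hh : HasEntropy p 0) {g : G}
    (hgc : g ∈ Subgroup.closure {x : G | p x ≠ 0}) : AInv P g := by
  induction hgc using Subgroup.closure_induction with
  | mem x hx => exact ainv_supp hP h0 hg hm hh hx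
  | one => intro A; simp
  | mul x y _ _ hx hy =>
    intro A
    have := (hy {z | x * z ∈ A}).add (hx A)
    rw [add_zero] at this
    refine this.congr fun N => ?_
    simp only [mem_ofPred_eq, mul_assoc]
    ring
  | inv x _ hx =>
    intro A
    have := (hx {z | x⁻¹ * z ∈ A}).neg
    rw [neg_zero] at this
    refine this.congr fun N => ?_
    simp

lemma free_coord (φ : FreeGroup (Fin 2) →* G) (hφ : Function.Injective φ) :
    ∃ u : G → FreeGroup (Fin 2), ∀ v x, u (φ v * x) = v * u x := by
  let s : Setoid G :=
    { r := fun x y => ∃ v, y = φ v * x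
      iseqv := ⟨fun x => ⟨1, by simp⟩, fun {x y} ⟨v, h⟩ => ⟨v⁻¹, by simp [h]⟩,
        fun {x y z} ⟨v, h⟩ ⟨w, h'⟩ => ⟨w * v, by simp [h', h, mul_assoc]⟩⟩ }
  have hrep : ∀ x : G, ∃ v, x = φ v * (Quotient.mk s x).out := fun x =>
    Quotient.exact (Quotient.out_eq (Quotient.mk s x))
  choose u hu using hrep
  refine ⟨u, fun v x => hφ ?_⟩
  have e : Quotient.mk s (φ v * x) = Quotient.mk s x := by
    have hr : s.r x (φ v * x) := ⟨v, rfl⟩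
    exact (Quotient.sound (s := s) hr).symm
  have h1 := hu (φ v * x)
  rw [e] at h1
  have h2 := hu x
  have h3 : φ v * x = φ (v * u x) * (Quotient.mk s x).out := by
    rw [map_mul, mul_assoc, ← h2]
  exact mul_right_cancel (h1.symm.trans h3)

lemma head_step (i : Fin 2) (b : Bool) (v : FreeGroup (Fin 2))
    (hv : v.toWord.head? ≠ some (i, b)) :
    (FreeGroup.mk [(i, !b)] * v).toWord.head? = some (i, !b) := by
  have e : FreeGroup.mk [(i, !b)] * v = FreeGroup.mk ((i, !b) :: v.toWord) := by
    conv_lhs => rw [← FreeGroup.mk_toWord (x := v)]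
    rw [FreeGroup.mul_mk]; rfl
  rw [e, FreeGroup.toWord_mk, FreeGroup.reduce.cons, FreeGroup.reduce_toWord]
  rcases hw : v.toWord with _ | ⟨⟨j, c⟩, t⟩
  · simp
  · rw [hw] at hv
    simp only [List.head?_cons, ne_eq, Option.some.injEq, Prod.mk.injEq] at hv
    have : ¬ (i = j ∧ (!b) = !c) := by
      rintro ⟨rfl, h⟩
      exact hv ⟨rfl, by simpa using h.symm⟩
    simp only [this, if_false, List.head?_cons]

lemma entropy_ne_zero (hP : IsRWMeasure p P) (h0 : ∀ x, 0 ≤ f x) (hg : FinExpGrowth f)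
    (hm : FiniteFirstMoment p f) (hne : IsNonElemMeasure p) : ¬ HasEntropy p 0 := by
  intro hh
  obtain ⟨φ, hφ, hr⟩ := hne
  obtain ⟨u, hu⟩ := free_coord φ hφ
  let W : Fin 2 → Bool → Set G := fun i b => {x | (u x).toWord.head? = some (i, b)}
  have hinv : ∀ v, AInv P (φ v) := fun v => ainv_closure hP h0 hg hm hh (hr ⟨v, rfl⟩)
  have hcov : ∀ i : Fin 2, ∀ x : G, x ∈ W i true ∪ {x | φ (FreeGroup.mk [(i, false)]) * x ∈ W i false} := by
    intro i x
    by_cases hx : x ∈ W i true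
    · exact Or.inl hx
    · right
      simp only [W, mem_ofPred_eq] at hx ⊢
      rw [hu]
      exact head_step i true _ hx
  have hk : ∀ i : Fin 2, ∀ᶠ N in atTop, 1 - 1 / 4 ≤ avg P N (W i true ∪ W i false) := by
    intro i
    have := (hinv (FreeGroup.mk [(i, false)]) (W i false)).eventually_lt_const
      (show (0 : ℝ) < 1 / 4 by norm_num)
    filter_upwards [this, eventually_ge_atTop 1] with N h1 hN
    have h2 : avg P N univ ≤ avg P N (W i true) +
        avg P N {x | φ (FreeGroup.mk [(i, false)]) * x ∈ W i false} :=
      (avg_mono hP N fun x _ => hcov i x).trans (avg_union_le hP N _ _)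
    rw [avg_univ hP hN] at h2
    rw [avg_union hP N (Set.disjoint_left.2 fun x a b => by
      simp only [W, mem_ofPred_eq] at a b; rw [a] at b; simp at b)]
    linarith
  obtain ⟨N, h1, h2, hN⟩ := ((hk 0).and ((hk 1).and (eventually_ge_atTop 1))).exists
  have h3 : avg P N ((W 0 true ∪ W 0 false) ∪ (W 1 true ∪ W 1 false)) ≤ 1 := by
    rw [← avg_univ hP hN]; exact avg_mono hP N (subset_univ _)
  rw [avg_union hP N (Set.disjoint_left.2 fun x a b => by
      simp only [W, mem_ofPred_eq, mem_union] at a b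
      rcases a with a | a <;> rw [a] at b <;> simp at b)] at h3
  linarith

lemma drift_pos (hP : IsRWMeasure p P) (hf : IsLen f) (hg : FinExpGrowth f)
    (hm : FiniteFirstMoment p f) (hne : IsNonElemMeasure p) {l : ℝ} (hl : HasDrift p f l) :
    0 < l := by
  have h0 : 0 ≤ l := ge_of_tendsto' hl fun n => by
    refine div_nonneg (tsum_nonneg fun x => mul_nonneg ENNReal.toReal_nonneg (hf.nonneg x))
      (Nat.cast_nonneg _)
  rcases h0.eq_or_lt with h | h
  · exfalso
    subst h
    obtain ⟨e, he⟩ := exists_entropy hP hf.nonneg hg hm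
    have h1 := entropy_zero_of_drift hP hf hg hm he hl
    have h2 : 0 ≤ e := ge_of_tendsto' (ent_tendsto hP hf.nonneg hg hm he) fun n =>
      div_nonneg (integral_nonneg fun ω => ent_nonneg hP _ _) (Nat.cast_nonneg _)
    have h3 : e = 0 := le_antisymm h1 h2
    rw [h3] at he
    exact entropy_ne_zero hP hf.nonneg hg hm hne he
  · exact h

end Drift

/-! ### Part E: geometry -/

section Geom
variable {X : Type*} [MetricSpace X] {o : X} {δ : ℝ}

lemma gp_comm' (x y : X) : gp o x y = gp o y x := by
  simp only [gp]; rw [dist_comm x o, dist_comm o y, dist_comm x y]; ring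

lemma gp_nonneg (x y : X) : 0 ≤ gp o x y := by
  have := dist_triangle x o y
  simp only [gp]; linarith

lemma gp_ge (x y : X) : dist o x - dist x y ≤ gp o x y := by
  have h := dist_triangle o y x
  have h2 := dist_comm x o
  have h3 := dist_comm x y
  simp only [gp]; linarith

lemma dist_eq_gp (x y : X) : dist x y = dist o x + dist o y - 2 * gp o x y := by
  have h2 := dist_comm x o
  simp only [gp]; linarith

lemma gp_along (hδ0 : 0 ≤ δ) (hδ : IsHyperbolicWith X δ) {z : ℕ → X} {l : ℝ} (hl : 0 < l)
    (h1 : ∀ ε > 0, ∀ᶠ n : ℕ in atTop, |dist o (z n) - l * n| ≤ ε * n)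
    (h2 : ∀ ε > 0, ∀ᶠ n : ℕ in atTop, dist (z n) (z (n + 1)) ≤ ε * n) :
    ∀ ε > 0, ∀ᶠ i : ℕ in atTop, ∀ j ≥ i, (l - ε) * i ≤ gp o (z i) (z j) := by
  intro ε hε
  obtain ⟨K, hK⟩ := exists_nat_gt (2 * δ / l)
  have hK0 : (0 : ℝ) < K := lt_of_le_of_lt (by positivity) hK
  have hKl : 2 * δ ≤ K * l := by rw [div_lt_iff₀ hl] at hK; exact hK.le
  obtain ⟨e, he0, he1, he2⟩ : ∃ e : ℝ, 0 < e ∧ e * (1 + K) ≤ l / 2 ∧ e * (1 + K) ≤ ε / 2 := by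
    refine ⟨min l ε / 2 / (1 + K), by positivity, ?_, ?_⟩
    · rw [div_mul_cancel₀ _ (by positivity)]; linarith [min_le_left l ε]
    · rw [div_mul_cancel₀ _ (by positivity)]; linarith [min_le_right l ε]
  obtain ⟨N, hN⟩ := eventually_atTop.1 ((h1 e he0).and (h2 e he0))
  have hd : ∀ i ≥ N, ∀ m : ℕ, m ≤ K → dist (z i) (z (i + m)) ≤ e * m * (i + K) := by
    intro i hi m
    induction m with
    | zero => intro _; simp
    | succ m ih =>
      intro hm
      have t := dist_triangle (z i) (z (i + m)) (z (i + (m + 1)))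
      have h3 := (hN (i + m) (by omega)).2
      have h4 := ih (by omega)
      have h5 : ((i + m : ℕ) : ℝ) ≤ i + K := by exact_mod_cast (by omega : i + m ≤ i + K)
      have h6 : e * ((i + m : ℕ) : ℝ) ≤ e * (i + K) := by gcongr
      have e1 : i + (m + 1) = i + m + 1 := by ring
      rw [e1] at t ⊢
      push_cast
      nlinarith
  let a : ℕ → ℝ := fun i => (l - e) * i - e * K * (i + K)
  have ha : ∀ i ≥ N, ∀ m : ℕ, m ≤ K → a i ≤ gp o (z i) (z (i + m)) := by
    intro i hi m hm
    refine le_trans ?_ (gp_ge _ _)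
    have h3 := hd i hi m hm
    have h4 := (abs_le.1 (hN i hi).1).1
    have h5 : e * m * (i + K : ℝ) ≤ e * K * (i + K) := by
      have : (m : ℝ) ≤ K := by exact_mod_cast hm
      gcongr
    simp only [a]; linarith
  have hstep : ∀ i, a i ≤ a (i + K) - δ := by
    intro i
    simp only [a]; push_cast
    nlinarith
  have key : ∀ n : ℕ, ∀ i ≥ N, a i - δ ≤ gp o (z i) (z (i + n)) := by
    intro n
    induction n using Nat.strong_induction_on with
    | _ n ih =>
      intro i hi
      by_cases hn : n ≤ K
      · have := ha i hi n hn; linarith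
      · push Not at hn
        have hKp : 0 < K := by exact_mod_cast hK0
        have h3 := ih (n - K) (by omega) (i + K) (by omega)
        rw [show i + K + (n - K) = i + n by omega] at h3
        have h4 := ha i hi K le_rfl
        have h5 := hδ (z i) (z (i + n)) (z (i + K)) o
        have h6 := hstep i
        have : a i ≤ min (gp o (z i) (z (i + K))) (gp o (z (i + K)) (z (i + n))) :=
          le_min h4 (by linarith)
        linarith
  obtain ⟨M, hM⟩ := exists_nat_gt ((e * K * K + δ) * 2 / ε)
  rw [div_lt_iff₀ hε] at hM
  filter_upwards [eventually_ge_atTop N, eventually_ge_atTop M] with i hi hiM j hj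
  have h3 := key (j - i) i hi
  rw [show i + (j - i) = j by omega] at h3
  refine le_trans ?_ h3
  have h4 : (M : ℝ) ≤ i := by exact_mod_cast hiM
  simp only [a]
  nlinarith

lemma bndRel_symm {u v : DivSeq X o} (h : bndRel o u v) : bndRel o v u := by
  have : Tendsto (fun p : ℕ × ℕ => p.swap) atTop atTop := by
    rw [← prod_atTop_atTop_eq]; exact Filter.tendsto_prod_swap
  have h2 := Tendsto.comp h this
  refine h2.congr fun p => ?_
  simp only [Function.comp, Prod.fst_swap, Prod.snd_swap]
  exact gp_comm' _ _

lemma ev_prod {p : ℕ × ℕ → Prop} : (∀ᶠ x in atTop, p x) ↔ ∃ N, ∀ i ≥ N, ∀ j ≥ N, p (i, j) := by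
  rw [eventually_atTop]
  constructor
  · rintro ⟨⟨a, b⟩, h⟩
    exact ⟨max a b, fun i hi j hj => h (i, j) ⟨(le_max_left _ _).trans hi, (le_max_right _ _).trans hj⟩⟩
  · rintro ⟨N, h⟩
    exact ⟨(N, N), fun x hx => h x.1 hx.1 x.2 hx.2⟩

lemma tend_prod {F : ℕ × ℕ → ℝ} : Tendsto F atTop atTop ↔ ∀ a, ∃ N, ∀ i ≥ N, ∀ j ≥ N, a ≤ F (i, j) := by
  rw [Filter.tendsto_atTop]
  exact forall_congr' fun a => ev_prod

lemma bndRel_trans (hδ : IsHyperbolicWith X δ) {u v w : DivSeq X o} (h : bndRel o u v)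
    (h' : bndRel o v w) : bndRel o u w := by
  unfold bndRel at *
  rw [tend_prod] at *
  intro a
  obtain ⟨N, hN⟩ := h (a + δ)
  obtain ⟨M, hM⟩ := h' (a + δ)
  refine ⟨max N M, fun i hi j hj => ?_⟩
  have h1 := hN i ((le_max_left _ _).trans hi) (max N M) (le_max_left _ _)
  have h2 := hM (max N M) (le_max_right _ _) j ((le_max_right _ _).trans hj)
  have h3 := hδ (u.1 i) (w.1 j) (v.1 (max N M)) o
  have := le_min h1 h2
  simp only at *
  linarith

lemma mkB_eq (hδ : IsHyperbolicWith X δ) {u v : DivSeq X o} : mkB o u = mkB o v ↔ bndRel o u v := by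
  constructor
  · intro h
    have h2 := Quot.eqvGen_exact h
    have he : Equivalence (bndRel o : DivSeq X o → DivSeq X o → Prop) :=
      ⟨fun u => u.2, bndRel_symm, bndRel_trans hδ⟩
    exact he.eqvGen_iff.1 h2
  · exact fun h => Quot.sound h

lemma mkB_surj (ξ : Boundary X o) : ∃ u, mkB o u = ξ := Quot.exists_rep ξ

lemma liminf_nonneg' (u v : DivSeq X o) :
    0 ≤ Filter.liminf (fun pr : ℕ × ℕ => gp o (u.1 pr.1) (v.1 pr.2)) atTop := by
  rw [liminf_eq]
  by_cases hb : BddAbove {a | ∀ᶠ n : ℕ × ℕ in atTop, a ≤ gp o (u.1 n.1) (v.1 n.2)}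
  · exact le_csSup hb (Eventually.of_forall fun n => gp_nonneg _ _)
  · rw [Real.sSup_of_not_bddAbove hb]

lemma gp_of_qB (hδ : IsHyperbolicWith X δ) {u v : DivSeq X o} {a : ℝ}
    (h : qB o (mkB o u) (mkB o v) < Real.exp (-a)) :
    ∃ N, ∀ i ≥ N, ∀ j ≥ N, a ≤ gp o (u.1 i) (v.1 j) := by
  unfold qB at h
  split_ifs at h with he
  · exact tend_prod.1 ((mkB_eq hδ).1 he) a
  · rw [Real.exp_lt_exp] at h
    have h1 : a < gpB o (mkB o u) (mkB o v) := by linarith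
    have h2 : a < Filter.liminf (fun pr : ℕ × ℕ => gp o (u.1 pr.1) (v.1 pr.2)) atTop := by
      refine h1.trans_le (csInf_le ⟨0, ?_⟩ ⟨u, v, rfl, rfl, rfl⟩)
      rintro t ⟨u', v', -, -, rfl⟩
      exact liminf_nonneg' _ _
    have h3 := eventually_lt_of_lt_liminf h2 ⟨0, by
      rw [eventually_map]; exact Eventually.of_forall fun n => gp_nonneg _ _⟩
    obtain ⟨N, hN⟩ := ev_prod.1 h3
    exact ⟨N, fun i hi j hj => (hN i hi j hj).le⟩

lemma qB_of_gp (hδ : IsHyperbolicWith X δ) {u v : DivSeq X o} {a : ℝ}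
    (h : ∃ N, ∀ i ≥ N, ∀ j ≥ N, a ≤ gp o (u.1 i) (v.1 j)) :
    qB o (mkB o u) (mkB o v) ≤ Real.exp (-(a - 2 * δ)) := by
  unfold qB
  split_ifs with he
  · positivity
  · rw [Real.exp_le_exp, neg_le_neg_iff]
    refine le_csInf ⟨_, u, v, rfl, rfl, rfl⟩ ?_
    rintro t ⟨u', v', hu, hv, rfl⟩
    have hu' := tend_prod.1 ((mkB_eq hδ).1 hu) a
    have hv' := tend_prod.1 ((mkB_eq hδ).1 hv.symm) a
    obtain ⟨N, hN⟩ := h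
    obtain ⟨N1, hN1⟩ := hu'
    obtain ⟨N2, hN2⟩ := hv'
    rw [liminf_eq]
    refine le_csSup ?_ ?_
    · by_contra hb
      apply he
      rw [← hu, ← hv, mkB_eq hδ, bndRel, Filter.tendsto_atTop]
      intro b
      rw [not_bddAbove_iff] at hb
      obtain ⟨c, hc, hbc⟩ := hb b
      exact hc.mono fun n hn => hbc.le.trans hn
    · rw [mem_ofPred_eq, ev_prod]
      let M := max N (max N1 N2)
      refine ⟨M, fun i hi j hj => ?_⟩
      have m1 : N ≤ M := le_max_left _ _
      have m2 : N1 ≤ M := (le_max_left _ _).trans (le_max_right _ _)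
      have m3 : N2 ≤ M := (le_max_right _ _).trans (le_max_right _ _)
      have a1 := hN M m1 M m1
      have a2 := hN1 i (m2.trans hi) M m2
      have a3 := hN2 M m3 j (m3.trans hj)
      have b1 := hδ (u'.1 i) (v.1 M) (u.1 M) o
      have b2 := hδ (u'.1 i) (v'.1 j) (v.1 M) o
      have c1 := le_min a2 a1
      have hδ0 : 0 ≤ δ := by
        have := hδ o o o o
        simp [gp] at this; exact this
      have c2 : a - δ ≤ min (gp o (u'.1 i) (v.1 M)) (gp o (v.1 M) (v'.1 j)) :=
        le_min (by simp only at *; linarith) (by simp only at *; linarith)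
      simp only at *
      linarith

/-- Quasi-ultrametric inequality. -/
lemma qB_tri (hδ : IsHyperbolicWith X δ) {ξ η ζ : Boundary X o} {a : ℝ}
    (h1 : qB o ξ η < Real.exp (-a)) (h2 : qB o η ζ < Real.exp (-a)) :
    qB o ξ ζ ≤ Real.exp (-(a - 3 * δ)) := by
  obtain ⟨u, rfl⟩ := mkB_surj ξ
  obtain ⟨v, rfl⟩ := mkB_surj η
  obtain ⟨w, rfl⟩ := mkB_surj ζ
  obtain ⟨N, hN⟩ := gp_of_qB hδ h1
  obtain ⟨M, hM⟩ := gp_of_qB hδ h2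
  have : qB o (mkB o u) (mkB o w) ≤ Real.exp (-((a - δ) - 2 * δ)) := by
    refine qB_of_gp hδ ⟨max N M, fun i hi j hj => ?_⟩
    have b1 := hN i ((le_max_left _ _).trans hi) (max N M) (le_max_left _ _)
    have b2 := hM (max N M) (le_max_right _ _) j ((le_max_right _ _).trans hj)
    have h3 := hδ (u.1 i) (w.1 j) (v.1 (max N M)) o
    have := le_min b1 b2
    linarith
  refine this.trans_eq ?_
  congr 1; ring

lemma qB_comm (ξ η : Boundary X o) : qB o ξ η = qB o η ξ := by
  unfold qB
  by_cases h : ξ = η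
  · simp [h]
  · rw [if_neg h, if_neg (Ne.symm h)]
    congr 2
    unfold gpB
    congr 1
    have key : ∀ u v : DivSeq X o,
        Filter.liminf (fun pr : ℕ × ℕ => gp o (u.1 pr.1) (v.1 pr.2)) atTop =
        Filter.liminf (fun pr : ℕ × ℕ => gp o (v.1 pr.1) (u.1 pr.2)) atTop := by
      intro u v
      rw [liminf_eq, liminf_eq]
      congr 1
      ext a
      simp only [mem_ofPred_eq, ev_prod]
      constructor <;>
      · rintro ⟨N, hN⟩
        refine ⟨N, fun i hi j hj => ?_⟩
        rw [gp_comm']; exact hN j hj i hi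
    ext t
    constructor
    · rintro ⟨u, v, a, b, rfl⟩; exact ⟨v, u, b, a, key u v⟩
    · rintro ⟨u, v, a, b, rfl⟩; exact ⟨v, u, b, a, key u v⟩

lemma qB_self (ξ : Boundary X o) : qB o ξ ξ = 0 := by simp [qB]

lemma measurableSet_qball (ξ : Boundary X o) (r : ℝ) : MeasurableSet (qball (qB o) ξ r) :=
  MeasurableSpace.measurableSet_generateFrom ⟨ξ, r, rfl⟩

/-- Good sequences at time `i`. -/
def GoodX (o : X) (l ε : ℝ) (z : ℕ → X) (i : ℕ) : Prop :=
  dist o (z i) ≤ (l + ε) * i ∧ ∀ j ≥ i, (l - ε) * i ≤ gp o (z i) (z j)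

lemma tracking (hδ : IsHyperbolicWith X δ) {l ε κ a : ℝ} {u v : DivSeq X o} {i : ℕ}
    (hu : GoodX o l ε u.1 i) (hv : GoodX o l ε v.1 i) (hε : 0 ≤ ε) (hκ : 0 ≤ κ)
    (hi : l * i - κ ≤ a)
    (h : qB o (mkB o u) (mkB o v) < Real.exp (-a)) :
    dist (u.1 i) (v.1 i) ≤ 4 * ε * i + (2 * κ + 4 * δ) := by
  obtain ⟨N, hN⟩ := gp_of_qB hδ h
  let M := max N i
  have a1 := hN M (le_max_left _ _) M (le_max_left _ _)
  have a2 := hu.2 M (le_max_right _ _)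
  have a3 := hv.2 M (le_max_right _ _)
  rw [gp_comm'] at a3
  have hi0 : (0 : ℝ) ≤ i := Nat.cast_nonneg i
  have hεi : 0 ≤ ε * i := by positivity
  have b1 := hδ (u.1 i) (v.1 M) (u.1 M) o
  have b2 := hδ (u.1 i) (v.1 i) (v.1 M) o
  have c1 : (l - ε) * i - κ ≤ min (gp o (u.1 i) (u.1 M)) (gp o (u.1 M) (v.1 M)) :=
    le_min (by linarith) (by linarith)
  have hδ0 : 0 ≤ δ := by
    have := hδ o o o o
    simp [gp] at this; exact this
  have c2 : (l - ε) * i - κ - δ ≤ min (gp o (u.1 i) (v.1 M)) (gp o (v.1 M) (v.1 i)) :=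
    le_min (by linarith) (by linarith)
  rw [dist_eq_gp (o := o)]
  have := hu.1
  have := hv.1
  linarith

lemma qB_of_same (hδ : IsHyperbolicWith X δ) {l ε : ℝ} {u v : DivSeq X o} {i : ℕ}
    (hu : GoodX o l ε u.1 i) (hv : GoodX o l ε v.1 i) (huv : u.1 i = v.1 i) :
    qB o (mkB o u) (mkB o v) ≤ Real.exp (-((l - ε) * i - 3 * δ)) := by
  have : qB o (mkB o u) (mkB o v) ≤ Real.exp (-(((l - ε) * i - δ) - 2 * δ)) := by
    refine qB_of_gp hδ ⟨i, fun j hj k hk => ?_⟩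
    have a1 := hu.2 j hj
    have a2 := hv.2 k hk
    rw [gp_comm'] at a1
    rw [← huv] at a2
    have b1 := hδ (u.1 j) (v.1 k) (u.1 i) o
    have := le_min a1 a2
    linarith
  refine this.trans_eq ?_
  congr 1; ring

lemma isLen_dist (o : X) (Γ : Subgroup (X ≃ᵢ X)) :
    IsLen fun x : Γ => dist o ((x : X ≃ᵢ X) o) := by
  refine ⟨fun x => dist_nonneg, by simp, fun x y => ?_, fun x => ?_⟩
  · have := dist_triangle o ((x : X ≃ᵢ X) o) ((x : X ≃ᵢ X) ((y : X ≃ᵢ X) o))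
    rw [(x : X ≃ᵢ X).dist_eq] at this
    simpa using this
  · have := (x : X ≃ᵢ X).dist_eq o ((x : X ≃ᵢ X).symm o)
    simp only [IsometryEquiv.apply_symm_apply] at this
    rw [dist_comm o ((x : X ≃ᵢ X) o), this]; rfl

lemma dist_orbit (o : X) {Γ : Subgroup (X ≃ᵢ X)} (x y : Γ) :
    dist ((x : X ≃ᵢ X) o) ((y : X ≃ᵢ X) o) = dist o ((((x⁻¹ * y : Γ)) : X ≃ᵢ X) o) := by
  have := (x : X ≃ᵢ X).dist_eq o ((((x⁻¹ * y : Γ)) : X ≃ᵢ X) o)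
  rw [← this]
  congr 1
  have h : (x : X ≃ᵢ X) * ((x⁻¹ * y : Γ) : X ≃ᵢ X) = y := by simp
  calc (y : X ≃ᵢ X) o = ((x : X ≃ᵢ X) * ((x⁻¹ * y : Γ) : X ≃ᵢ X)) o := by rw [h]
    _ = _ := rfl

/-- Counting the positions at time `i`. -/
lemma count_pos (hδ : IsHyperbolicWith X δ) {Γ : Subgroup (X ≃ᵢ X)}
    (hg : FinExpGrowth fun x : Γ => dist o ((x : X ≃ᵢ X) o)) (l : ℝ) {κ : ℝ} (hκ : 0 ≤ κ) :
    ∃ c : ℝ, 0 < c ∧ ∀ (ξ : Boundary X o) (a ε : ℝ) (i : ℕ), 0 ≤ ε → l * i - κ ≤ a →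
      ∃ S : Finset Γ, (S.card : ℝ) ≤ Real.exp (c * (ε * i + 1)) ∧
        ∀ (w : ℕ → Γ) (h : IsDivergent o fun n => (w n : X ≃ᵢ X) o),
          GoodX o l ε (fun n => (w n : X ≃ᵢ X) o) i →
          qB o ξ (mkB o ⟨_, h⟩) < Real.exp (-a) → w i ∈ S := by
  obtain ⟨c, hc, hgr⟩ := growth_bound hg
  have hδ0 : 0 ≤ δ := by
    have := hδ o o o o
    simp [gp] at this; exact this
  let κ' := κ + 3 * δ + 1
  have hκ' : 0 ≤ κ' := by positivity
  refine ⟨c * (2 * κ' + 4 * δ + 4) + c, by positivity, fun ξ a ε i hε hi => ?_⟩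
  let T : Set Γ := {g | ∃ (w : ℕ → Γ) (h : IsDivergent o fun n => (w n : X ≃ᵢ X) o),
          GoodX o l ε (fun n => (w n : X ≃ᵢ X) o) i ∧
          qB o ξ (mkB o ⟨_, h⟩) < Real.exp (-a) ∧ w i = g}
  have hT : T.Finite ∧ (T.ncard : ℝ) ≤ Real.exp ((c * (2 * κ' + 4 * δ + 4) + c) * (ε * i + 1)) := by
    rcases T.eq_empty_or_nonempty with h | ⟨g0, w0, h0, hg0, hq0, rfl⟩
    · rw [h]; simp; positivity
    have hR : 0 ≤ 4 * ε * i + (2 * κ' + 4 * δ) := by positivity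
    obtain ⟨f1, f2⟩ := hgr _ hR
    have hsub : (fun g => (w0 i)⁻¹ * g) '' T ⊆
        {x : Γ | dist o ((x : X ≃ᵢ X) o) ≤ 4 * ε * i + (2 * κ' + 4 * δ)} := by
      rintro _ ⟨_, ⟨w, h, hg, hq, rfl⟩, rfl⟩
      simp only [mem_ofPred_eq]
      rw [← dist_orbit]
      refine tracking hδ (u := ⟨_, h0⟩) (v := ⟨_, h⟩) (a := a - 3 * δ - 1) hg0 hg hε hκ' ?_ ?_
      · simp only [κ']; linarith
      · rw [qB_comm] at hq0
        refine (qB_tri hδ hq0 hq).trans_lt ?_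
        rw [Real.exp_lt_exp]; linarith
    have hinj : Function.Injective (fun g => (w0 i)⁻¹ * g) := mul_right_injective _
    have hfin := (f1.subset hsub)
    refine ⟨Set.Finite.of_finite_image hfin hinj.injOn, ?_⟩
    have h3 : (T.ncard : ℝ) ≤
        ({x : Γ | dist o ((x : X ≃ᵢ X) o) ≤ 4 * ε * i + (2 * κ' + 4 * δ)}.ncard : ℝ) := by
      rw [← Set.ncard_image_of_injective T hinj]
      exact_mod_cast Set.ncard_le_ncard hsub f1
    refine (h3.trans f2).trans ?_
    have h4 : c ≤ Real.exp c := by have := Real.add_one_le_exp c; linarith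
    refine (mul_le_mul_of_nonneg_right h4 (Real.exp_nonneg _)).trans ?_
    rw [← Real.exp_add, Real.exp_le_exp]
    have h5 : 0 ≤ ε * i := by positivity
    have h6 : 0 ≤ c * (2 * κ' + 4 * δ) * (ε * i) := by positivity
    have h7 : 0 ≤ c * (ε * i) := by positivity
    nlinarith
  refine ⟨hT.1.toFinset, ?_, ?_⟩
  · rw [← Set.ncard_eq_toFinset_card _ hT.1]; exact hT.2
  · intro w h hgd hq
    rw [Set.Finite.mem_toFinset]
    exact ⟨w, h, hgd, hq, rfl⟩

end Geom

/-! ### Part F: the main estimate -/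

section Joint
variable {G C : Type*} [Group G] [Countable G] [MeasurableSpace G] [DiscreteMeasurableSpace G]
  [Group C] [Countable C] [MeasurableSpace C] [DiscreteMeasurableSpace C]
  {p : G → ℝ≥0∞} {P : Measure (ℕ → G)} {q : C → ℝ≥0∞}

lemma joint_bound (hP : IsRWMeasure p P) (φ : G →* C)
    (hQ : IsRWMeasure q (P.map fun ω i => φ (ω i))) {s t : ℕ} (hst : s ≤ t) (g : G) (h : C) :
    P {ω | walk ω s = g ∧ φ (walk ω t) = h} * piN q s (φ g) ≤ piN p s g * piN q t h := by
  have hB : MeasurableSet {ω : ℕ → G | φ (walk ω (t - s)) = (φ g)⁻¹ * h} := by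
    have := measurable_walk (G := G) (t - s) (MeasurableSet.of_discrete (s := {x | φ x = (φ g)⁻¹ * h}))
    exact this
  have hmφ : Measurable fun (ω : ℕ → G) i => φ (ω i) :=
    measurable_pi_lambda _ fun i => (Measurable.of_discrete).comp (measurable_pi_apply i)
  have e1 : {ω : ℕ → G | walk ω s = g ∧ φ (walk ω t) = h} =
      {ω | walk ω s ∈ ({g} : Set G)} ∩ sh s ⁻¹' {ω | φ (walk ω (t - s)) = (φ g)⁻¹ * h} := by
    ext ω
    simp only [mem_inter_iff, mem_ofPred_eq, mem_singleton_iff, mem_preimage]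
    have hw : walk ω t = walk ω s * walk (sh s ω) (t - s) := by
      rw [← walk_add, show s + (t - s) = t by omega]
    rw [hw, map_mul]
    constructor
    · rintro ⟨a, b⟩; exact ⟨a, by rw [← b, a]; group⟩
    · rintro ⟨a, b⟩; exact ⟨a, by rw [b, a]; group⟩
  have e2 : P {ω : ℕ → G | walk ω s ∈ ({g} : Set G)} = piN p s g := by
    rw [← hP.law]; rfl
  have e3 : P {ω : ℕ → G | φ (walk ω (t - s)) = (φ g)⁻¹ * h} = piN q (t - s) ((φ g)⁻¹ * h) := by
    rw [← hQ.law, Measure.map_apply hmφ]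
    · congr 1; ext ω
      simp only [mem_preimage, mem_ofPred_eq, walk_map]
    · exact measurable_walk (G := C) (t - s) (MeasurableSet.of_discrete (s := {(φ g)⁻¹ * h}))
  rw [e1, hP.indep (detBy_walk s {g}) hB, e2, e3, mul_assoc]
  have := hQ.piN_mul_le s (t - s) (φ g) ((φ g)⁻¹ * h)
  rw [show s + (t - s) = t by omega, mul_inv_cancel_left, mul_comm] at this
  exact mul_le_mul_right this _

lemma set_bound (hP : IsRWMeasure p P) (φ : G →* C)
    (hQ : IsRWMeasure q (P.map fun ω i => φ (ω i))) {s t : ℕ} (hst : s ≤ t) {E : Set (ℕ → G)}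
    (S : Finset G) (T : Finset C) {a b c : ℝ}
    (hE : ∀ ω ∈ E, walk ω s ∈ S ∧ φ (walk ω t) ∈ T ∧
      piN p s (walk ω s) ≤ ENNReal.ofReal (Real.exp (-a)) ∧
      piN q t (φ (walk ω t)) ≤ ENNReal.ofReal (Real.exp (-b)) ∧
      ENNReal.ofReal (Real.exp (-c)) ≤ piN q s (φ (walk ω s))) :
    P E ≤ ENNReal.ofReal (S.card * T.card * Real.exp (-(a + b - c))) := by
  have hsub : E ⊆ ⋃ x ∈ S ×ˢ T, {ω | walk ω s = x.1 ∧ φ (walk ω t) = x.2} ∩ E := by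
    intro ω hω
    obtain ⟨h1, h2, -⟩ := hE ω hω
    simp only [mem_iUnion]
    exact ⟨(walk ω s, φ (walk ω t)), Finset.mem_product.2 ⟨h1, h2⟩, ⟨rfl, rfl⟩, hω⟩
  refine (measure_mono hsub).trans ((measure_biUnion_finset_le _ _).trans ?_)
  have hb : ∀ x ∈ S ×ˢ T, P ({ω | walk ω s = x.1 ∧ φ (walk ω t) = x.2} ∩ E) ≤
      ENNReal.ofReal (Real.exp (-(a + b - c))) := by
    rintro ⟨g, h⟩ _
    rcases Set.eq_empty_or_nonempty ({ω | walk ω s = g ∧ φ (walk ω t) = h} ∩ E) with he | ⟨ω, hω, hωE⟩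
    · simp only [he, measure_empty, zero_le]
    · obtain ⟨-, -, h3, h4, h5⟩ := hE ω hωE
      obtain ⟨rfl, rfl⟩ := hω
      have hj := joint_bound hP φ hQ hst (walk ω s) (φ (walk ω t))
      refine (measure_mono inter_subset_left).trans ?_
      have h6 := (mul_le_mul' le_rfl h5).trans (hj.trans (mul_le_mul' h3 h4))
      rw [← ENNReal.ofReal_mul (Real.exp_nonneg _), ← Real.exp_add] at h6
      have e : Real.exp (-(a + b - c)) = Real.exp (-a + -b) / Real.exp (-c) := by
        rw [← Real.exp_sub]; congr 1; ring
      rw [e, ENNReal.ofReal_div_of_pos (Real.exp_pos _)]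
      refine (ENNReal.le_div_iff_mul_le (Or.inl ?_) (Or.inl ENNReal.ofReal_ne_top)).2 h6
      simp [Real.exp_pos]
  refine (Finset.sum_le_sum hb).trans ?_
  rw [Finset.sum_const, nsmul_eq_mul, Finset.card_product]
  rw [ENNReal.ofReal_mul (by positivity), ← Nat.cast_mul, ENNReal.ofReal_natCast]

/-- Good entropy behaviour at time `i`. -/
def EntG (q : C → ℝ≥0∞) (h ε : ℝ) (i : ℕ) (x : C) : Prop :=
  piN q i x ≠ 0 ∧ |ent q i x - h * i| ≤ ε * i

lemma EntG.le {Q : Measure (ℕ → C)} (hQ : IsRWMeasure q Q) {h ε : ℝ} {i : ℕ} {x : C}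
    (H : EntG q h ε i x) : piN q i x ≤ ENNReal.ofReal (Real.exp (-((h - ε) * i))) := by
  rw [piN_eq_ofReal hQ H.1]
  have := (abs_le.1 H.2).1
  exact ENNReal.ofReal_le_ofReal (Real.exp_le_exp.2 (by linarith))

lemma EntG.ge {Q : Measure (ℕ → C)} (hQ : IsRWMeasure q Q) {h ε : ℝ} {i : ℕ} {x : C}
    (H : EntG q h ε i x) : ENNReal.ofReal (Real.exp (-((h + ε) * i))) ≤ piN q i x := by
  rw [piN_eq_ofReal hQ H.1]
  have := (abs_le.1 H.2).2
  exact ENNReal.ofReal_le_ofReal (Real.exp_le_exp.2 (by linarith))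

lemma entG_ae {f : G → ℝ} (hP : IsRWMeasure p P) (h0 : ∀ x, 0 ≤ f x) (hg : FinExpGrowth f)
    (hm : FiniteFirstMoment p f) {h : ℝ} (hh : HasEntropy p h) :
    ∀ᵐ ω ∂P, ∀ ε > 0, ∀ᶠ i in atTop, EntG p h ε i (walk ω i) := by
  filter_upwards [(ent_proc hP h0 hg hm).kingman hP (ent_tendsto hP h0 hg hm hh), ae_pos_all hP]
    with ω h1 h2 ε hε
  filter_upwards [h1 ε hε] with i hi
  have h3 := h2 0 i
  rw [sh_zero] at h3
  exact ⟨h3, hi⟩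

end Joint

section GoodAE
variable {X : Type*} [MetricSpace X] {o : X} {δ : ℝ}

lemma goodX_ae {Γ : Subgroup (X ≃ᵢ X)} [Countable Γ] [MeasurableSpace Γ] [DiscreteMeasurableSpace Γ]
    {p : Γ → ℝ≥0∞} {P : Measure (ℕ → Γ)} (hP : IsRWMeasure p P)
    (hδ0 : 0 ≤ δ) (hδ : IsHyperbolicWith X δ)
    (hm : FiniteFirstMoment p fun x : Γ => dist o ((x : X ≃ᵢ X) o)) {l : ℝ} (hl0 : 0 < l)
    (hl : HasDrift p (fun x : Γ => dist o ((x : X ≃ᵢ X) o)) l) :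
    ∀ᵐ ω ∂P, ∀ ε > 0, ∀ᶠ i in atTop, GoodX o l ε (fun n => ((walk ω n : Γ) : X ≃ᵢ X) o) i := by
  have hp := drift_proc hP (isLen_dist o Γ) hm
  filter_upwards [hp.kingman hP (drift_tendsto hP (isLen_dist o Γ) hm hl), hp.incr hP] with ω h1 h2 ε hε
  have h3 := gp_along (z := fun n => ((walk ω n : Γ) : X ≃ᵢ X) o) hδ0 hδ hl0 h1 (by
    intro e he
    filter_upwards [h2.eventually_lt_const he, eventually_ge_atTop 1] with n hn hn1
    have hn' : (0 : ℝ) < n := by exact_mod_cast hn1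
    rw [div_lt_iff₀ hn'] at hn
    refine le_trans (le_of_eq ?_) hn.le
    rw [dist_orbit, walk_add, inv_mul_cancel_left]) ε hε
  filter_upwards [h3, h1 ε hε] with i a b
  have := (abs_le.1 b).2
  exact ⟨by linarith, a⟩

end GoodAE

/-! ### Part G: the product setting -/

section Prod
variable {X Xs : Type*} [MetricSpace X] [MetricSpace Xs] {o : X} {os : Xs} {δ δs : ℝ}
  {Γ : Subgroup (X ≃ᵢ X)} {Γs : Subgroup (Xs ≃ᵢ Xs)} [Countable Γ] [Countable Γs]
  [MeasurableSpace Γ] [DiscreteMeasurableSpace Γ]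
  [MeasurableSpace Γs] [DiscreteMeasurableSpace Γs]
  {p : Γ × Γs → ℝ≥0∞} {P : Measure (ℕ → Γ × Γs)}
  {hπ hμ hs l ls : ℝ}

/-- Orbits. -/
def zX (o : X) (ω : ℕ → Γ × Γs) (n : ℕ) : X := ((walk ω n).1 : X ≃ᵢ X) o
/-- Orbits. -/
def zS (os : Xs) (ω : ℕ → Γ × Γs) (n : ℕ) : Xs := ((walk ω n).2 : Xs ≃ᵢ Xs) os

/-- Good trajectories at time `i`. -/
structure Good (o : X) (os : Xs) (p : Γ × Γs → ℝ≥0∞) (hπ hμ hs l ls ε : ℝ) (ω : ℕ → Γ × Γs)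
    (i : ℕ) : Prop where
  gx : GoodX o l ε (zX o ω) i
  gs : GoodX os ls ε (zS os ω) i
  e : EntG p hπ ε i (walk ω i)
  e1 : EntG (mar1 p) hμ ε i (walk ω i).1
  e2 : EntG (mar2 p) hs ε i (walk ω i).2

/-- The boundary map is correct at `ω`. -/
def IsBnd (o : X) (os : Xs) (bnd : (ℕ → Γ × Γs) → Boundary X o × Boundary Xs os)
    (ω : ℕ → Γ × Γs) : Prop :=
  ∃ (h1 : IsDivergent o (zX o ω)) (h2 : IsDivergent os (zS os ω)),
      bnd ω = (mkB o ⟨zX o ω, h1⟩, mkB os ⟨zS os ω, h2⟩)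

lemma good_ae (hP : IsRWMeasure p P) (hδ0 : 0 ≤ δ) (hδ : IsHyperbolicWith X δ)
    (hδs0 : 0 ≤ δs) (hδs : IsHyperbolicWith Xs δs)
    (hg : FinExpGrowth fun x : Γ => dist o ((x : X ≃ᵢ X) o))
    (hgs : FinExpGrowth fun x : Γs => dist os ((x : Xs ≃ᵢ Xs) os))
    (hm : FiniteFirstMoment p fun g : Γ × Γs =>
      max (dist o ((g.1 : X ≃ᵢ X) o)) (dist os ((g.2 : Xs ≃ᵢ Xs) os)))
    (hl0 : 0 < l) (hls0 : 0 < ls)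
    (hl : HasDrift (mar1 p) (fun x : Γ => dist o ((x : X ≃ᵢ X) o)) l)
    (hls : HasDrift (mar2 p) (fun x : Γs => dist os ((x : Xs ≃ᵢ Xs) os)) ls)
    (e0 : HasEntropy p hπ) (e1 : HasEntropy (mar1 p) hμ) (e2 : HasEntropy (mar2 p) hs) :
    ∀ᵐ ω ∂P, ∀ ε > 0, ∀ᶠ i in atTop, Good o os p hπ hμ hs l ls ε ω i := by
  have hP1 := rw1 hP
  have hP2 := rw2 hP
  have hm1 := mom1 (f := fun x : Γ => dist o ((x : X ≃ᵢ X) o))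
    (fs := fun x : Γs => dist os ((x : Xs ≃ᵢ Xs) os)) hm
  have hm2 := mom2 (f := fun x : Γ => dist o ((x : X ≃ᵢ X) o))
    (fs := fun x : Γs => dist os ((x : Xs ≃ᵢ Xs) os)) hm
  have a1 := ae_of_ae_map meas_fst.aemeasurable (goodX_ae hP1 hδ0 hδ hm1 hl0 hl)
  have a2 := ae_of_ae_map meas_snd.aemeasurable (goodX_ae hP2 hδs0 hδs hm2 hls0 hls)
  have a3 := ae_of_ae_map meas_fst.aemeasurable (entG_ae hP1 (fun x => dist_nonneg) hg hm1 e1)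
  have a4 := ae_of_ae_map meas_snd.aemeasurable (entG_ae hP2 (fun x => dist_nonneg) hgs hm2 e2)
  have a5 := entG_ae hP (fun x => le_max_of_le_left dist_nonneg) (growth_prod hg hgs) hm e0
  simp only [walk_fst] at a1 a3
  simp only [walk_snd] at a2 a4
  filter_upwards [a1, a2, a3, a4, a5] with ω b1 b2 b3 b4 b5 ε hε
  filter_upwards [b1 ε hε, b2 ε hε, b3 ε hε, b4 ε hε, b5 ε hε] with i c1 c2 c3 c4 c5
  exact ⟨c1, c2, c5, c3, c4⟩

lemma floor_mul_ge (h x : ℝ) (hx : 0 ≤ x) : h * x - |h| ≤ h * (⌊x⌋₊ : ℝ) := by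
  have h1 := Nat.floor_le hx
  have h2 := (Nat.lt_floor_add_one x).le
  rcases abs_cases h with ⟨e, h0⟩ | ⟨e, h0⟩ <;> rw [e] <;> nlinarith

set_option maxHeartbeats 2000000 in
lemma main_estimate (hP : IsRWMeasure p P) (hδ : IsHyperbolicWith X δ)
    (hδs : IsHyperbolicWith Xs δs)
    (hg : FinExpGrowth fun x : Γ => dist o ((x : X ≃ᵢ X) o))
    (hgs : FinExpGrowth fun x : Γs => dist os ((x : Xs ≃ᵢ Xs) os))
    (hl0 : 0 < l) (hls0 : 0 < ls) (hent : hπ ≤ hμ + hs)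
    (bnd : (ℕ → Γ × Γs) → Boundary X o × Boundary Xs os) {κ : ℝ} (hκ : 0 ≤ κ) :
    ∃ C : ℝ, 0 < C ∧ ∀ (ε : ℝ) (k : ℕ) (ξ : Boundary X o × Boundary Xs os), 0 < ε →
      P {ω | Good o os p hπ hμ hs l ls ε ω ⌊(k : ℝ) / l⌋₊ ∧ Good o os p hπ hμ hs l ls ε ω ⌊(k : ℝ) / ls⌋₊ ∧
        IsBnd o os bnd ω ∧ qbb o os ξ (bnd ω) < Real.exp (-(k - κ))} ≤
      ENNReal.ofReal (Real.exp (-(((hπ - hs) / l + hs / ls) * k) + C * (ε * k + 1))) := by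
  obtain ⟨c, hc, hcount⟩ := count_pos hδ hg l hκ
  obtain ⟨cs, hcs, hcounts⟩ := count_pos hδs hgs ls hκ
  let L := 1 / l + 1 / ls
  have hL : 0 < L := by positivity
  refine ⟨(|hπ - hs| + |hs|) + 3 * L + (2 * c + 2 * cs) * (L + 1), by positivity,
    fun ε k ξ hε => ?_⟩
  set n := ⌊(k : ℝ) / l⌋₊ with hn
  set m := ⌊(k : ℝ) / ls⌋₊ with hm
  have hk0 : (0 : ℝ) ≤ k := Nat.cast_nonneg k
  have hn1 : (n : ℝ) ≤ k / l := Nat.floor_le (by positivity)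
  have hm1 : (m : ℝ) ≤ k / ls := Nat.floor_le (by positivity)
  have hln : l * n ≤ k := by rw [le_div_iff₀ hl0] at hn1; linarith
  have hlm : ls * m ≤ k := by rw [le_div_iff₀ hls0] at hm1; linarith
  have hLn : (n : ℝ) ≤ L * k := by
    refine hn1.trans ?_
    have : 0 ≤ (k : ℝ) / ls := by positivity
    simp only [L]; rw [add_mul, one_div_mul_eq_div, one_div_mul_eq_div]; linarith
  have hLm : (m : ℝ) ≤ L * k := by
    refine hm1.trans ?_
    have : 0 ≤ (k : ℝ) / l := by positivity
    simp only [L]; rw [add_mul, one_div_mul_eq_div, one_div_mul_eq_div]; linarith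
  have hD : ((hπ - hs) / l + hs / ls) * k - (|hπ - hs| + |hs|) ≤ (hπ - hs) * n + hs * m := by
    have f1 := floor_mul_ge (hπ - hs) ((k : ℝ) / l) (by positivity)
    have f2 := floor_mul_ge hs ((k : ℝ) / ls) (by positivity)
    have e : ((hπ - hs) / l + hs / ls) * k = (hπ - hs) * (k / l) + hs * (k / ls) := by
      field_simp
    rw [e]; linarith
  have hfin : ∀ (s t : ℕ) (hφ : ℝ) (N1 N2 N3 c3 : ℝ), (s : ℝ) ≤ t → (t : ℝ) ≤ L * k →
      0 ≤ N1 → 0 ≤ N2 → 0 ≤ N3 →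
      N1 ≤ Real.exp (c * (ε * s + 1)) → N2 ≤ Real.exp (cs * (ε * s + 1)) →
      N3 ≤ Real.exp (c3 * (ε * t + 1)) → 0 ≤ c3 → c3 ≤ c + cs →
      (hπ - hs) * n + hs * m ≤ hπ * s + hφ * (t - s) →
      (N1 * N2) * N3 * Real.exp (-((hπ - ε) * s + (hφ - ε) * t - (hφ + ε) * s)) ≤
      Real.exp (-(((hπ - hs) / l + hs / ls) * k) +
        ((|hπ - hs| + |hs|) + 3 * L + (2 * c + 2 * cs) * (L + 1)) * (ε * k + 1)) := by
    intro s t hφ N1 N2 N3 c3 hst htL p1 p2 p3 b1 b2 b3 hc3 hc3' hh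
    have : (N1 * N2) * N3 ≤ (Real.exp (c * (ε * s + 1)) * Real.exp (cs * (ε * s + 1))) *
        Real.exp (c3 * (ε * t + 1)) := by gcongr
    refine (mul_le_mul_of_nonneg_right this (Real.exp_nonneg _)).trans ?_
    rw [← Real.exp_add, ← Real.exp_add, ← Real.exp_add, Real.exp_le_exp]
    have ht : ε * t ≤ L * (ε * k) := by nlinarith
    have hs' : ε * s ≤ L * (ε * k) := by nlinarith
    have hεk : 0 ≤ ε * k := by positivity
    have g1 : c * (ε * s + 1) ≤ c * (L * (ε * k) + 1) := by gcongr
    have g2 : cs * (ε * s + 1) ≤ cs * (L * (ε * k) + 1) := by gcongr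
    have g3 : c3 * (ε * t + 1) ≤ (c + cs) * (L * (ε * k) + 1) := by gcongr
    have g4 : 0 ≤ (|hπ - hs| + |hs|) * (ε * k) := by positivity
    have g5 : 0 ≤ (2 * c + 2 * cs) * L := by positivity
    have g6 : 0 ≤ (2 * c + 2 * cs) * (ε * k) := by positivity
    linarith
  rcases le_total n m with hnm | hnm
  · obtain ⟨S1, hS1, hS1'⟩ := hcount ξ.1 (k - κ) ε n hε.le (by linarith)
    obtain ⟨S2, hS2, hS2'⟩ := hcounts ξ.2 (k - κ) ε n hε.le (by
      have : (n : ℝ) ≤ m := by exact_mod_cast hnm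
      nlinarith)
    obtain ⟨T, hT, hT'⟩ := hcounts ξ.2 (k - κ) ε m hε.le (by linarith)
    refine (set_bound hP (MonoidHom.snd Γ Γs) (rw2 hP) hnm (S1 ×ˢ S2) T
      (a := (hπ - ε) * n) (b := (hs - ε) * m) (c := (hs + ε) * n) ?_).trans ?_
    · rintro ω ⟨g1, g2, ⟨d1, d2, hb⟩, hq⟩
      rw [hb, qbb, max_lt_iff] at hq
      refine ⟨Finset.mem_product.2 ⟨hS1' _ d1 g1.gx hq.1, hS2' _ d2 g1.gs hq.2⟩,
        hT' _ d2 g2.gs hq.2, g1.e.le hP, g2.e2.le (rw2 hP), g1.e2.ge (rw2 hP)⟩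
    · rw [Finset.card_product, Nat.cast_mul]
      refine ENNReal.ofReal_le_ofReal (hfin n m hs _ _ _ cs (by exact_mod_cast hnm) hLm
        (by positivity) (by positivity) (by positivity) hS1 hS2 hT hcs.le (by linarith) ?_)
      linarith
  · have hnm' : (m : ℝ) ≤ n := by exact_mod_cast hnm
    obtain ⟨S1, hS1, hS1'⟩ := hcount ξ.1 (k - κ) ε m hε.le (by nlinarith)
    obtain ⟨S2, hS2, hS2'⟩ := hcounts ξ.2 (k - κ) ε m hε.le (by linarith)
    obtain ⟨T, hT, hT'⟩ := hcount ξ.1 (k - κ) ε n hε.le (by linarith)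
    refine (set_bound hP (MonoidHom.fst Γ Γs) (rw1 hP) hnm (S1 ×ˢ S2) T
      (a := (hπ - ε) * m) (b := (hμ - ε) * n) (c := (hμ + ε) * m) ?_).trans ?_
    · rintro ω ⟨g1, g2, ⟨d1, d2, hb⟩, hq⟩
      rw [hb, qbb, max_lt_iff] at hq
      refine ⟨Finset.mem_product.2 ⟨hS1' _ d1 g2.gx hq.1, hS2' _ d2 g2.gs hq.2⟩,
        hT' _ d1 g1.gx hq.1, g2.e.le hP, g1.e1.le (rw1 hP), g2.e1.ge (rw1 hP)⟩
    · rw [Finset.card_product, Nat.cast_mul]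
      refine ENNReal.ofReal_le_ofReal (hfin m n hμ _ _ _ c hnm' hLn
        (by positivity) (by positivity) (by positivity) hS1 hS2 hT hc.le (by linarith) ?_)
      nlinarith

end Prod

/-! ### Part H: local dimension -/

section Det

lemma liminf_det {F : ℝ → ℝ} (hF : Monotone F) {D M : ℝ}
    (hub : ∀ ε > 0, ∀ᶠ k : ℕ in atTop, F (Real.exp (-k)) ≤ Real.exp (-((D - ε) * k)))
    (hlb : ∀ᶠ k : ℕ in atTop, Real.exp (-(M * k)) ≤ F (Real.exp (-k))) :
    D ≤ Filter.liminf (fun r : ℝ => Real.log (F r) / Real.log r) (nhdsWithin 0 (Set.Ioi 0)) := by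
  have hlog : Tendsto (fun r : ℝ => -Real.log r) (𝓝[>] 0) atTop :=
    tendsto_neg_atBot_atTop.comp Real.tendsto_log_nhdsGT_zero
  -- common facts
  have hcom : ∀ᶠ r : ℝ in 𝓝[>] 0, 1 ≤ -Real.log r ∧ 0 < r := by
    filter_upwards [hlog.eventually_ge_atTop 1, self_mem_nhdsWithin] with r h1 h2
    exact ⟨h1, h2⟩
  have hfl : Tendsto (fun r : ℝ => ⌊-Real.log r⌋₊) (𝓝[>] 0) atTop :=
    tendsto_nat_floor_atTop.comp hlog
  have hfl1 : Tendsto (fun r : ℝ => ⌊-Real.log r⌋₊ + 1) (𝓝[>] 0) atTop :=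
    (tendsto_add_atTop_nat 1).comp hfl
  have hlow : ∀ᶠ r : ℝ in 𝓝[>] 0, 0 < F r ∧ -(M * (⌊-Real.log r⌋₊ + 1)) ≤ Real.log (F r) := by
    filter_upwards [hcom, hfl1.eventually hlb] with r ⟨h1, h2⟩ h3
    have h4 : Real.exp (-((⌊-Real.log r⌋₊ + 1 : ℕ) : ℝ)) ≤ r := by
      rw [← Real.le_log_iff_exp_le h2]
      have := (Nat.lt_floor_add_one (-Real.log r)).le
      push_cast; linarith
    have h5 := h3.trans (hF h4)
    have h6 : 0 < F r := (Real.exp_pos _).trans_le h5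
    refine ⟨h6, ?_⟩
    rw [Real.le_log_iff_exp_le h6]
    push_cast at h5
    exact h5
  have hcob : IsCoboundedUnder (· ≥ ·) (𝓝[>] (0 : ℝ)) (fun r : ℝ => Real.log (F r) / Real.log r) := by
    refine IsBoundedUnder.isCoboundedUnder_ge ⟨2 * |M|, ?_⟩
    rw [eventually_map]
    filter_upwards [hcom, hlow] with r ⟨h1, h2⟩ ⟨h3, h4⟩
    have e : Real.log (F r) / Real.log r = (-Real.log (F r)) / (-Real.log r) := by
      rw [neg_div_neg_eq]
    rw [e, div_le_iff₀ (by linarith)]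
    have h5 := Nat.floor_le (show 0 ≤ -Real.log r by linarith)
    have h6 : M * (⌊-Real.log r⌋₊ + 1) ≤ |M| * (⌊-Real.log r⌋₊ + 1) := by
      gcongr; exact le_abs_self M
    have h7 : |M| * (⌊-Real.log r⌋₊ + 1) ≤ |M| * (2 * -Real.log r) := by
      gcongr; linarith
    linarith
  refine le_of_forall_pos_sub_le fun ε hε => ?_
  refine le_liminf_of_le hcob ?_
  filter_upwards [hcom, hlow, hfl.eventually (hub (ε / 2) (half_pos hε)),
    hlog.eventually_ge_atTop (|D - ε / 2| * 2 / ε)] with r ⟨h1, h2⟩ ⟨h3, _⟩ h4 h5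
  have e : Real.log (F r) / Real.log r = (-Real.log (F r)) / (-Real.log r) := by
    rw [neg_div_neg_eq]
  rw [e, le_div_iff₀ (by linarith)]
  have h6 : r ≤ Real.exp (-(⌊-Real.log r⌋₊ : ℝ)) := by
    rw [← Real.log_le_iff_le_exp h2]
    have := Nat.floor_le (show 0 ≤ -Real.log r by linarith)
    linarith
  have h7 := (hF h6).trans h4
  rw [← Real.log_le_iff_le_exp h3] at h7
  have h8 := floor_mul_ge (D - ε / 2) (-Real.log r) (by linarith)
  rw [div_le_iff₀ hε] at h5
  linarith

end Det

section Cover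
variable {A : Type*} [MeasurableSpace A]

lemma cover (ν : Measure A) [IsProbabilityMeasure ν] (q : A → A → ℝ) (hq0 : ∀ x, q x x = 0)
    (hqm : ∀ x r, MeasurableSet (qball q x r)) {r R : ℝ} (hR : 0 < R)
    (htri : ∀ x y z, q x y < r → q z y < r → q x z < R) {a : ℝ} (ha : 0 < a) :
    ∃ F : Finset A, (F.card : ℝ) ≤ a⁻¹ ∧
      ∀ ξ, ENNReal.ofReal a < ν (qball q ξ r) → ∃ η ∈ F, q η ξ < R := by
  let Fam : Set (Finset A) := {F | (∀ ξ ∈ F, ENNReal.ofReal a < ν (qball q ξ r)) ∧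
    ∀ x ∈ F, ∀ y ∈ F, x ≠ y → Disjoint (qball q x r) (qball q y r)}
  have hcard : ∀ F ∈ Fam, (F.card : ℝ) ≤ a⁻¹ := by
    intro F hF
    have h1 : ∑ x ∈ F, ENNReal.ofReal a ≤ ∑ x ∈ F, ν (qball q x r) :=
      Finset.sum_le_sum fun x hx => (hF.1 x hx).le
    have h2 : ∑ x ∈ F, ν (qball q x r) = ν (⋃ x ∈ F, qball q x r) :=
      (measure_biUnion_finset (fun x hx y hy hxy => hF.2 x hx y hy hxy) fun x _ => hqm x r).symm
    have h3 : ∑ x ∈ F, ENNReal.ofReal a ≤ 1 := h1.trans (h2.le.trans prob_le_one)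
    rw [Finset.sum_const, nsmul_eq_mul, ← ENNReal.ofReal_natCast, ← ENNReal.ofReal_mul (by positivity),
      ENNReal.ofReal_le_one] at h3
    rw [← one_div, le_div_iff₀ ha]; exact h3
  have hne : (Finset.card '' Fam).Nonempty := ⟨_, ∅, ⟨by simp, by simp⟩, rfl⟩
  have hbd : BddAbove (Finset.card '' Fam) := by
    refine ⟨⌊a⁻¹⌋₊, ?_⟩
    rintro _ ⟨F, hF, rfl⟩
    exact Nat.le_floor (hcard F hF)
  obtain ⟨F, hF, hmax⟩ := Nat.sSup_mem hne hbd
  refine ⟨F, hcard F hF, fun ξ hξ => ?_⟩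
  by_contra hcon
  push Not at hcon
  have hξF : ξ ∉ F := fun h => by
    have := hcon ξ h
    rw [hq0] at this; linarith
  have hdis : ∀ η ∈ F, Disjoint (qball q η r) (qball q ξ r) := by
    intro η hη
    rw [Set.disjoint_left]
    intro y h1 h2
    exact absurd (htri η y ξ h1 h2) (not_lt.2 (hcon η hη))
  have hins : insert ξ F ∈ Fam := by
    refine ⟨fun x hx => ?_, fun x hx y hy hxy => ?_⟩
    · rcases Finset.mem_insert.1 hx with rfl | hx
      · exact hξ
      · exact hF.1 x hx
    · rcases Finset.mem_insert.1 hx with h1 | h1 <;> rcases Finset.mem_insert.1 hy with h2 | h2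
      · exact absurd (h1.trans h2.symm) hxy
      · rw [h1]; exact (hdis y h2).symm
      · rw [h2]; exact hdis x h1
      · exact hF.2 x h1 y h2 hxy
  have := le_csSup hbd ⟨_, hins, rfl⟩
  rw [← hmax, Finset.card_insert_of_notMem hξF] at this
  omega

lemma ae_map_eventually {Ω : Type*} [MeasurableSpace Ω] {P : Measure Ω} {bnd : Ω → A}
    (hb : Measurable bnd) {U : ℕ → Set A} (hU : ∀ k, MeasurableSet (U k))
    (h : ∀ᵐ ω ∂P, ∀ᶠ k in atTop, bnd ω ∈ U k) : ∀ᵐ ξ ∂(P.map bnd), ∀ᶠ k in atTop, ξ ∈ U k := by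
  have hm : MeasurableSet {ξ | ∀ᶠ k in atTop, ξ ∈ U k} := by
    have e : {ξ | ∀ᶠ k in atTop, ξ ∈ U k} = ⋃ N : ℕ, ⋂ k : ℕ, ⋂ (_ : N ≤ k), U k := by
      ext ξ; simp [eventually_atTop]
    rw [e]
    exact MeasurableSet.iUnion fun N => MeasurableSet.iInter fun k => MeasurableSet.iInter fun _ => hU k
  exact (ae_map_iff hb.aemeasurable hm).2 h

end Cover

section QBB
variable {X Xs : Type*} [MetricSpace X] [MetricSpace Xs] {o : X} {os : Xs} {δ δs : ℝ}

lemma qbb_self (ξ : Boundary X o × Boundary Xs os) : qbb o os ξ ξ = 0 := by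
  simp [qbb, qB_self]

lemma qbb_comm (ξ η : Boundary X o × Boundary Xs os) : qbb o os ξ η = qbb o os η ξ := by
  simp only [qbb]; rw [qB_comm ξ.1, qB_comm ξ.2]

lemma qbb_tri (hδ0 : 0 ≤ δ) (hδ : IsHyperbolicWith X δ) (hδs0 : 0 ≤ δs)
    (hδs : IsHyperbolicWith Xs δs) {ξ η ζ : Boundary X o × Boundary Xs os} {a : ℝ}
    (h1 : qbb o os ξ η < Real.exp (-a)) (h2 : qbb o os η ζ < Real.exp (-a)) :
    qbb o os ξ ζ < Real.exp (-(a - (3 * δ + 3 * δs + 1))) := by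
  rw [qbb, max_lt_iff] at h1 h2 ⊢
  constructor
  · refine (qB_tri hδ h1.1 h2.1).trans_lt (Real.exp_lt_exp.2 ?_); linarith
  · refine (qB_tri hδs h1.2 h2.2).trans_lt (Real.exp_lt_exp.2 ?_); linarith

lemma measurableSet_qbb (ξ : Boundary X o × Boundary Xs os) (r : ℝ) :
    MeasurableSet (qball (qbb o os) ξ r) := by
  have e : qball (qbb o os) ξ r = qball (qB o) ξ.1 r ×ˢ qball (qB os) ξ.2 r := by
    ext η
    simp only [qball, qbb, mem_ofPred_eq, max_lt_iff, Set.mem_prod]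
  rw [e]
  exact (measurableSet_qball _ _).prod (measurableSet_qball _ _)

end QBB

section Prod2
variable {X Xs : Type*} [MetricSpace X] [MetricSpace Xs] {o : X} {os : Xs} {δ δs : ℝ}
  {Γ : Subgroup (X ≃ᵢ X)} {Γs : Subgroup (Xs ≃ᵢ Xs)} [Countable Γ] [Countable Γs]
  [MeasurableSpace Γ] [DiscreteMeasurableSpace Γ]
  [MeasurableSpace Γs] [DiscreteMeasurableSpace Γs]
  {p : Γ × Γs → ℝ≥0∞} {P : Measure (ℕ → Γ × Γs)}
  {hπ hμ hs l ls : ℝ}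

set_option maxHeartbeats 1000000 in
lemma upper_ae (hP : IsRWMeasure p P) (hδ0 : 0 ≤ δ) (hδ : IsHyperbolicWith X δ) (hδs0 : 0 ≤ δs)
    (hδs : IsHyperbolicWith Xs δs)
    (hg : FinExpGrowth fun x : Γ => dist o ((x : X ≃ᵢ X) o))
    (hgs : FinExpGrowth fun x : Γs => dist os ((x : Xs ≃ᵢ Xs) os))
    (hl0 : 0 < l) (hls0 : 0 < ls) (hent : hπ ≤ hμ + hs)
    {bnd : (ℕ → Γ × Γs) → Boundary X o × Boundary Xs os} (hbm : Measurable bnd)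
    (hb : ∀ᵐ ω ∂P, IsBnd o os bnd ω)
    (hgood : ∀ᵐ ω ∂P, ∀ ε > 0, ∀ᶠ i in atTop, Good o os p hπ hμ hs l ls ε ω i)
    {τ : ℝ} (hτ : 0 < τ) :
    ∀ᵐ ξ ∂(P.map bnd), ∀ᶠ k : ℕ in atTop, P.map bnd (qball (qbb o os) ξ (Real.exp (-k))) ≤
      ENNReal.ofReal (Real.exp (-(((hπ - hs) / l + hs / ls - τ) * k))) := by
  have := hP.1
  have hν : IsProbabilityMeasure (P.map bnd) := Measure.isProbabilityMeasure_map hbm.aemeasurable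
  obtain ⟨κ, hκd⟩ : ∃ κ, κ = 3 * δ + 3 * δs + 1 := ⟨_, rfl⟩
  have hκ : 0 ≤ κ := by rw [hκd]; positivity
  obtain ⟨C, hC, hmain⟩ := main_estimate (P := P) (l := l) (ls := ls) (hπ := hπ) (hμ := hμ) (hs := hs)
    hP hδ hδs hg hgs hl0 hls0 hent bnd hκ
  obtain ⟨D, hD⟩ : ∃ D, D = (hπ - hs) / l + hs / ls := ⟨_, rfl⟩
  rw [← hD] at hmain ⊢
  obtain ⟨ε, hε⟩ : ∃ ε, ε = τ / (C + 1) := ⟨_, rfl⟩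
  have hε0 : 0 < ε := by rw [hε]; positivity
  have hετ : C * ε + ε = τ := by rw [hε]; field_simp
  have hcov := fun k : ℕ => cover (P.map bnd) (qbb o os) qbb_self measurableSet_qbb
    (r := Real.exp (-k)) (R := Real.exp (-(k - κ))) (Real.exp_pos _)
    (fun x y z h1 h2 => by
      rw [hκd]; exact qbb_tri hδ0 hδ hδs0 hδs h1 (by rw [qbb_comm]; exact h2))
    (a := Real.exp (-((D - τ) * k))) (Real.exp_pos _)
  choose F hF1 hF2 using hcov
  let U : ℕ → Set (Boundary X o × Boundary Xs os) := fun k =>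
    ⋃ η ∈ F k, qball (qbb o os) η (Real.exp (-(k - κ)))
  have hUm : ∀ k, MeasurableSet (U k) := fun k =>
    Finset.measurableSet_biUnion _ fun η _ => measurableSet_qbb _ _
  let E : ℕ → Set (ℕ → Γ × Γs) := fun k =>
    {ω | Good o os p hπ hμ hs l ls ε ω ⌊(k : ℝ) / l⌋₊ ∧ Good o os p hπ hμ hs l ls ε ω ⌊(k : ℝ) / ls⌋₊ ∧
        IsBnd o os bnd ω ∧ bnd ω ∈ U k}
  have hE : ∀ k : ℕ, P (E k) ≤ ENNReal.ofReal (Real.exp C * Real.exp (-(ε * k))) := by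
    intro k
    have hsub : E k ⊆ ⋃ η ∈ F k, {ω | Good o os p hπ hμ hs l ls ε ω ⌊(k : ℝ) / l⌋₊ ∧
        Good o os p hπ hμ hs l ls ε ω ⌊(k : ℝ) / ls⌋₊ ∧
        IsBnd o os bnd ω ∧ qbb o os η (bnd ω) < Real.exp (-(k - κ))} := by
      rintro ω ⟨h1, h2, h3, h4⟩
      simp only [U, mem_iUnion] at h4 ⊢
      obtain ⟨η, hη, h5⟩ := h4
      exact ⟨η, hη, h1, h2, h3, h5⟩
    refine (measure_mono hsub).trans ((measure_biUnion_finset_le _ _).trans ?_)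
    refine (Finset.sum_le_sum fun η _ => hmain ε k η hε0).trans ?_
    rw [Finset.sum_const, nsmul_eq_mul, ← ENNReal.ofReal_natCast, ← ENNReal.ofReal_mul (by positivity)]
    refine ENNReal.ofReal_le_ofReal
      ((mul_le_mul_of_nonneg_right (hF1 k) (Real.exp_nonneg _)).trans ?_)
    rw [← Real.exp_neg, ← Real.exp_add, ← Real.exp_add, Real.exp_le_exp]
    rw [← hετ]
    apply le_of_eq
    ring
  have hae : ∀ᵐ ω ∂P, ∀ᶠ k in atTop, bnd ω ∈ (U k)ᶜ := by
    have ht1 : Tendsto (fun k : ℕ => ⌊(k : ℝ) / l⌋₊) atTop atTop :=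
      tendsto_nat_floor_atTop.comp (tendsto_natCast_atTop_atTop.atTop_div_const hl0)
    have ht2 : Tendsto (fun k : ℕ => ⌊(k : ℝ) / ls⌋₊) atTop atTop :=
      tendsto_nat_floor_atTop.comp (tendsto_natCast_atTop_atTop.atTop_div_const hls0)
    filter_upwards [ae_eventually_of_le_geom hε0 (Eventually.of_forall hE), hb, hgood] with ω h1 h2 h3
    filter_upwards [h1, ht1.eventually (h3 ε hε0), ht2.eventually (h3 ε hε0)] with k a1 a2 a3
    intro hU
    exact a1 ⟨a2, a3, h2, hU⟩
  filter_upwards [ae_map_eventually hbm (fun k => (hUm k).compl) hae] with ξ hξ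
  filter_upwards [hξ] with k hk
  by_contra hcon
  push Not at hcon
  apply hk
  obtain ⟨η, h1, h2⟩ := hF2 k ξ hcon
  exact mem_biUnion h1 h2

set_option maxHeartbeats 1000000 in
lemma lower_ae (hP : IsRWMeasure p P) (hδ0 : 0 ≤ δ) (hδ : IsHyperbolicWith X δ) (hδs0 : 0 ≤ δs)
    (hδs : IsHyperbolicWith Xs δs)
    (hg : FinExpGrowth fun x : Γ => dist o ((x : X ≃ᵢ X) o))
    (hgs : FinExpGrowth fun x : Γs => dist os ((x : Xs ≃ᵢ Xs) os))
    (hl0 : 0 < l) (hls0 : 0 < ls)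
    {bnd : (ℕ → Γ × Γs) → Boundary X o × Boundary Xs os} (hbm : Measurable bnd)
    (hb : ∀ᵐ ω ∂P, IsBnd o os bnd ω)
    (hgood : ∀ᵐ ω ∂P, ∀ ε > 0, ∀ᶠ i in atTop, Good o os p hπ hμ hs l ls ε ω i) :
    ∃ M : ℝ, ∀ᵐ ξ ∂(P.map bnd), ∀ᶠ k : ℕ in atTop, ENNReal.ofReal (Real.exp (-(M * k))) ≤
      P.map bnd (qball (qbb o os) ξ (Real.exp (-k))) := by
  have := hP.1
  obtain ⟨κ, hκd⟩ : ∃ κ, κ = 3 * δ + 3 * δs + 1 := ⟨_, rfl⟩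
  have hκ : 0 ≤ κ := by rw [hκd]; positivity
  obtain ⟨c, hc, hgr⟩ := growth_bound (growth_prod hg hgs)
  obtain ⟨ε, hε0, hεl, hεls⟩ : ∃ ε : ℝ, 0 < ε ∧ ε ≤ l - ε ∧ ε ≤ ls - ε :=
    ⟨min l ls / 2, by positivity, by linarith [min_le_left l ls], by linarith [min_le_right l ls]⟩
  obtain ⟨R, hR⟩ := exists_nat_gt (2 / ε)
  rw [div_lt_iff₀ hε0] at hR
  have hR0 : 0 < R := by
    rcases Nat.eq_zero_or_pos R with h | h
    · rw [h] at hR; norm_num at hR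
    · exact h
  obtain ⟨Λ, hΛ⟩ : ∃ Λ, Λ = l + ls + ε := ⟨_, rfl⟩
  have hΛ0 : 0 < Λ := by rw [hΛ]; positivity
  obtain ⟨M, hM⟩ : ∃ M, M = c * Λ * R + 1 := ⟨_, rfl⟩
  refine ⟨M, ?_⟩
  let Gk : ℕ → Set (ℕ → Γ × Γs) := fun k =>
    {ω | Good o os p hπ hμ hs l ls ε ω (R * k) ∧ IsBnd o os bnd ω}
  let Gg : ℕ → Γ × Γs → Set (ℕ → Γ × Γs) := fun k g => {ω | ω ∈ Gk k ∧ walk ω (R * k) = g}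
  have hrep : ∀ k g, ∃ ω₀ : ℕ → Γ × Γs, (Gg k g).Nonempty → ω₀ ∈ Gg k g := by
    intro k g
    by_cases h : (Gg k g).Nonempty
    · obtain ⟨ω, hω⟩ := h
      exact ⟨ω, fun _ => hω⟩
    · exact ⟨fun _ => 1, fun h' => absurd h' h⟩
  choose ω₀ hω₀ using hrep
  let V : ℕ → Set (Boundary X o × Boundary Xs os) := fun k =>
    ⋃ g : Γ × Γs, ⋃ (_ : ENNReal.ofReal (Real.exp (-(M * k))) ≤ P (Gg k g)),
      qball (qbb o os) (bnd (ω₀ k g)) (Real.exp (-(k + κ)))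
  have hVm : ∀ k, MeasurableSet (V k) := fun k =>
    MeasurableSet.iUnion fun g => MeasurableSet.iUnion fun _ => measurableSet_qbb _ _
  have hclose : ∀ k : ℕ, 3 * δ + 3 * δs + κ < k → ∀ g, ∀ ω ∈ Gg k g,
      qbb o os (bnd (ω₀ k g)) (bnd ω) < Real.exp (-(k + κ)) := by
    intro k hk g ω hω
    obtain ⟨⟨g1, d1, d2, e1⟩, w1⟩ := hω₀ k g ⟨ω, hω⟩
    obtain ⟨⟨g2, d3, d4, e2⟩, w2⟩ := hω
    have hw : walk (ω₀ k g) (R * k) = walk ω (R * k) := w1.trans w2.symm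
    have hk0 : (0 : ℝ) ≤ k := Nat.cast_nonneg k
    have hRk : 2 * (k : ℝ) ≤ ε * ((R * k : ℕ) : ℝ) := by push_cast; nlinarith
    have hRk0 : (0 : ℝ) ≤ ((R * k : ℕ) : ℝ) := Nat.cast_nonneg _
    rw [e1, e2, qbb, max_lt_iff]
    constructor
    · refine (qB_of_same hδ g1.gx g2.gx (by simp only [zX, hw])).trans_lt (Real.exp_lt_exp.2 ?_)
      have := mul_le_mul_of_nonneg_right hεl hRk0
      linarith
    · refine (qB_of_same hδs g1.gs g2.gs (by simp only [zS, hw])).trans_lt (Real.exp_lt_exp.2 ?_)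
      have := mul_le_mul_of_nonneg_right hεls hRk0
      linarith
  let Lt : ℕ → Set (ℕ → Γ × Γs) := fun k =>
    {ω | ω ∈ Gk k ∧ P (Gg k (walk ω (R * k))) < ENNReal.ofReal (Real.exp (-(M * k)))}
  have hLt : ∀ k : ℕ, P (Lt k) ≤ ENNReal.ofReal (c * Real.exp (-(1 * k))) := by
    intro k
    obtain ⟨f1, f2⟩ := hgr (Λ * ((R * k : ℕ) : ℝ)) (by positivity)
    have hsub : Lt k ⊆ ⋃ g ∈ f1.toFinset,
        {ω | ω ∈ Gg k g ∧ P (Gg k g) < ENNReal.ofReal (Real.exp (-(M * k)))} := by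
      rintro ω ⟨h1, h2⟩
      simp only [mem_iUnion]
      refine ⟨walk ω (R * k), ?_, ⟨h1, rfl⟩, h2⟩
      rw [Set.Finite.mem_toFinset]
      have b1 := h1.1.gx.1
      have b2 := h1.1.gs.1
      have hRk0 : (0 : ℝ) ≤ ((R * k : ℕ) : ℝ) := Nat.cast_nonneg _
      refine max_le (b1.trans ?_) (b2.trans ?_)
      · exact mul_le_mul_of_nonneg_right (by rw [hΛ]; linarith) hRk0
      · exact mul_le_mul_of_nonneg_right (by rw [hΛ]; linarith) hRk0
    refine (measure_mono hsub).trans ((measure_biUnion_finset_le _ _).trans ?_)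
    have hbd : ∀ g ∈ f1.toFinset,
        P {ω | ω ∈ Gg k g ∧ P (Gg k g) < ENNReal.ofReal (Real.exp (-(M * k)))} ≤
        ENNReal.ofReal (Real.exp (-(M * k))) := by
      intro g _
      by_cases h : P (Gg k g) < ENNReal.ofReal (Real.exp (-(M * k)))
      · exact (measure_mono fun ω hω => hω.1).trans h.le
      · simp [h]
    refine (Finset.sum_le_sum hbd).trans ?_
    rw [Finset.sum_const, nsmul_eq_mul, ← Set.ncard_eq_toFinset_card _ f1,
      ← ENNReal.ofReal_natCast, ← ENNReal.ofReal_mul (by positivity)]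
    refine ENNReal.ofReal_le_ofReal ((mul_le_mul_of_nonneg_right f2 (Real.exp_nonneg _)).trans ?_)
    rw [mul_assoc, ← Real.exp_add]
    apply le_of_eq
    congr 2
    rw [hM]; push_cast; ring
  have hae : ∀ᵐ ω ∂P, ∀ᶠ k in atTop, bnd ω ∈ V k := by
    have ht : Tendsto (fun k : ℕ => R * k) atTop atTop :=
      tendsto_id.const_mul_atTop' hR0
    obtain ⟨k0, hk0⟩ := exists_nat_gt (3 * δ + 3 * δs + κ)
    filter_upwards [ae_eventually_of_le_geom one_pos (Eventually.of_forall hLt), hb, hgood]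
      with ω h1 h2 h3
    filter_upwards [h1, ht.eventually (h3 ε hε0), eventually_ge_atTop k0] with k a1 a2 a3
    have hG : ω ∈ Gk k := ⟨a2, h2⟩
    have hheavy : ENNReal.ofReal (Real.exp (-(M * k))) ≤ P (Gg k (walk ω (R * k))) := by
      by_contra h
      exact a1 ⟨hG, not_le.1 h⟩
    have hkk : 3 * δ + 3 * δs + κ < (k : ℝ) := hk0.trans_le (by exact_mod_cast a3)
    exact mem_iUnion.2 ⟨walk ω (R * k), mem_iUnion.2 ⟨hheavy, hclose k hkk _ ω ⟨hG, rfl⟩⟩⟩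
  obtain ⟨k0, hk0⟩ := exists_nat_gt (3 * δ + 3 * δs + κ)
  filter_upwards [ae_map_eventually hbm hVm hae] with ξ hξ
  filter_upwards [hξ, eventually_ge_atTop k0] with k hk hkk0
  have hkk : 3 * δ + 3 * δs + κ < (k : ℝ) := hk0.trans_le (by exact_mod_cast hkk0)
  obtain ⟨g, hk'⟩ := mem_iUnion.1 hk
  obtain ⟨hheavy, hq⟩ := mem_iUnion.1 hk'
  rw [Measure.map_apply hbm (measurableSet_qbb _ _)]
  refine hheavy.trans (measure_mono fun ω hω => ?_)
  have h1 := hclose k hkk g ω hω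
  have hq' : qbb o os ξ (bnd (ω₀ k g)) < Real.exp (-(k + κ)) := by rw [qbb_comm]; exact hq
  have h2 := qbb_tri hδ0 hδ hδs0 hδs hq' h1
  rw [← hκd, add_sub_cancel_right] at h2
  exact h2

end Prod2

/-- Proposition 4.4: the a.e. lower bound for the harmonic measure
on the product of boundaries, for a product of countable isometry groups of finite
exponential growth. -/
theorem statement15
    (X Xs : Type*) [MetricSpace X] [MetricSpace Xs] [ProperSpace X] [ProperSpace Xs]
    (hX : IsHyperbolic X) (hXs : IsHyperbolic Xs)
    (hXg : IsRoughGeodesicSpace X) (hXsg : IsRoughGeodesicSpace Xs)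
    (hXb : HasBoundedGrowthAtSomeScale X) (hXsb : HasBoundedGrowthAtSomeScale Xs)
    (o : X) (os : Xs)
    (Γ : Subgroup (X ≃ᵢ X)) (Γs : Subgroup (Xs ≃ᵢ Xs)) [Countable Γ] [Countable Γs]
    [MeasurableSpace Γ] [DiscreteMeasurableSpace Γ]
    [MeasurableSpace Γs] [DiscreteMeasurableSpace Γs]
    (hgrow : FinExpGrowth fun x : Γ => dist o ((x : X ≃ᵢ X) o))
    (hgrows : FinExpGrowth fun y : Γs => dist os ((y : Xs ≃ᵢ Xs) os))
    (p : Γ × Γs → ℝ≥0∞) (hp : IsProb p)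
    (hmom : FiniteFirstMoment p fun g : Γ × Γs =>
      dist (o, os) (((g.1 : X ≃ᵢ X) o), ((g.2 : Xs ≃ᵢ Xs) os)))
    (hμne : IsNonElemMeasure fun x : Γ => ∑' y : Γs, p (x, y))
    (hμsne : IsNonElemMeasure fun y : Γs => ∑' x : Γ, p (x, y))
    (hπ hs l ls : ℝ) (hhπ : HasEntropy p hπ)
    (hhs : HasEntropy (fun y : Γs => ∑' x : Γ, p (x, y)) hs)
    (hl : HasDrift (fun x : Γ => ∑' y : Γs, p (x, y))
      (fun x => dist o ((x : X ≃ᵢ X) o)) l)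
    (hls : HasDrift (fun y : Γs => ∑' x : Γ, p (x, y))
      (fun y => dist os ((y : Xs ≃ᵢ Xs) os)) ls)
    (P : Measure (ℕ → Γ × Γs)) (hP : IsRWMeasure p P)
    (ν : Measure (Boundary X o × Boundary Xs os))
    (hν : IsJointHarmonic o os P (fun ω n => ((walk ω n).1 : X ≃ᵢ X) o)
      (fun ω n => ((walk ω n).2 : Xs ≃ᵢ Xs) os) ν)
 :
    ∀ᵐ ξ ∂ν,
      (hπ - hs) / l + hs / ls ≤
        Filter.liminf (fun r : ℝ =>
            Real.log (ν (qball (qbb o os) ξ r)).toReal / Real.log r)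
          (nhdsWithin 0 (Set.Ioi 0)) := by
  obtain ⟨δ, hδ0, hδ⟩ := hX
  obtain ⟨δs, hδs0, hδs⟩ := hXs
  obtain ⟨bnd, hbm, rfl, hb⟩ := hν
  have hm : FiniteFirstMoment p fun g : Γ × Γs =>
      max (dist o ((g.1 : X ≃ᵢ X) o)) (dist os ((g.2 : Xs ≃ᵢ Xs) os)) := hmom
  have hP1 := rw1 hP
  have hP2 := rw2 hP
  have hm1 := mom1 (f := fun x : Γ => dist o ((x : X ≃ᵢ X) o))
    (fs := fun x : Γs => dist os ((x : Xs ≃ᵢ Xs) os)) hm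
  have hm2 := mom2 (f := fun x : Γ => dist o ((x : X ≃ᵢ X) o))
    (fs := fun x : Γs => dist os ((x : Xs ≃ᵢ Xs) os)) hm
  have hl0 : 0 < l := drift_pos hP1 (isLen_dist o Γ) hgrow hm1 hμne hl
  have hls0 : 0 < ls := drift_pos hP2 (isLen_dist os Γs) hgrows hm2 hμsne hls
  obtain ⟨hμ, e1⟩ := exists_entropy hP1 (isLen_dist o Γ).nonneg hgrow hm1
  have hent : hπ ≤ hμ + hs := entropy_le hP (isLen_dist o Γ).nonneg (isLen_dist os Γs).nonneg
    hgrow hgrows hm hhπ e1 hhs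
  have hgood := good_ae hP hδ0 hδ hδs0 hδs hgrow hgrows hm hl0 hls0 hl hls hhπ e1 hhs
  have hb' : ∀ᵐ ω ∂P, IsBnd o os bnd ω := hb
  have hup : ∀ᵐ ξ ∂(P.map bnd), ∀ j : ℕ, ∀ᶠ k : ℕ in atTop,
      P.map bnd (qball (qbb o os) ξ (Real.exp (-k))) ≤
      ENNReal.ofReal (Real.exp (-(((hπ - hs) / l + hs / ls - 1 / ((j : ℝ) + 1)) * k))) :=
    ae_all_iff.2 fun j => upper_ae hP hδ0 hδ hδs0 hδs hgrow hgrows hl0 hls0 hent hbm hb' hgood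
      (by positivity)
  obtain ⟨M, hlow⟩ := lower_ae hP hδ0 hδ hδs0 hδs hgrow hgrows hl0 hls0 hbm hb' hgood
  have := hP.1
  have hpr : IsProbabilityMeasure (P.map bnd) := Measure.isProbabilityMeasure_map hbm.aemeasurable
  filter_upwards [hup, hlow] with ξ h1 h2
  refine liminf_det (F := fun r => (P.map bnd (qball (qbb o os) ξ r)).toReal) (M := M) ?_ ?_ ?_
  · intro r r' hr
    refine ENNReal.toReal_mono (measure_ne_top _ _) (measure_mono fun η hη => ?_)
    exact lt_of_lt_of_le hη hr
  · intro ε hε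
    obtain ⟨j, hj⟩ := exists_nat_one_div_lt hε
    filter_upwards [h1 j] with k hk
    refine (ENNReal.toReal_le_of_le_ofReal (Real.exp_pos _).le hk).trans ?_
    refine Real.exp_le_exp.2 (neg_le_neg (mul_le_mul_of_nonneg_right ?_ (Nat.cast_nonneg _)))
    linarith
  · filter_upwards [h2] with k hk
    exact (ENNReal.ofReal_le_iff_le_toReal (measure_ne_top _ _)).1 hk

end HMDim
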